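/- arXiv:1603.06639 — 2 statements merged into one kernel-verified Lean document; each statement's English description precedes it below -/
import Mathlib

section
/- Let (R, m) be a regular local ring containing a field and let I be an ideal of R. Suppose that inj.dim_R(H_I^i(R)) = dim_R(H_I^i(R)) = c. If μ^c(p, H_I^i(R)) ≠ 0 for a prime ideal p of R, then p = m, i.e., p is the maximal ideal of R. -/
open CategoryTheory Opposite

noncomputable section

/-- Krull dimension of the support of a module. -/
def moduleSuppDim (R : Type) [CommRing R] (M : Type) [AddCommGroup M] [Module R M] :
    WithBot ℕ∞ :=
  Order.krullDim (Module.support R M)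

/-- `M` has injective dimension at most `n` (as `R`-module), characterized by
vanishing of `Ext^i(N, M)` for all `i > n`. -/
def injDimLE (R : Type) [CommRing R] (M : Type) [AddCommGroup M] [Module R M] (n : ℕ) : Prop :=
  ∀ (N : ModuleCat R) (i : ℕ), n < i →
    Subsingleton (((Ext R (ModuleCat R) i).obj (op N)).obj (ModuleCat.of R M))

/-- The injective dimension of `M` as an `R`-module, valued in `ℕ∞`. -/
def injDim (R : Type) [CommRing R] (M : Type) [AddCommGroup M] [Module R M] : ℕ∞ :=
  sInf {n : ℕ∞ | ∃ m : ℕ, (m : ℕ∞) = n ∧ injDimLE R M m}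

/-- The height of an ideal: the infimum of the heights of primes containing it. -/
def idealHeight (R : Type) [CommRing R] (I : Ideal R) : ℕ∞ :=
  sInf {h : ℕ∞ | ∃ p : PrimeSpectrum R, I ≤ p.asIdeal ∧ Order.height p = h}

/-- A regular local ring: a Noetherian local ring whose maximal ideal can be generated
by `dim R` elements. -/
def IsRegularLocal (R : Type) [CommRing R] [IsLocalRing R] : Prop :=
  IsNoetherianRing R ∧
    ∃ s : Finset R, Ideal.span (s : Set R) = IsLocalRing.maximalIdeal R ∧
      (s.card : WithBot ℕ∞) = ringKrullDim R

/-- A ring contains a field if some subring of it is a field. -/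
def ContainsField (R : Type) [CommRing R] : Prop :=
  ∃ k : Subring R, IsField k

/-- The underlying module of the `i`-th local cohomology of `R` with support in `I`. -/
abbrev LocalCohomologyMod (R : Type) [CommRing R] (I : Ideal R) (i : ℕ) : Type :=
  (localCohomology I i).obj (ModuleCat.of R R)

/-- The `j`-th Bass number `μ^j(p, M) = dim_{κ(p)} Ext^j_{R_p}(κ(p), M_p)` is nonzero,
expressed as nontriviality of the `Ext` module. -/
def BassNumberNonzero (R : Type) [CommRing R] (p : Ideal R) [p.IsPrime]
    (M : Type) [AddCommGroup M] [Module R M] (j : ℕ) : Prop :=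
  Nontrivial
    (((Ext (Localization.AtPrime p) (ModuleCat (Localization.AtPrime p)) j).obj
        (op (ModuleCat.of (Localization.AtPrime p)
          (IsLocalRing.ResidueField (Localization.AtPrime p))))).obj
      (ModuleCat.of (Localization.AtPrime p) (LocalizedModule p.primeCompl M)))

end
section HelperSec

section ExtInterface
variable {R : Type} [CommRing R]

/-- new style Ext of modules -/
abbrev EE (R : Type) [CommRing R] (N M : Type) [AddCommGroup N] [Module R N] [AddCommGroup M] [Module R M]
    (j : ℕ) : Type := Abelian.Ext.{0} (ModuleCat.of R N) (ModuleCat.of R M) j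

variable {N N' N'' M M' M'' : Type}
  [AddCommGroup N] [Module R N] [AddCommGroup N'] [Module R N'] [AddCommGroup N''] [Module R N'']
  [AddCommGroup M] [Module R M] [AddCommGroup M'] [Module R M'] [AddCommGroup M''] [Module R M'']

noncomputable def EE.push (N : Type) [AddCommGroup N] [Module R N] (f : M →ₗ[R] M') (j : ℕ) :
    EE R N M j →ₗ[R] EE R N M' j where
  toFun e := e.comp (Abelian.Ext.mk₀ (ModuleCat.ofHom f)) (add_zero _)
  map_add' a b := by simp
  map_smul' r a := by simp

noncomputable def EE.pull (M : Type) [AddCommGroup M] [Module R M] (f : N →ₗ[R] N') (j : ℕ) :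
    EE R N' M j →ₗ[R] EE R N M j where
  toFun e := (Abelian.Ext.mk₀ (ModuleCat.ofHom f)).comp e (zero_add _)
  map_add' a b := by simp
  map_smul' r a := by simp

lemma EE.push_comp (f : M →ₗ[R] M') (g : M' →ₗ[R] M'') (j : ℕ) (e : EE R N M j) :
    EE.push N (g ∘ₗ f) j e = EE.push N g j (EE.push N f j e) := by
  simp [EE.push]

lemma EE.pull_comp (f : N →ₗ[R] N') (g : N' →ₗ[R] N'') (j : ℕ) (e : EE R N'' M j) :
    EE.pull M (g ∘ₗ f) j e = EE.pull M f j (EE.pull M g j e) := by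
  simp [EE.pull]

lemma EE.push_pull (f : N →ₗ[R] N') (g : M →ₗ[R] M') (j : ℕ) (e : EE R N' M j) :
    EE.push N g j (EE.pull M f j e) = EE.pull M' f j (EE.push N' g j e) := by
  simp [EE.pull, EE.push]

lemma EE.push_id (j : ℕ) (e : EE R N M j) : EE.push N (LinearMap.id) j e = e := by
  simp [EE.push]

lemma EE.pull_id (j : ℕ) (e : EE R N M j) : EE.pull M (LinearMap.id) j e = e := by
  simp [EE.pull]

lemma EE.push_smul (x : R) (f : M →ₗ[R] M') (j : ℕ) (e : EE R N M j) :
    EE.push N (x • f) j e = x • EE.push N f j e := by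
  change e.comp (Abelian.Ext.mk₀ (x • (ModuleCat.ofHom f))) (by omega) = _
  rw [Abelian.Ext.mk₀_smul, Abelian.Ext.comp_smul]; rfl

lemma EE.pull_smul (x : R) (f : N →ₗ[R] N') (j : ℕ) (e : EE R N' M j) :
    EE.pull M (x • f) j e = x • EE.pull M f j e := by
  change (Abelian.Ext.mk₀ (x • (ModuleCat.ofHom f))).comp e (by omega) = _
  rw [Abelian.Ext.mk₀_smul, Abelian.Ext.smul_comp]; rfl

lemma sesOf {f : M →ₗ[R] M'} {g : M' →ₗ[R] M''} (hf : Function.Injective f) (hg : Function.Surjective g)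
    (h : Function.Exact f g) :
    (ModuleCat.shortComplexOfCompEqZero f g h.linearMap_comp_eq_zero).ShortExact where
  exact := ModuleCat.shortComplex_exact _ h
  mono_f := (ModuleCat.mono_iff_injective _).2 hf
  epi_g := (ModuleCat.epi_iff_surjective _).2 hg

/-- connecting map, covariant -/
noncomputable def EE.conn (N : Type) [AddCommGroup N] [Module R N] {f : M →ₗ[R] M'} {g : M' →ₗ[R] M''}
    (hf : Function.Injective f) (hg : Function.Surjective g)
    (h : Function.Exact f g) (j : ℕ) : EE R N M'' j →ₗ[R] EE R N M (j+1) where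
  toFun e := e.comp (sesOf hf hg h).extClass rfl
  map_add' a b := by simp
  map_smul' r a := by simp

/-- connecting map, contravariant -/
noncomputable def EE.conn' (N : Type) [AddCommGroup N] [Module R N] {f : M →ₗ[R] M'} {g : M' →ₗ[R] M''}
    (hf : Function.Injective f) (hg : Function.Surjective g)
    (h : Function.Exact f g) (j : ℕ) : EE R M N j →ₗ[R] EE R M'' N (j+1) where
  toFun e := (sesOf hf hg h).extClass.comp e (by omega)
  map_add' a b := by simp
  map_smul' r a := by simp

variable {f : M →ₗ[R] M'} {g : M' →ₗ[R] M''}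
    (hf : Function.Injective f) (hg : Function.Surjective g)
    (h : Function.Exact f g) 

lemma EE.push_eq_zero_mid (hf : Function.Injective f) (hg : Function.Surjective g)
    (h : Function.Exact f g) (j : ℕ) (e : EE R N M' j) (he : EE.push N g j e = 0) :
    ∃ e', EE.push N f j e' = e :=
  Abelian.Ext.covariant_sequence_exact₂ _ (sesOf hf hg h) e he

lemma EE.push_eq_zero_left (j : ℕ) (e : EE R N M (j+1)) (he : EE.push N f (j+1) e = 0) :
    ∃ e', EE.conn N hf hg h j e' = e :=
  Abelian.Ext.covariant_sequence_exact₁ _ (sesOf hf hg h) e he rfl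

lemma EE.conn_eq_zero (j : ℕ) (e : EE R N M'' j) (he : EE.conn N hf hg h j e = 0) :
    ∃ e', EE.push N g j e' = e :=
  Abelian.Ext.covariant_sequence_exact₃ _ (sesOf hf hg h) e rfl he

lemma EE.conn_push (j : ℕ) (e : EE R N M' j) : EE.conn N hf hg h j (EE.push N g j e) = 0 := by
  change (e.comp (Abelian.Ext.mk₀ (ModuleCat.ofHom g)) (by omega)).comp (sesOf hf hg h).extClass (by omega) = 0
  rw [Abelian.Ext.comp_assoc_of_second_deg_zero]
  erw [(sesOf hf hg h).comp_extClass]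
  simp

lemma EE.push_conn (j : ℕ) (e : EE R N M'' j) : EE.push N f (j+1) (EE.conn N hf hg h j e) = 0 := by
  change (e.comp (sesOf hf hg h).extClass (by omega)).comp (Abelian.Ext.mk₀ (ModuleCat.ofHom f)) (by omega) = 0
  rw [Abelian.Ext.comp_assoc_of_third_deg_zero]
  erw [(sesOf hf hg h).extClass_comp]
  simp

lemma EE.pull_conn (F : N →ₗ[R] N') (j : ℕ) (e : EE R N' M'' j) :
    EE.pull M F (j+1) (EE.conn N' hf hg h j e) = EE.conn N hf hg h j (EE.pull M'' F j e) := by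
  change (Abelian.Ext.mk₀ (ModuleCat.ofHom F)).comp (e.comp (sesOf hf hg h).extClass (by omega)) (by omega) =
    ((Abelian.Ext.mk₀ (ModuleCat.ofHom F)).comp e (by omega)).comp (sesOf hf hg h).extClass (by omega)
  rw [Abelian.Ext.comp_assoc]; simp

lemma EE.pull_eq_zero_mid (hf : Function.Injective f) (hg : Function.Surjective g)
    (h : Function.Exact f g) (j : ℕ) (e : EE R M' N j) (he : EE.pull N f j e = 0) :
    ∃ e', EE.pull N g j e' = e :=
  Abelian.Ext.contravariant_sequence_exact₂ (sesOf hf hg h) _ e he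

lemma EE.pull_eq_zero_right (j : ℕ) (e : EE R M'' N (j+1)) (he : EE.pull N g (j+1) e = 0) :
    ∃ e', EE.conn' N hf hg h j e' = e :=
  Abelian.Ext.contravariant_sequence_exact₃ (sesOf hf hg h) _ e he (by omega)

lemma EE.conn'_pull (j : ℕ) (e : EE R M' N j) : EE.conn' N hf hg h j (EE.pull N f j e) = 0 := by
  change (sesOf hf hg h).extClass.comp ((Abelian.Ext.mk₀ (ModuleCat.ofHom f)).comp e (by omega)) (by omega) = 0
  rw [← Abelian.Ext.comp_assoc_of_second_deg_zero]
  erw [(sesOf hf hg h).extClass_comp]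
  simp

lemma EE.subsingleton_of_projective [Module.Projective R N] (j : ℕ) :
    Subsingleton (EE R N M (j+1)) := by
  have : Projective (ModuleCat.of R N) := inferInstance
  exact Abelian.Ext.subsingleton_of_projective _ _ _

lemma EE.subsingleton_of_injective [Module.Injective R M] (j : ℕ) :
    Subsingleton (EE R N M (j+1)) := by
  have : Injective (ModuleCat.of R M) := Module.injective_object_of_injective_module ..
  exact ⟨fun a b => (Abelian.Ext.eq_zero_of_injective a).trans (Abelian.Ext.eq_zero_of_injective b).symm⟩

/-- Ext^0 as Hom -/
noncomputable def EE.zeroEquiv : EE R N M 0 ≃ₗ[R] (N →ₗ[R] M) where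
  toFun e := (Abelian.Ext.linearEquiv₀ (R := R) e).hom
  invFun f := Abelian.Ext.mk₀ (ModuleCat.ofHom f)
  map_add' a b := by simp
  map_smul' a b := by simp
  left_inv a := by simp
  right_inv a := by
    change ((Abelian.Ext.linearEquiv₀ (R := R))
      ((Abelian.Ext.linearEquiv₀ (R := R)).symm (ModuleCat.ofHom a))).hom = a
    rw [LinearEquiv.apply_symm_apply]; rfl

lemma EE.push_zero (f : N →ₗ[R] M) (g : M →ₗ[R] M') :
  EE.push N g 0 (EE.zeroEquiv.symm f) = EE.zeroEquiv.symm (g ∘ₗ f) := by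
  simp [EE.push, EE.zeroEquiv]

lemma EE.pull_zero (f : N' →ₗ[R] M) (g : N →ₗ[R] N') :
  EE.pull M g 0 (EE.zeroEquiv.symm f) = EE.zeroEquiv.symm (f ∘ₗ g) := by
  simp [EE.pull, EE.zeroEquiv]

end ExtInterface


section LyubPart
variable {S : Type} [CommRing S]

/-- the inductive divisibility condition -/
def PPcond (S : Type) [CommRing S] :
    List S → ∀ (M : Type) [AddCommGroup M] [Module S M], Prop
  | [], _, _, _ => True
  | x :: l, M, _, _ => (∀ (y : M) (n : ℕ), x ^ n • y = 0 → ∃ u : M, x • u = y) ∧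
      PPcond S l (LinearMap.ker (LinearMap.lsmul S M x)) ∧
      PPcond S l (M ⧸ LinearMap.range (LinearMap.lsmul S M x))

/-- reversed regular sequences -/
def RegRev (S : Type) [CommRing S] : List S → Prop
  | [] => True
  | x :: l => IsSMulRegular (S ⧸ Ideal.ofList l) x ∧ RegRev S l

lemma ext_step {N' N M : Type} [AddCommGroup N'] [Module S N'] [AddCommGroup N] [Module S N]
    [AddCommGroup M] [Module S M] (x : S) (g : N' →ₗ[S] N) (hg : Function.Surjective g)
    (hx : Function.Injective (LinearMap.lsmul S N' x))
    (h : Function.Exact (LinearMap.lsmul S N' x) g) (j : ℕ)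
    (h1 : Subsingleton (EE S N' (LinearMap.ker (LinearMap.lsmul S M x)) (j+1)))
    (h2 : Subsingleton (EE S N' (M ⧸ LinearMap.range (LinearMap.lsmul S M x)) j)) :
    Subsingleton (EE S N M (j+1)) := by
  set φ := LinearMap.lsmul S M x with hφ
  have fac : (LinearMap.range φ).subtype ∘ₗ φ.rangeRestrict = x • LinearMap.id := by
    ext y; simp [hφ]
  have facN : (LinearMap.lsmul S N' x) = x • LinearMap.id := by ext y; simp
  have ex1 : Function.Exact (LinearMap.ker φ).subtype φ.rangeRestrict := by
    rw [LinearMap.exact_iff]; simp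
  have ex2 : Function.Exact (LinearMap.range φ).subtype (LinearMap.range φ).mkQ := by
    rw [LinearMap.exact_iff]; simp
  have i1 := (LinearMap.ker φ).injective_subtype
  have s1 := φ.surjective_rangeRestrict
  have i2 := (LinearMap.range φ).injective_subtype
  have s2 := (LinearMap.range φ).mkQ_surjective
  have inj : ∀ e : EE S N' M (j+1), x • e = 0 → e = 0 := by
    intro e he
    have : EE.push N' (x • LinearMap.id) (j+1) e = 0 := by
      rw [EE.push_smul, EE.push_id, he]
    rw [← fac, EE.push_comp] at this
    obtain ⟨a, ha⟩ := EE.push_eq_zero_left i2 s2 ex2 j _ this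
    rw [Subsingleton.elim a 0, map_zero] at ha
    obtain ⟨b, hb⟩ := EE.push_eq_zero_mid i1 s1 ex1 (j+1) e ha.symm
    rw [← hb, Subsingleton.elim b 0, map_zero]
  have surj : ∀ e : EE S N' M j, ∃ e', x • e' = e := by
    intro e
    obtain ⟨a, ha⟩ := EE.push_eq_zero_mid i2 s2 ex2 j e (Subsingleton.elim _ _)
    obtain ⟨b, hb⟩ := EE.conn_eq_zero i1 s1 ex1 j a (Subsingleton.elim _ _)
    refine ⟨b, ?_⟩
    have : EE.push N' (x • LinearMap.id) j b = x • b := by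
      rw [EE.push_smul, EE.push_id]
    rw [← this, ← fac, EE.push_comp, hb, ha]
  refine subsingleton_of_forall_eq 0 fun e => ?_
  have h0 : EE.pull M g (j+1) e = 0 := by
    apply inj
    have := EE.pull_comp (M := M) (LinearMap.lsmul S N' x) g (j+1) e
    rw [h.linearMap_comp_eq_zero, facN, EE.pull_smul, EE.pull_id] at this
    rw [← this]
    have h00 : (0 : N' →ₗ[S] N) = (0 : S) • 0 := by simp
    rw [h00, EE.pull_smul, zero_smul]
  obtain ⟨a, ha⟩ := EE.pull_eq_zero_right hx hg h j e h0
  obtain ⟨b, hb⟩ := surj a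
  have hab : a = EE.pull M (LinearMap.lsmul S N' x) j b := by
    rw [facN, EE.pull_smul, EE.pull_id, hb]
  rw [← ha, hab, EE.conn'_pull]

lemma dim_step {M : Type} [AddCommGroup M] [Module S M] (x : S) (j : ℕ)
    (hP : ∀ (y : M) (n : ℕ), x ^ n • y = 0 → ∃ u : M, x • u = y)
    (hd : Order.krullDim (Module.support S M) < ((j + 1 : ℕ) : WithBot ℕ∞)) :
    Order.krullDim (Module.support S (M ⧸ LinearMap.range (LinearMap.lsmul S M x)))
      < ((j : ℕ) : WithBot ℕ∞) := by
  set Q := M ⧸ LinearMap.range (LinearMap.lsmul S M x)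
  have key : ∀ q ∈ Module.support S Q, ∃ q' ∈ Module.support S M, q' < q := by
    intro q hq
    obtain ⟨z, hz⟩ := Module.mem_support_iff_exists_annihilator.1 hq
    obtain ⟨y, rfl⟩ := Submodule.mkQ_surjective _ z
    have hz' : ∀ s : S, (∃ u : M, x • u = s • y) → s ∈ q.asIdeal := by
      rintro s ⟨u, hu⟩
      apply hz
      rw [Submodule.mem_annihilator_span_singleton, ← map_smul, ← hu]
      exact (Submodule.Quotient.mk_eq_zero _).2 ⟨u, rfl⟩
    let J : Ideal S :=
      { carrier := {s | ∃ n : ℕ, x ^ n • s • y = 0}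
        zero_mem' := ⟨0, by simp⟩
        add_mem' := by
          rintro a b ⟨n, hn⟩ ⟨m, hm⟩
          refine ⟨n + m, ?_⟩
          rw [add_smul, smul_add, pow_add, mul_smul, mul_smul, hm, smul_comm, hn]; simp
        smul_mem' := by
          rintro c a ⟨n, hn⟩
          refine ⟨n, ?_⟩
          rw [smul_eq_mul, mul_smul, smul_comm, hn, smul_zero] }
    have hJ : J ≤ q.asIdeal := by
      rintro s ⟨n, hn⟩
      exact hz' s (hP _ n hn)
    obtain ⟨q', hq', hle⟩ := Ideal.exists_minimalPrimes_le hJ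
    have hp' : q'.IsPrime := hq'.1.1
    refine ⟨⟨q', hp'⟩, ?_, ?_⟩
    · rw [Module.mem_support_iff_exists_annihilator]
      refine ⟨y, fun s hs => hq'.1.2 ⟨0, ?_⟩⟩
      rw [Submodule.mem_annihilator_span_singleton] at hs
      simp [hs]
    · refine lt_of_le_of_ne hle ?_
      rintro rfl
      have hxq : x ∈ q' := hz' x ⟨y, rfl⟩
      obtain ⟨s, hs, n, hn⟩ := Ideal.exists_mul_mem_of_mem_minimalPrimes hq' hxq
      exact hs ⟨n + 1, by rw [pow_succ, mul_smul, ← mul_smul x, hn]⟩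
  by_contra hcon
  rw [not_lt, Order.le_krullDim_iff] at hcon
  obtain ⟨L, hL⟩ := hcon
  have hsub := Module.support_subset_of_surjective
    (LinearMap.range (LinearMap.lsmul S M x)).mkQ (Submodule.mkQ_surjective _)
  obtain ⟨q', hq', hlt⟩ := key L.head.1 L.head.2
  let L' : LTSeries (Module.support S M) := L.map (Set.inclusion hsub) (fun a b h => h)
  have : ((j + 1 : ℕ) : WithBot ℕ∞) ≤ Order.krullDim (Module.support S M) := by
    rw [Order.le_krullDim_iff]
    refine ⟨L'.cons ⟨q', hq'⟩ hlt, ?_⟩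
    exact (RelSeries.cons_length _ _ _).trans (congrArg (· + 1) hL)
  exact absurd hd (not_lt.2 this)

lemma ext_vanish (l : List S) : ∀ (_ : RegRev S l) (M : Type) [AddCommGroup M] [Module S M]
    (_ : PPcond S l M) (j : ℕ) (_ : Order.krullDim (Module.support S M) < ((j : ℕ) : WithBot ℕ∞)),
    Subsingleton (EE S (S ⧸ Ideal.ofList l) M j) := by
  induction l with
  | nil =>
    intro _ M _ _ _ j hd
    rcases j with _ | j
    · have : Subsingleton M := by
        by_contra hM
        rw [← Module.support_eq_empty_iff (R := S), ← ne_eq, ← Set.nonempty_iff_ne_empty] at hM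
        have := hM.to_subtype
        have := Order.krullDim_nonneg (α := Module.support S M)
        exact absurd hd (not_lt.2 (by simpa using this))
      exact EE.zeroEquiv.toEquiv.subsingleton
    · have : Module.Projective S (S ⧸ Ideal.ofList ([] : List S)) := by
        refine Module.Projective.of_equiv (Submodule.quotEquivOfEqBot _ ?_).symm
        simp
      exact EE.subsingleton_of_projective j
  | cons x l ih =>
    intro hreg M _ _ hP j hd
    rcases j with _ | j
    · have : Subsingleton M := by
        by_contra hM
        rw [← Module.support_eq_empty_iff (R := S), ← ne_eq, ← Set.nonempty_iff_ne_empty] at hM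
        have := hM.to_subtype
        have := Order.krullDim_nonneg (α := Module.support S M)
        exact absurd hd (not_lt.2 (by simpa using this))
      exact EE.zeroEquiv.toEquiv.subsingleton
    · have hle : Ideal.ofList l ≤ Ideal.ofList (x :: l) := by
        rw [Ideal.ofList_cons]; exact le_sup_right
      refine ext_step x (Submodule.factor hle) (Submodule.factor_surjective hle) hreg.1 ?_ j ?_ ?_
      · intro z
        obtain ⟨s, rfl⟩ := Submodule.mkQ_surjective _ z
        simp only [Submodule.mkQ_apply, Set.mem_range]
        change (Submodule.Quotient.mk s : S ⧸ Ideal.ofList (x :: l)) = 0 ↔ _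
        rw [Submodule.Quotient.mk_eq_zero, Ideal.ofList_cons]
        constructor
        · intro hs
          obtain ⟨a, ha, b, hb, rfl⟩ := Submodule.mem_sup.1 hs
          obtain ⟨c, rfl⟩ := Ideal.mem_span_singleton'.1 ha
          refine ⟨Submodule.Quotient.mk c, ?_⟩
          simp only [LinearMap.lsmul_apply]
          rw [← Submodule.Quotient.mk_smul, Submodule.Quotient.eq]
          convert (Ideal.ofList l).neg_mem hb using 1
          simp [mul_comm]
        · rintro ⟨y, hy⟩
          obtain ⟨c, rfl⟩ := Submodule.mkQ_surjective _ y
          simp only [LinearMap.lsmul_apply, Submodule.mkQ_apply] at hy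
          rw [← Submodule.Quotient.mk_smul, Submodule.Quotient.eq] at hy
          have : s = c * x + (-(x • c - s)) := by simp [mul_comm]
          rw [this]
          exact Submodule.add_mem_sup (Ideal.mem_span_singleton'.2 ⟨c, rfl⟩) (neg_mem hy)
      · refine ih hreg.2 _ hP.2.1 _ (lt_of_le_of_lt ?_ hd)
        have hsub := Module.support_subset_of_injective
          (LinearMap.ker (LinearMap.lsmul S M x)).subtype (Submodule.injective_subtype _)
        exact Order.krullDim_le_of_strictMono (Set.inclusion hsub) (fun a b h => h)
      · exact ih hreg.2 _ hP.2.2 _ (dim_step x j hP.1 hd)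

end LyubPart


section Bridge
variable {R : Type} [CommRing R]

noncomputable abbrev brF (R : Type) [CommRing R] (Y : ModuleCat.{0} R) :
    ModuleCat.{0} R ⥤ (ModuleCat.{0} R)ᵒᵖ :=
  ((linearYoneda R (ModuleCat.{0} R)).obj Y).rightOp

noncomputable abbrev brK {X : ModuleCat.{0} R} (P : ProjectiveResolution X) (Y : ModuleCat.{0} R) :
    HomologicalComplex (ModuleCat.{0} R)ᵒᵖ (ComplexShape.down ℕ) :=
  ((brF R Y).mapHomologicalComplex (ComplexShape.down ℕ)).obj P.complex

noncomputable abbrev brO {X : ModuleCat.{0} R} (P : ProjectiveResolution X) (Y : ModuleCat.{0} R)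
    (n : ℕ) : ModuleCat.{0} R := ((brK P Y).opcycles n).unop

noncomputable def brz {X : ModuleCat.{0} R} (P : ProjectiveResolution X) (Y : ModuleCat.{0} R)
    (n : ℕ) : brO P Y n →ₗ[R] (P.complex.X n ⟶ Y) := ((brK P Y).pOpcycles n).unop.hom

noncomputable abbrev oldExt (X Y : ModuleCat.{0} R) (n : ℕ) : ModuleCat.{0} R :=
  ((Ext R (ModuleCat.{0} R) n).obj (op X)).obj Y

noncomputable def brp {X : ModuleCat.{0} R} (P : ProjectiveResolution X) (Y : ModuleCat.{0} R)
    (n : ℕ) : brO P Y n →ₗ[R] oldExt X Y n :=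
  (((brK P Y).homologyι n).unop ≫ (P.isoLeftDerivedObj (brF R Y) n).hom.unop).hom

variable {X X' : ModuleCat.{0} R} (P : ProjectiveResolution X) (P' : ProjectiveResolution X')
  (Y : ModuleCat.{0} R) (n : ℕ)

lemma brz_inj : Function.Injective (brz P Y n) := by
  have : Mono ((brK P Y).pOpcycles n).unop := inferInstance
  exact (ModuleCat.mono_iff_injective _).1 this

lemma brp_surj : Function.Surjective (brp P Y n) := by
  have h1 : Epi ((brK P Y).homologyι n).unop := inferInstance
  have h2 : Epi (P.isoLeftDerivedObj (brF R Y) n).hom.unop := inferInstance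
  exact ((ModuleCat.epi_iff_surjective _).1 h2).comp ((ModuleCat.epi_iff_surjective _).1 h1)

lemma brz_range (f : P.complex.X n ⟶ Y) :
    (∃ o, brz P Y n o = f) ↔ P.complex.d (n+1) n ≫ f = 0 := by
  have ex := ShortComplex.exact_of_g_is_cokernel
    (ShortComplex.mk ((brK P Y).d (n+1) n) ((brK P Y).pOpcycles n) (HomologicalComplex.d_pOpcycles _ _ _))
    ((brK P Y).opcyclesIsCokernel (n+1) n (by simp))
  have ex2 := (ShortComplex.ShortExact.moduleCat_exact_iff_function_exact _).1 ex.unop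
  exact (ex2 f).symm

lemma brp_ker (o : brO P Y n) :
    brp P Y n o = 0 ↔ ∃ g : P.complex.X ((ComplexShape.down ℕ).next n) ⟶ Y,
      P.complex.d n _ ≫ g = brz P Y n o := by
  have ex := ShortComplex.exact_of_f_is_kernel
    (ShortComplex.mk ((brK P Y).homologyι n)
      ((brK P Y).fromOpcycles n ((ComplexShape.down ℕ).next n)) (by simp))
    ((brK P Y).homologyIsKernel n _ rfl)
  have ex2 := (ShortComplex.ShortExact.moduleCat_exact_iff_function_exact _).1 ex.unop
  have inj : Function.Injective (P.isoLeftDerivedObj (brF R Y) n).hom.unop.hom := by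
    have : Mono (P.isoLeftDerivedObj (brF R Y) n).hom.unop := inferInstance
    exact (ModuleCat.mono_iff_injective _).1 this
  have h1 : brp P Y n o = 0 ↔ ((brK P Y).homologyι n).unop.hom o = 0 := by
    have := map_eq_zero_iff _ inj (x := ((brK P Y).homologyι n).unop.hom o)
    exact this
  rw [h1]
  refine (ex2 o).trans (exists_congr fun g => ?_)
  refine (brz_inj P Y n).eq_iff.symm.trans ?_
  have h2 : ((brK P Y).pOpcycles n ≫ (brK P Y).fromOpcycles n ((ComplexShape.down ℕ).next n)).unop.hom
    = ((brK P Y).d n _).unop.hom := by rw [HomologicalComplex.p_fromOpcycles]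
  have h3 := LinearMap.congr_fun h2 g
  exact Eq.congr h3 rfl

lemma extMk_zero_inj (f : P.complex.X 0 ⟶ Y) (hf : P.complex.d 1 0 ≫ f = 0)
    (h : P.extMk f 1 rfl hf = 0) : f = 0 := by
  rw [← P.extEquivCohomologyClass.apply_eq_iff_eq,
    ProjectiveResolution.extEquivCohomologyClass_extMk,
    ProjectiveResolution.extEquivCohomologyClass_zero,
    CochainComplex.HomComplex.CohomologyClass.mk_eq_zero_iff,
    CochainComplex.HomComplex.Cocycle.toSingleMk_mem_coboundaries_iff _ _ _ _ _ 1 (by simp)] at h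
  obtain ⟨g, hg⟩ := h
  have h0 : P.cochainComplex.d (-((0 : ℕ) : ℤ)) 1 = 0 :=
    (P.cochainComplex.isZero_of_isStrictlyLE 0 1 (by omega)).eq_of_tgt _ _
  rw [h0, Limits.zero_comp] at hg
  rw [← cancel_epi (P.cochainComplexXIso (-((0 : ℕ) : ℤ)) 0 rfl).hom, ← hg]
  simp

lemma extMk_ker (f : P.complex.X n ⟶ Y) (hf : P.complex.d (n+1) n ≫ f = 0) :
    P.extMk f (n+1) rfl hf = 0 ↔ ∃ g : P.complex.X ((ComplexShape.down ℕ).next n) ⟶ Y,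
      P.complex.d n _ ≫ g = f := by
  rcases n with _ | n
  · have h0 : P.complex.d 0 ((ComplexShape.down ℕ).next 0) = 0 := by
      apply P.complex.shape; simp
    constructor
    · intro h
      refine ⟨0, ?_⟩
      rw [extMk_zero_inj P Y f hf h]; simp
    · rintro ⟨g, rfl⟩
      have : P.complex.d 0 ((ComplexShape.down ℕ).next 0) ≫ g = 0 := by rw [h0]; simp
      simp [this]
  · rw [P.extMk_eq_zero_iff f (n+1+1) rfl hf n rfl]
    have : (ComplexShape.down ℕ).next (n+1) = n := by simp
    rw [this]

noncomputable def brθ : brO P Y n →ₗ[R] Abelian.Ext.{0} X Y n where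
  toFun o := P.extMk (brz P Y n o) (n+1) rfl ((brz_range P Y n _).1 ⟨o, rfl⟩)
  map_add' a b := by
    rw [P.add_extMk]; congr 1; simp
  map_smul' r a := by
    rw [RingHom.id_apply, Abelian.Ext.smul_eq_comp_mk₀, P.extMk_comp_mk₀]
    congr 1; simp

lemma brθ_surj : Function.Surjective (brθ P Y n) := by
  intro α
  obtain ⟨f, hf, rfl⟩ := P.extMk_surjective α (n+1) rfl
  obtain ⟨o, rfl⟩ := (brz_range P Y n f).2 hf
  exact ⟨o, rfl⟩

lemma br_ker : LinearMap.ker (brp P Y n) = LinearMap.ker (brθ P Y n) := by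
  ext o
  rw [LinearMap.mem_ker, LinearMap.mem_ker, brp_ker]
  exact (extMk_ker P Y n _ ((brz_range P Y n _).1 ⟨o, rfl⟩)).symm

noncomputable def brEquiv : oldExt X Y n ≃ₗ[R] Abelian.Ext.{0} X Y n :=
  ((brp P Y n).quotKerEquivOfSurjective (brp_surj P Y n)).symm ≪≫ₗ
    (Submodule.quotEquivOfEq _ _ (br_ker P Y n)) ≪≫ₗ
    ((brθ P Y n).quotKerEquivOfSurjective (brθ_surj P Y n))

lemma brEquiv_apply (o : brO P Y n) : brEquiv P Y n (brp P Y n o) = brθ P Y n o := by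
  have : ((brp P Y n).quotKerEquivOfSurjective (brp_surj P Y n)).symm (brp P Y n o) =
      Submodule.Quotient.mk o := by
    rw [LinearEquiv.symm_apply_eq]; rfl
  simp only [brEquiv, LinearEquiv.trans_apply, this]
  rfl

noncomputable def brMap (φ : P'.complex ⟶ P.complex) : brO P Y n →ₗ[R] brO P' Y n :=
  ((HomologicalComplex.opcyclesMap
    (((brF R Y).mapHomologicalComplex (ComplexShape.down ℕ)).map φ) n).unop).hom

lemma brz_map (φ : P'.complex ⟶ P.complex) (o : brO P Y n) :
    brz P' Y n (brMap P P' Y n φ o) = φ.f n ≫ brz P Y n o := by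
  have h := HomologicalComplex.p_opcyclesMap
    (((brF R Y).mapHomologicalComplex (ComplexShape.down ℕ)).map φ) n
  have h2 := congrArg (fun f => f.unop.hom o) h
  exact h2

lemma brp_map (g : X' ⟶ X) (φ : P'.complex ⟶ P.complex)
    (comm : φ.f 0 ≫ P.π.f 0 = P'.π.f 0 ≫ g) (o : brO P Y n) :
    brp P' Y n (brMap P P' Y n φ o) =
      (((Ext R (ModuleCat.{0} R) n).map g.op).app Y).hom (brp P Y n o) := by
  have h := ProjectiveResolution.isoLeftDerivedObj_hom_naturality g P' P φ comm (brF R Y) n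
  have h1 := HomologicalComplex.homologyι_naturality
    (((brF R Y).mapHomologicalComplex (ComplexShape.down ℕ)).map φ) n
  have h3 : ((brF R Y).leftDerived n).map g ≫ (P.isoLeftDerivedObj (brF R Y) n).hom ≫
      (brK P Y).homologyι n = (P'.isoLeftDerivedObj (brF R Y) n).hom ≫
      (brK P' Y).homologyι n ≫ HomologicalComplex.opcyclesMap
    (((brF R Y).mapHomologicalComplex (ComplexShape.down ℕ)).map φ) n := by
    have h5 := congrArg (· ≫ (brK P Y).homologyι n) h
    refine (Category.assoc _ _ _).symm.trans (h5.trans ((Category.assoc _ _ _).trans ?_))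
    exact congrArg (fun t => (P'.isoLeftDerivedObj (brF R Y) n).hom ≫ t) h1
  have h4 := congrArg (fun f => f.unop.hom o) h3
  exact h4.symm

end Bridge


section LCdir
variable {R : Type} [CommRing R]

lemma br_natural {X X' : ModuleCat.{0} R} (P : ProjectiveResolution X) (P' : ProjectiveResolution X')
    (Y : ModuleCat.{0} R) (n : ℕ) (g : X' ⟶ X) (z : oldExt X Y n) :
    brEquiv P' Y n ((((Ext R (ModuleCat.{0} R) n).map g.op).app Y).hom z) =
      (Abelian.Ext.mk₀ g).comp (brEquiv P Y n z) (zero_add _) := by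
  obtain ⟨o, rfl⟩ := brp_surj P Y n z
  have comm : (ProjectiveResolution.lift g P' P).f 0 ≫ P.π.f 0 = P'.π.f 0 ≫ g := by
    exact ProjectiveResolution.lift_commutes_zero g P' P
  let φ : ProjectiveResolution.Hom P' P g := ⟨ProjectiveResolution.lift g P' P, comm⟩
  rw [← brp_map P P' Y n g (ProjectiveResolution.lift g P' P) comm, brEquiv_apply, brEquiv_apply]
  refine Eq.trans ?_ (P.mk₀_comp_extMk (brz P Y n o) (n+1) rfl ((brz_range P Y n _).1 ⟨o, rfl⟩) φ).symm
  have key := brz_map P P' Y n (ProjectiveResolution.lift g P' P) o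
  change P'.extMk (brz P' Y n (brMap P P' Y n (ProjectiveResolution.lift g P' P) o)) (n+1) rfl
    ((brz_range P' Y n _).1 ⟨_, rfl⟩) = _
  congr 1

noncomputable def qmap (I : Ideal R) {n m : ℕ} (h : n ≤ m) : (R ⧸ I ^ m) →ₗ[R] (R ⧸ I ^ n) :=
  Submodule.mapQ _ _ LinearMap.id (Ideal.pow_le_pow_right h)

lemma qmap_comp (I : Ideal R) {n m k : ℕ} (h : n ≤ m) (h' : m ≤ k) :
    qmap I h ∘ₗ qmap I h' = qmap I (h.trans h') := by
  apply LinearMap.ext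
  intro z
  obtain ⟨s, rfl⟩ := Submodule.mkQ_surjective _ z
  rfl

lemma qmap_self (I : Ideal R) (n : ℕ) : qmap I (le_refl n) = LinearMap.id := by
  apply LinearMap.ext
  intro z
  obtain ⟨s, rfl⟩ := Submodule.mkQ_surjective _ z
  rfl

noncomputable abbrev lcSys (I : Ideal R) (M : Type) [AddCommGroup M] [Module R M] (i : ℕ) :
    ∀ n m : ℕ, n ≤ m → EE R (R ⧸ I ^ n) M i →ₗ[R] EE R (R ⧸ I ^ m) M i :=
  fun _ _ h => EE.pull M (qmap I h) i

instance lcSys_dir (I : Ideal R) (M : Type) [AddCommGroup M] [Module R M] (i : ℕ) :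
    DirectedSystem (fun n : ℕ => EE R (R ⧸ I ^ n) M i) fun n m h => (lcSys I M i n m h) where
  map_self n x := by
    change EE.pull M (qmap I (le_refl n)) i x = x
    rw [qmap_self, EE.pull_id]
  map_map n m k h h' x := by
    change EE.pull M (qmap I h') i (EE.pull M (qmap I h) i x) = EE.pull M (qmap I (h.trans h')) i x
    rw [← EE.pull_comp, qmap_comp]

/-- direct limit model of local cohomology -/
noncomputable abbrev LCD (I : Ideal R) (M : Type) [AddCommGroup M] [Module R M] (i : ℕ) : Type :=
  Module.DirectLimit (fun n : ℕ => EE R (R ⧸ I ^ n) M i) (lcSys I M i)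

noncomputable abbrev LCD.of (I : Ideal R) (M : Type) [AddCommGroup M] [Module R M] (i n : ℕ) :
    EE R (R ⧸ I ^ n) M i →ₗ[R] LCD I M i :=
  Module.DirectLimit.of R ℕ (fun n : ℕ => EE R (R ⧸ I ^ n) M i) (lcSys I M i) n

noncomputable abbrev lcDiag (I : Ideal R) (i : ℕ) :=
  localCohomology.diagram.{0,0} (localCohomology.idealPowersDiagram I) i

noncomputable def lcCocone (I : Ideal R) (i : ℕ) (M : ModuleCat.{0} R) :
    Limits.Cocone (lcDiag I i ⋙ (evaluation _ _).obj M) :=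
  ((evaluation _ _).obj M).mapCocone (Limits.colimit.cocone (lcDiag I i))

noncomputable def lcCoconeIsColimit (I : Ideal R) (i : ℕ) (M : ModuleCat.{0} R) :
    Limits.IsColimit (lcCocone I i M) :=
  Limits.isColimitOfPreserves _ (Limits.colimit.isColimit (lcDiag I i))

noncomputable abbrev resN (I : Ideal R) (n : ℕ) :
    ProjectiveResolution (ModuleCat.of R (R ⧸ I ^ n)) := projectiveResolution _

noncomputable def lcι (I : Ideal R) (i : ℕ) (M : Type) [AddCommGroup M] [Module R M] (n : ℕ) :
    EE R (R ⧸ I ^ n) M i →ₗ[R] (localCohomology I i).obj (ModuleCat.of R M) :=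
  ((lcCocone I i (ModuleCat.of R M)).ι.app (op (op n))).hom ∘ₗ
    (brEquiv (resN I n) (ModuleCat.of R M) i).symm.toLinearMap

lemma lc_trans (I : Ideal R) (i : ℕ) (M : Type) [AddCommGroup M] [Module R M] {n m : ℕ}
    (f : (op (op n) : (ℕᵒᵖ)ᵒᵖ) ⟶ op (op m)) (h : n ≤ m) (x : EE R (R ⧸ I ^ n) M i) :
    ((lcDiag I i ⋙ (evaluation _ _).obj (ModuleCat.of R M)).map f).hom
      ((brEquiv (resN I n) (ModuleCat.of R M) i).symm x) =
    (brEquiv (resN I m) (ModuleCat.of R M) i).symm (EE.pull M (qmap I h) i x) := by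
  refine (LinearEquiv.eq_symm_apply _).2 ?_
  have := br_natural (resN I n) (resN I m) (ModuleCat.of R M) i (ModuleCat.ofHom (qmap I h))
    ((brEquiv (resN I n) (ModuleCat.of R M) i).symm x)
  rw [LinearEquiv.apply_symm_apply] at this
  exact this

noncomputable def lcEquiv (I : Ideal R) (i : ℕ) (M : Type) [AddCommGroup M] [Module R M] :
    LCD I M i ≃ₗ[R] (localCohomology I i).obj (ModuleCat.of R M) := by
  refine LinearEquiv.ofBijective (Module.DirectLimit.lift R ℕ _ _ (lcι I i M) ?_) ⟨?_, ?_⟩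
  · intro n m h x
    have h1 := lc_trans I i M (Quiver.Hom.op (Quiver.Hom.op (homOfLE h))) h x
    have h2 := (lcCocone I i (ModuleCat.of R M)).w (Quiver.Hom.op (Quiver.Hom.op (homOfLE h)))
    have h3 := congrArg (fun t => t.hom ((brEquiv (resN I n) (ModuleCat.of R M) i).symm x)) h2
    refine Eq.trans ?_ h3
    exact congrArg ((lcCocone I i (ModuleCat.of R M)).ι.app (op (op m))).hom h1.symm
  · rw [injective_iff_map_eq_zero]
    intro z hz
    obtain ⟨n, x, rfl⟩ := Module.DirectLimit.exists_of z
    rw [Module.DirectLimit.lift_of] at hz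
    have hz' : ((lcCocone I i (ModuleCat.of R M)).ι.app (op (op n))).hom 
      ((brEquiv (resN I n) (ModuleCat.of R M) i).symm x) = 
      ((lcCocone I i (ModuleCat.of R M)).ι.app (op (op n))).hom 0 := by
        rw [map_zero]; exact hz
    obtain ⟨k, f, g, hfg⟩ := Limits.Concrete.isColimit_exists_of_rep_eq _
      (lcCoconeIsColimit I i (ModuleCat.of R M)) _ _ hz'
    induction k with | _ k
    induction k with | _ k
    have hk : n ≤ k := leOfHom f.unop.unop
    have h0 := (lc_trans I i M f hk x).symm.trans (hfg.trans (map_zero _))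
    replace h0 : EE.pull M (qmap I hk) i x = 0 := (LinearEquiv.map_eq_zero_iff _).1 h0
    have h1 : Module.DirectLimit.of R ℕ (fun n : ℕ => EE R (R ⧸ I ^ n) M i) (lcSys I M i) k
      (lcSys I M i n k hk x) = _ := Module.DirectLimit.of_f
    rw [← h1]
    change Module.DirectLimit.of R ℕ (fun n : ℕ => EE R (R ⧸ I ^ n) M i) (lcSys I M i) k
      (EE.pull M (qmap I hk) i x) = 0
    rw [h0, map_zero]
  · intro z
    obtain ⟨k, y, hy⟩ := Limits.Concrete.isColimit_exists_rep _
      (lcCoconeIsColimit I i (ModuleCat.of R M)) z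
    induction k with | _ k
    induction k with | _ k
    refine ⟨LCD.of I M i k ((brEquiv (resN I k) (ModuleCat.of R M) i) y), ?_⟩
    rw [Module.DirectLimit.lift_of]
    refine Eq.trans ?_ hy
    change ((lcCocone I i (ModuleCat.of R M)).ι.app (op (op k))).hom ((brEquiv (resN I k) (ModuleCat.of R M) i).symm ((brEquiv (resN I k) (ModuleCat.of R M) i) y)) = _
    exact congrArg ((lcCocone I i (ModuleCat.of R M)).ι.app (op (op k))).hom
      (LinearEquiv.symm_apply_apply (brEquiv (resN I k) (ModuleCat.of R M) i) y)

end LCdir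


section LCcalc
variable {R : Type} [CommRing R]

/-- `I`-power torsion -/
def IsTors (I : Ideal R) (M : Type) [AddCommGroup M] [Module R M] : Prop :=
  ∀ m : M, ∃ n : ℕ, ∀ a ∈ I ^ n, a • m = 0

def torsI (I : Ideal R) (M : Type) [AddCommGroup M] [Module R M] : Submodule R M where
  carrier := {m | ∃ n : ℕ, ∀ a ∈ I ^ n, a • m = 0}
  zero_mem' := ⟨0, by simp⟩
  add_mem' := by
    rintro x y ⟨n, hn⟩ ⟨m, hm⟩
    refine ⟨max n m, fun a ha => ?_⟩
    rw [smul_add, hn a (Ideal.pow_le_pow_right (le_max_left _ _) ha),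
      hm a (Ideal.pow_le_pow_right (le_max_right _ _) ha), add_zero]
  smul_mem' := by
    rintro r x ⟨n, hn⟩
    refine ⟨n, fun a ha => ?_⟩
    rw [smul_comm, hn a ha, smul_zero]

lemma torsI_isTors (I : Ideal R) (M : Type) [AddCommGroup M] [Module R M] : IsTors I (torsI I M) := by
  rintro ⟨m, n, hn⟩
  exact ⟨n, fun a ha => Subtype.ext (hn a ha)⟩

lemma torsI_injective [IsNoetherianRing R] (I : Ideal R) (E : Type) [AddCommGroup E] [Module R E]
    [Module.Injective R E] : Module.Injective R (torsI I E) := by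
  apply Module.Baer.injective
  intro J g
  -- uniform exponent
  have hu : ∃ n : ℕ, ∀ x : J, ∀ a ∈ I ^ n, a • g x = 0 := by
    have hfg : (⊤ : Submodule R J).FG := Module.Finite.fg_top
    have : ∀ N : Submodule R J, N.FG → ∃ n : ℕ, ∀ x ∈ N, ∀ a ∈ I ^ n, a • g x = 0 := by
      intro N hN
      induction N, hN using Submodule.fg_induction with
      | singleton x =>
        obtain ⟨n, hn⟩ := torsI_isTors I E (g x)
        refine ⟨n, fun y hy a ha => ?_⟩
        obtain ⟨r, rfl⟩ := Submodule.mem_span_singleton.1 hy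
        rw [map_smul, smul_comm, hn a ha, smul_zero]
      | sup N₁ N₂ _ _ h1 h2 =>
        obtain ⟨n, hn⟩ := h1
        obtain ⟨m, hm⟩ := h2
        refine ⟨max n m, fun y hy a ha => ?_⟩
        obtain ⟨u, hu, v, hv, rfl⟩ := Submodule.mem_sup.1 hy
        rw [map_add, smul_add, hn u hu a (Ideal.pow_le_pow_right (le_max_left _ _) ha),
          hm v hv a (Ideal.pow_le_pow_right (le_max_right _ _) ha), add_zero]
    obtain ⟨n, hn⟩ := this ⊤ hfg
    exact ⟨n, fun x => hn x trivial⟩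
  obtain ⟨n, hn⟩ := hu
  obtain ⟨k, hk⟩ := Ideal.exists_pow_inf_eq_pow_smul I (J : Submodule R R)
  have hAR : ∀ x (hx : x ∈ J), x ∈ I ^ (n + k) → g ⟨x, hx⟩ = 0 := by
    intro x hx hx'
    have h1 := hk (n + k) (by omega)
    have h2 : x ∈ I ^ (n + k) • (⊤ : Submodule R R) ⊓ J := ⟨by simpa using hx', hx⟩
    rw [h1, Nat.add_sub_cancel] at h2
    have h3 : x ∈ I ^ n • J := Submodule.smul_mono le_rfl inf_le_right h2
    have key : ∀ z ∈ I ^ n • J, ∃ hz : z ∈ J, g ⟨z, hz⟩ = 0 := by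
      intro z hz
      refine Submodule.smul_induction_on hz ?_ ?_
      · intro a ha b hb
        refine ⟨J.smul_mem a hb, ?_⟩
        have : g (a • ⟨b, hb⟩) = 0 := by rw [map_smul, hn _ a ha]
        exact this
      · rintro a b ⟨ha, ha'⟩ ⟨hb, hb'⟩
        refine ⟨J.add_mem ha hb, ?_⟩
        have : g (⟨a, ha⟩ + ⟨b, hb⟩) = 0 := by rw [map_add, ha', hb', add_zero]
        exact this
    exact (key x h3).2
  let K : Submodule R J := Submodule.comap J.subtype (I ^ (n + k) : Ideal R)
  let ι : (J ⧸ K) →ₗ[R] (R ⧸ (I ^ (n + k) : Ideal R)) := Submodule.mapQ K _ J.subtype le_rfl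
  have hι : Function.Injective ι := by
    rw [← LinearMap.ker_eq_bot, Submodule.ker_mapQ]
    rw [eq_bot_iff, Submodule.map_le_iff_le_comap]
    exact fun x hx => (Submodule.Quotient.mk_eq_zero K).2 (by simpa [K] using hx)
  let g' : (J ⧸ K) →ₗ[R] E := K.liftQ ((torsI I E).subtype ∘ₗ g) (by
    rintro ⟨x, hx⟩ hxK
    rw [LinearMap.mem_ker, LinearMap.comp_apply, hAR x hx hxK, map_zero])
  obtain ⟨h, hh⟩ := Module.Injective.out ι hι g'
  let φ : R →ₗ[R] E := h ∘ₗ Submodule.mkQ _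
  have hφ : ∀ x, φ x ∈ torsI I E := by
    intro x
    refine ⟨n + k, fun a ha => ?_⟩
    rw [← map_smul]
    change h (Submodule.mkQ _ (a • x)) = 0
    rw [(Submodule.Quotient.mk_eq_zero _).2 (Ideal.mul_mem_right _ _ ha : a • x ∈ I ^ (n + k)) |> 
      (fun t => (t : Submodule.mkQ (I ^ (n + k) : Ideal R) (a • x) = 0)), map_zero]
  refine ⟨φ.codRestrict _ hφ, fun x hx => Subtype.ext ?_⟩
  exact hh (Submodule.Quotient.mk ⟨x, hx⟩)

lemma IsTors.of_surj {I : Ideal R} {M M' : Type} [AddCommGroup M] [Module R M] [AddCommGroup M']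
    [Module R M'] (h : IsTors I M) (f : M →ₗ[R] M') (hf : Function.Surjective f) : IsTors I M' := by
  intro m
  obtain ⟨m, rfl⟩ := hf m
  obtain ⟨n, hn⟩ := h m
  exact ⟨n, fun a ha => by rw [← map_smul, hn a ha, map_zero]⟩

lemma exists_injective_embedding (M : Type) [AddCommGroup M] [Module R M] :
    ∃ (E : Type) (_ : AddCommGroup E) (_ : Module R E) (f : M →ₗ[R] E),
      Module.Injective R E ∧ Function.Injective f := by
  refine ⟨(Injective.under (ModuleCat.of R M) : ModuleCat.{0} R), inferInstance, inferInstance,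
    (Injective.ι (ModuleCat.of R M)).hom, ?_, ?_⟩
  · have h : Injective (Injective.under (ModuleCat.of R M)) := inferInstance
    exact @Module.injective_module_of_injective_object R _ _ _ _ h
  · exact (ModuleCat.mono_iff_injective _).1 inferInstance

lemma pull_qmap_pull (I : Ideal R) {M : Type} [AddCommGroup M] [Module R M] {i n m k : ℕ}
    (h : n ≤ m) (h' : m ≤ k) (e : EE R (R ⧸ I ^ n) M i) :
    EE.pull M (qmap I h') i (EE.pull M (qmap I h) i e) = EE.pull M (qmap I (h.trans h')) i e := by
  rw [← EE.pull_comp, qmap_comp]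

lemma tors_dies [IsNoetherianRing R] (I : Ideal R) (i : ℕ) : ∀ (M : Type) [AddCommGroup M] [Module R M],
    IsTors I M → ∀ (n : ℕ) (e : EE R (R ⧸ I ^ n) M (i+1)),
    ∃ (m : ℕ) (h : n ≤ m), EE.pull M (qmap I h) (i+1) e = 0 := by
  induction i with
  | zero =>
    intro M _ _ hM n e
    obtain ⟨E, _, _, f, hE, hf⟩ := exists_injective_embedding (R := R) M
    have hE' := torsI_injective I E
    let f' : M →ₗ[R] torsI I E := f.codRestrict _ (fun m => by
      obtain ⟨n, hn⟩ := hM m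
      exact ⟨n, fun a ha => by rw [← map_smul, hn a ha, map_zero]⟩)
    have hf' : Function.Injective f' := fun a b hab => hf (congrArg Subtype.val hab)
    have hex : Function.Exact f' (LinearMap.range f').mkQ := LinearMap.exact_map_mkQ_range f'
    have hsurj := Submodule.mkQ_surjective (LinearMap.range f')
    obtain ⟨e', rfl⟩ := EE.push_eq_zero_left hf' hsurj hex _ e
      ((EE.subsingleton_of_injective _).elim _ _)
    obtain ⟨φ, rfl⟩ := EE.zeroEquiv.symm.surjective e'
    obtain ⟨y, hy⟩ := hsurj (φ (Ideal.Quotient.mk _ 1))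
    obtain ⟨k, hk⟩ := torsI_isTors I E y
    refine ⟨max n k, le_max_left _ _, ?_⟩
    let ψ : (R ⧸ I ^ (max n k)) →ₗ[R] torsI I E :=
      Submodule.liftQ _ (LinearMap.toSpanSingleton R _ y) (fun a ha => by
        rw [LinearMap.mem_ker, LinearMap.toSpanSingleton_apply]
        exact hk a (Ideal.pow_le_pow_right (le_max_right _ _) ha))
    have : φ ∘ₗ qmap I (le_max_left n k) = (LinearMap.range f').mkQ ∘ₗ ψ := by
      apply Submodule.linearMap_qext
      apply LinearMap.ext_ring
      change φ (Ideal.Quotient.mk _ 1) = (LinearMap.range f').mkQ ((1 : R) • y)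
      rw [one_smul, hy]
    rw [EE.pull_conn, EE.pull_zero, this, ← EE.push_zero, EE.conn_push]
  | succ i ih =>
    intro M _ _ hM n e
    obtain ⟨E, _, _, f, hE, hf⟩ := exists_injective_embedding (R := R) M
    have hE' := torsI_injective I E
    let f' : M →ₗ[R] torsI I E := f.codRestrict _ (fun m => by
      obtain ⟨n, hn⟩ := hM m
      exact ⟨n, fun a ha => by rw [← map_smul, hn a ha, map_zero]⟩)
    have hf' : Function.Injective f' := fun a b hab => hf (congrArg Subtype.val hab)
    have hex : Function.Exact f' (LinearMap.range f').mkQ := LinearMap.exact_map_mkQ_range f'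
    have hsurj := Submodule.mkQ_surjective (LinearMap.range f')
    obtain ⟨e', rfl⟩ := EE.push_eq_zero_left hf' hsurj hex _ e
      ((EE.subsingleton_of_injective _).elim _ _)
    obtain ⟨m, h, hm⟩ := ih _ ((torsI_isTors I E).of_surj _ hsurj) n e'
    exact ⟨m, h, by rw [EE.pull_conn, hm, map_zero]⟩

lemma EE.push_sum {N M M' : Type} [AddCommGroup N] [Module R N] [AddCommGroup M] [Module R M]
    [AddCommGroup M'] [Module R M'] {ι : Type} (s : Finset ι) (f : ι → (M →ₗ[R] M')) (j : ℕ)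
    (e : EE R N M j) : EE.push N (∑ i ∈ s, f i) j e = ∑ i ∈ s, EE.push N (f i) j e := by
  classical
  induction s using Finset.induction_on with
  | empty =>
    rw [Finset.sum_empty, Finset.sum_empty]
    have := EE.push_smul (0 : R) (0 : M →ₗ[R] M') j e
    rwa [zero_smul, zero_smul] at this
  | insert a s ha ih =>
    rw [Finset.sum_insert ha, Finset.sum_insert ha, ← ih]
    change e.comp (Abelian.Ext.mk₀ (ModuleCat.ofHom (f a) + ModuleCat.ofHom (∑ i ∈ s, f i))) (by omega) = _
    rw [Abelian.Ext.mk₀_add, Abelian.Ext.comp_add]; rfl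

lemma ext_loc_zero (I : Ideal R) (f : R) (hf : f ∈ I) (L : Type) [AddCommGroup L] [Module R L]
    (hL : Function.Bijective (fun x : L => f • x)) (n i : ℕ) : Subsingleton (EE R (R ⧸ I ^ n) L i) := by
  have hL' : Function.Bijective (f ^ n • (LinearMap.id : L →ₗ[R] L)) := by
    have : ⇑(f ^ n • (LinearMap.id : L →ₗ[R] L)) = (fun x : L => f • x)^[n] := by
      funext x; simp [smul_iterate]
    rw [this]; exact hL.iterate n
  refine subsingleton_of_forall_eq 0 fun e => ?_
  let g := LinearEquiv.ofBijective _ hL'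
  have h1 : f ^ n • e = 0 := by
    have := EE.pull_smul (f ^ n) (LinearMap.id : (R ⧸ I ^ n) →ₗ[R] _) i e
    rw [EE.pull_id] at this
    rw [← this]
    have h0 : f ^ n • (LinearMap.id : (R ⧸ I ^ n) →ₗ[R] _) = (0 : R) • LinearMap.id := by
      apply Submodule.linearMap_qext
      apply LinearMap.ext_ring
      rw [zero_smul]
      exact (Submodule.Quotient.mk_eq_zero _).2 (Ideal.mul_mem_right _ _ (Ideal.pow_mem_pow hf n))
    rw [h0, EE.pull_smul, zero_smul]
  have h2 : e = EE.push _ (g.symm.toLinearMap ∘ₗ g.toLinearMap) i e := by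
    rw [LinearEquiv.symm_comp, EE.push_id]
  rw [h2, EE.push_comp]
  have h3 : EE.push _ g.toLinearMap i e = f ^ n • e := by
    have := EE.push_smul (f ^ n) (LinearMap.id : L →ₗ[R] _) i e
    rw [EE.push_id] at this
    exact this
  rw [h3, h1, map_zero]

lemma ext_pi_zero {N : Type} [AddCommGroup N] [Module R N] {k : ℕ} (L : Fin k → Type)
    [∀ j, AddCommGroup (L j)] [∀ j, Module R (L j)] (i : ℕ)
    (h : ∀ j, Subsingleton (EE R N (L j) i)) : Subsingleton (EE R N (∀ j, L j) i) := by
  refine subsingleton_of_forall_eq 0 fun e => ?_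
  have h1 : (LinearMap.id : (∀ j, L j) →ₗ[R] _) =
      ∑ j, LinearMap.single R L j ∘ₗ LinearMap.proj j := by
    apply LinearMap.ext
    intro x
    rw [LinearMap.sum_apply]
    exact (Finset.univ_sum_single x).symm
  rw [← EE.push_id i e, h1, EE.push_sum]
  refine Finset.sum_eq_zero fun j _ => ?_
  rw [EE.push_comp, (h j).elim (EE.push N (LinearMap.proj j) i e) 0, map_zero]

end LCcalc


section LCind
variable {R : Type} [CommRing R]

/-- ind-isomorphisms of the Ext systems give isomorphisms of limits -/
lemma lcd_equiv (I : Ideal R) {A B : Type} [AddCommGroup A] [Module R A] [AddCommGroup B] [Module R B]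
    (i j : ℕ) (φ : ∀ n, EE R (R ⧸ I ^ n) A i →ₗ[R] EE R (R ⧸ I ^ n) B j)
    (hφ : ∀ n m (h : n ≤ m) e, φ m (EE.pull A (qmap I h) i e) = EE.pull B (qmap I h) j (φ n e))
    (h1 : ∀ n e, φ n e = 0 → ∃ (m : ℕ) (h : n ≤ m), EE.pull A (qmap I h) i e = 0)
    (h2 : ∀ n e', ∃ (m : ℕ) (h : n ≤ m) (e : _), φ m e = EE.pull B (qmap I h) j e') :
    Nonempty (LCD I A i ≃ₗ[R] LCD I B j) := by
  refine ⟨LinearEquiv.ofBijective (Module.DirectLimit.map φ (fun n m h => ?_)) ⟨?_, ?_⟩⟩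
  · apply LinearMap.ext; intro e; exact hφ n m h e
  · rw [injective_iff_map_eq_zero]
    intro z hz
    obtain ⟨n, x, rfl⟩ := Module.DirectLimit.exists_of z
    rw [Module.DirectLimit.map_apply_of] at hz
    obtain ⟨m, hm, hx⟩ := Module.DirectLimit.of.zero_exact hz
    have hx' : φ m (EE.pull A (qmap I hm) i x) = 0 := by rw [hφ]; exact hx
    obtain ⟨k, hk, hx2⟩ := h1 m _ hx'
    rw [pull_qmap_pull] at hx2
    have h3 : Module.DirectLimit.of R ℕ (fun n : ℕ => EE R (R ⧸ I ^ n) A i) (lcSys I A i) k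
      (lcSys I A i n k (hm.trans hk) x) = _ := Module.DirectLimit.of_f
    rw [← h3]
    change Module.DirectLimit.of R ℕ (fun n : ℕ => EE R (R ⧸ I ^ n) A i) (lcSys I A i) k
      (EE.pull A (qmap I (hm.trans hk)) i x) = 0
    rw [hx2, map_zero]
  · intro z
    obtain ⟨n, x, rfl⟩ := Module.DirectLimit.exists_of z
    obtain ⟨m, h, e, he⟩ := h2 n x
    refine ⟨LCD.of I A i m e, ?_⟩
    rw [Module.DirectLimit.map_apply_of, he]
    exact Module.DirectLimit.of_f

variable {M : Type} [AddCommGroup M] [Module R M]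

lemma lcd_zero (I : Ideal R) : Nonempty (LCD I M 0 ≃ₗ[R] torsI I M) := by
  let ev : ∀ n, EE R (R ⧸ I ^ n) M 0 →ₗ[R] torsI I M := fun n =>
    LinearMap.codRestrict _ (LinearMap.applyₗ (Submodule.Quotient.mk 1) ∘ₗ EE.zeroEquiv.toLinearMap)
     (fun e => ⟨n, fun a ha => by
      change a • (EE.zeroEquiv e) (Submodule.Quotient.mk 1) = 0
      rw [← map_smul, ← Submodule.Quotient.mk_smul, smul_eq_mul,
        (Submodule.Quotient.mk_eq_zero (I ^ n)).2 (Ideal.mul_mem_right 1 _ ha), map_zero]⟩)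
  have hev : ∀ n (f : (R ⧸ I ^ n) →ₗ[R] M), (ev n (EE.zeroEquiv.symm f) : M) = f (Submodule.Quotient.mk 1) := by
    intro n f
    change EE.zeroEquiv (EE.zeroEquiv.symm f) (Submodule.Quotient.mk 1) = _
    rw [LinearEquiv.apply_symm_apply]
  refine ⟨LinearEquiv.ofBijective (Module.DirectLimit.lift R ℕ _ _ ev ?_) ⟨?_, ?_⟩⟩
  · intro n m h e
    obtain ⟨f, rfl⟩ := EE.zeroEquiv.symm.surjective e
    refine Subtype.ext ?_
    change (ev m (EE.pull M (qmap I h) 0 _) : M) = _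
    rw [EE.pull_zero, hev, hev]
    rfl
  · rw [injective_iff_map_eq_zero]
    intro z hz
    obtain ⟨n, x, rfl⟩ := Module.DirectLimit.exists_of z
    rw [Module.DirectLimit.lift_of] at hz
    obtain ⟨f, rfl⟩ := EE.zeroEquiv.symm.surjective x
    have h1 := (hev n f).symm.trans (congrArg Subtype.val hz)
    have : f = 0 := by
      apply Submodule.linearMap_qext
      apply LinearMap.ext_ring
      exact h1
    rw [this, map_zero, map_zero]
  · rintro ⟨y, n, hn⟩
    let f : (R ⧸ I ^ n) →ₗ[R] M := Submodule.liftQ _ (LinearMap.toSpanSingleton R _ y) (fun a ha => hn a ha)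
    refine ⟨LCD.of I M 0 n (EE.zeroEquiv.symm f), ?_⟩
    rw [Module.DirectLimit.lift_of]
    refine Subtype.ext ((hev n f).trans ?_)
    change (1 : R) • y = y
    rw [one_smul]

/-- map to the product of localizations -/
noncomputable def locMap {k : ℕ} (f : Fin k → R) (M : Type) [AddCommGroup M] [Module R M] :
    M →ₗ[R] ∀ j, LocalizedModule (Submonoid.powers (f j)) M :=
  LinearMap.pi fun j => LocalizedModule.mkLinearMap (Submonoid.powers (f j)) M

lemma ker_locMap {k : ℕ} (f : Fin k → R) (M : Type) [AddCommGroup M] [Module R M] :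
    LinearMap.ker (locMap f M) = torsI (Ideal.span (Set.range f)) M := by
  ext m
  have h1 : m ∈ LinearMap.ker (locMap f M) ↔ ∀ j, ∃ n : ℕ, f j ^ n • m = 0 := by
    rw [LinearMap.mem_ker, funext_iff]
    refine forall_congr' fun j => ?_
    change LocalizedModule.mkLinearMap (Submonoid.powers (f j)) M m = 0 ↔ _
    rw [IsLocalizedModule.eq_zero_iff (Submonoid.powers (f j))]
    constructor
    · rintro ⟨⟨_, n, rfl⟩, h⟩; exact ⟨n, h⟩
    · rintro ⟨n, h⟩; exact ⟨⟨_, n, rfl⟩, h⟩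
  rw [h1]
  constructor
  · intro h
    choose n hn using h
    -- ideal generated by f j ^ n j kills m
    let J : Ideal R := LinearMap.ker (LinearMap.toSpanSingleton R M m)
    have hJ : ∀ j, f j ∈ J.radical := fun j => ⟨n j, hn j⟩
    have h2 : Ideal.span (Set.range f) ≤ J.radical := by
      rw [Ideal.span_le]; rintro _ ⟨j, rfl⟩; exact hJ j
    obtain ⟨N, hN⟩ := Ideal.exists_pow_le_of_le_radical_of_fg h2 (Submodule.fg_span (Set.finite_range f))
    exact ⟨N, fun a ha => hN ha⟩
  · rintro ⟨n, hn⟩ j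
    exact ⟨n, hn _ (Ideal.pow_mem_pow (Ideal.subset_span (Set.mem_range_self j)) n)⟩

lemma lcd_succ [IsNoetherianRing R] {k : ℕ} (f : Fin k → R) (i : ℕ) :
    Nonempty (LCD (Ideal.span (Set.range f))
        ((∀ j, LocalizedModule (Submonoid.powers (f j)) M) ⧸ LinearMap.range (locMap f M)) i ≃ₗ[R]
      LCD (Ideal.span (Set.range f)) M (i+1)) := by
  set I := Ideal.span (Set.range f)
  let g := locMap f M
  -- step 1
  have s1 : Nonempty (LCD I M (i+1) ≃ₗ[R] LCD I (LinearMap.range g) (i+1)) := by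
    have hinj := Submodule.injective_subtype (LinearMap.ker g)
    have hsurj := g.surjective_rangeRestrict
    have hex : Function.Exact (LinearMap.ker g).subtype g.rangeRestrict := by
      intro x
      constructor
      · intro hx
        exact ⟨⟨x, congrArg Subtype.val hx⟩, rfl⟩
      · rintro ⟨⟨x, hx⟩, rfl⟩
        exact Subtype.ext hx
    have hT : IsTors I (LinearMap.ker g) := by
      change IsTors I (LinearMap.ker (locMap f M))
      rw [ker_locMap]; exact torsI_isTors I M
    refine lcd_equiv I (i+1) (i+1) (fun n => EE.push _ g.rangeRestrict (i+1)) ?_ ?_ ?_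
    · intro n m h e
      rw [EE.push_pull]
    · intro n e he
      obtain ⟨e', rfl⟩ := EE.push_eq_zero_mid hinj hsurj hex _ e he
      obtain ⟨m, h, hm⟩ := tors_dies I i _ hT n e'
      exact ⟨m, h, by rw [← EE.push_pull, hm, map_zero]⟩
    · intro n e'
      obtain ⟨m, h, hm⟩ := tors_dies I (i+1) _ hT n (EE.conn _ hinj hsurj hex _ e')
      rw [EE.pull_conn] at hm
      obtain ⟨e, he⟩ := EE.conn_eq_zero hinj hsurj hex _ _ hm
      exact ⟨m, h, e, he⟩
  have s2 : Nonempty (LCD I ((∀ j, LocalizedModule (Submonoid.powers (f j)) M) ⧸ LinearMap.range g) i ≃ₗ[R]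
      LCD I (LinearMap.range g) (i+1)) := by
    have hinj := Submodule.injective_subtype (LinearMap.range g)
    have hsurj := Submodule.mkQ_surjective (LinearMap.range g)
    have hex : Function.Exact (LinearMap.range g).subtype (LinearMap.range g).mkQ :=
      LinearMap.exact_subtype_mkQ _
    have hL : ∀ n i, Subsingleton (EE R (R ⧸ I ^ n) (∀ j, LocalizedModule (Submonoid.powers (f j)) M) i) := by
      intro n i
      apply ext_pi_zero
      intro j
      refine ext_loc_zero I (f j) (Ideal.subset_span ⟨j, rfl⟩) _ ?_ n i
      have := IsLocalizedModule.map_units (LocalizedModule.mkLinearMap (Submonoid.powers (f j)) M)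
        ⟨f j, Submonoid.mem_powers _⟩
      exact (Module.End.isUnit_iff _).1 this
    refine lcd_equiv I i (i+1) (fun n => EE.conn _ hinj hsurj hex i) ?_ ?_ ?_
    · intro n m h e
      rw [EE.pull_conn]
    · intro n e he
      obtain ⟨e', rfl⟩ := EE.conn_eq_zero hinj hsurj hex _ _ he
      refine ⟨n, le_rfl, ?_⟩
      rw [(hL n i).elim e' 0, map_zero, map_zero]
    · intro n e'
      obtain ⟨e, rfl⟩ := EE.push_eq_zero_left hinj hsurj hex _ e' ((hL n _).elim _ _)
      refine ⟨n, le_rfl, e, ?_⟩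
      rw [qmap_self, EE.pull_id]
  exact ⟨s2.some ≪≫ₗ s1.some.symm⟩

/-- induction principle for local cohomology modules -/
theorem lc_induct [IsNoetherianRing R] (I : Ideal R)
    (Pr : ∀ (M : Type) [AddCommGroup M] [Module R M], Prop)
    (hequiv : ∀ (M M' : Type) [AddCommGroup M] [Module R M] [AddCommGroup M'] [Module R M'],
      (M ≃ₗ[R] M') → Pr M → Pr M')
    (hker : ∀ (M : Type) [AddCommGroup M] [Module R M] (k : ℕ) (f : Fin k → R), Pr M →
      Pr (LinearMap.ker (locMap f M)))
    (hcoker : ∀ (M : Type) [AddCommGroup M] [Module R M] (k : ℕ) (f : Fin k → R), Pr M →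
      Pr ((∀ j, LocalizedModule (Submonoid.powers (f j)) M) ⧸ LinearMap.range (locMap f M)))
    (i : ℕ) : ∀ (M : Type) [AddCommGroup M] [Module R M], Pr M →
      Pr ((localCohomology I i).obj (ModuleCat.of R M)) := by
  obtain ⟨k, f, rfl⟩ := Submodule.fg_iff_exists_fin_generating_family.1 (IsNoetherian.noetherian I)
  change ∀ (M : Type) [AddCommGroup M] [Module R M], Pr M →
      Pr ((localCohomology (Ideal.span (Set.range f)) i).obj (ModuleCat.of R M))
  have : ∀ (M : Type) [AddCommGroup M] [Module R M], Pr M → Pr (LCD (Ideal.span (Set.range f)) M i) := by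
    induction i with
    | zero =>
      intro M _ _ hM
      refine hequiv _ _ (lcd_zero (M := M) (Ideal.span (Set.range f))).some.symm ?_
      refine hequiv _ _ (LinearEquiv.ofEq _ _ (ker_locMap f M)) (hker M k f hM)
    | succ i ih =>
      intro M _ _ hM
      exact hequiv _ _ (lcd_succ f i).some (ih _ (hcoker M k f hM))
  intro M _ _ hM
  exact hequiv _ _ (lcEquiv _ i M) (this M hM)

end LCind

open scoped TensorProduct

section Taylor

/-- Taylor datum over `R` -/
structure TDat (R : Type) [CommRing R] where
  B' : Type
  B : Type
  [cB' : CommRing B']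
  [cB : CommRing B]
  [aB' : Algebra R B']
  [aB : Algebra R B]
  [flB' : Module.Flat R B']
  [flB : Module.Flat R B]
  ε : B' →ₐ[R] B
  c : B' →ₗ[R] B
  t : B'
  N : ℕ
  b : R →+* B'
  ht : t ^ (N + 1) = 0
  hε : ε t = 0
  hb : ∀ r, ∃ z, b r = algebraMap R B' r + t * z
  hc : ∀ z, c (t ^ N * z) = ε z

attribute [instance] TDat.cB' TDat.cB TDat.aB' TDat.aB TDat.flB' TDat.flB

variable {R : Type} [CommRing R] (D : TDat R)

/-- `B' ⊗ M` with scalar action of `R` through `b` -/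
def TB (D : TDat R) (M : Type) [AddCommGroup M] [Module R M] : Type := D.B' ⊗[R] M

variable (M M' M'' : Type) [AddCommGroup M] [Module R M] [AddCommGroup M'] [Module R M']
   [AddCommGroup M''] [Module R M'']

noncomputable instance : AddCommGroup (TB D M) := inferInstanceAs (AddCommGroup (D.B' ⊗[R] M))
noncomputable instance : Module D.B' (TB D M) := inferInstanceAs (Module D.B' (D.B' ⊗[R] M))
noncomputable instance : Module R (TB D M) := Module.compHom (TB D M) D.b

lemma TB.smul_def (r : R) (z : TB D M) : r • z = D.b r • z := rfl

variable {M M' M''}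

noncomputable def TB.map (f : M →ₗ[R] M') : TB D M →ₗ[D.B'] TB D M' := LinearMap.baseChange D.B' f

noncomputable def TB.mapR (f : M →ₗ[R] M') : TB D M →ₗ[R] TB D M' where
  toFun := TB.map D f
  map_add' := map_add _
  map_smul' r z := (TB.map D f).map_smul (D.b r) z

noncomputable def TB.aug (M : Type) [AddCommGroup M] [Module R M] : TB D M →+ D.B ⊗[R] M :=
  (LinearMap.rTensor M D.ε.toLinearMap).toAddMonoidHom

noncomputable def TB.cc (M : Type) [AddCommGroup M] [Module R M] : TB D M →+ D.B ⊗[R] M :=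
  (LinearMap.rTensor M D.c).toAddMonoidHom

lemma TB.map_comp (f : M →ₗ[R] M') (g : M' →ₗ[R] M'') (z : TB D M) :
    TB.map D (g ∘ₗ f) z = TB.map D g (TB.map D f z) := by
  change LinearMap.baseChange D.B' (g ∘ₗ f) z = _
  rw [LinearMap.baseChange_comp]; rfl

lemma TB.map_id (z : TB D M) : TB.map D LinearMap.id z = z := by
  change LinearMap.baseChange D.B' LinearMap.id z = _
  rw [LinearMap.baseChange_id]; rfl

lemma TB.map_smul_fun (r : R) (z : TB D M) :
    TB.map D (r • LinearMap.id) z = algebraMap R D.B' r • z := by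
  have : ∀ z : D.B' ⊗[R] M, LinearMap.baseChange D.B' (r • LinearMap.id) z = algebraMap R D.B' r • z := by
    intro z
    rw [LinearMap.baseChange_smul, LinearMap.baseChange_id, algebraMap_smul]; rfl
  exact this z

lemma TB.map_sum {ι : Type} (s : Finset ι) (f : ι → (M →ₗ[R] M')) (z : TB D M) :
    TB.map D (∑ i ∈ s, f i) z = ∑ i ∈ s, TB.map D (f i) z := by
  have : (∑ i ∈ s, f i).baseChange D.B' = ∑ i ∈ s, (f i).baseChange D.B' :=
    _root_.map_sum (LinearMap.baseChangeHom R D.B' M M') f s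
  have h2 : ∀ z : D.B' ⊗[R] M, LinearMap.baseChange D.B' (∑ i ∈ s, f i) z =
      ∑ i ∈ s, LinearMap.baseChange D.B' (f i) z := by
    intro z
    rw [this, LinearMap.sum_apply]
  exact h2 z

lemma TB.aug_map (f : M →ₗ[R] M') (z : TB D M) :
    TB.aug D M' (TB.map D f z) = LinearMap.lTensor D.B f (TB.aug D M z) := by
  change (LinearMap.rTensor M' D.ε.toLinearMap ∘ₗ LinearMap.lTensor D.B' f) z =
    (LinearMap.lTensor D.B f ∘ₗ LinearMap.rTensor M D.ε.toLinearMap) z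
  rw [LinearMap.rTensor_comp_lTensor, LinearMap.lTensor_comp_rTensor]

lemma TB.cc_map (z : TB D M) :
    TB.cc D M (D.t ^ D.N • z) = TB.aug D M z := by
  suffices key : ∀ z : D.B' ⊗[R] M, LinearMap.rTensor M D.c (D.t ^ D.N • z) =
    LinearMap.rTensor M D.ε.toLinearMap z from key z
  intro z
  induction z using TensorProduct.induction_on with
  | zero => simp
  | tmul x y =>
    rw [TensorProduct.smul_tmul', smul_eq_mul, LinearMap.rTensor_tmul, LinearMap.rTensor_tmul, D.hc]; rfl
  | add x y hx hy => rw [smul_add, map_add, map_add, hx, hy]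

/-- a Taylor structure on `M` -/
structure TStr (M : Type) [AddCommGroup M] [Module R M] where
  T : M →ₗ[R] TB D M
  h : ∀ m, TB.aug D M (T m) = 1 ⊗ₜ m

def HasT (M : Type) [AddCommGroup M] [Module R M] : Prop := Nonempty (TStr D M)

variable {D}

/-- compatible maps -/
def TStr.Comm (s : TStr D M) (s' : TStr D M') (f : M →ₗ[R] M') : Prop :=
  ∀ m, s'.T (f m) = TB.map D f (s.T m)

noncomputable def TStr.self (D : TDat R) : TStr D R where
  T := { toFun := fun r => (D.b r ⊗ₜ[R] (1 : R) : D.B' ⊗[R] R)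
         map_add' := fun x y => by rw [map_add, TensorProduct.add_tmul]; rfl
         map_smul' := fun r x => by
          rw [smul_eq_mul, map_mul]
          exact (TensorProduct.smul_tmul' (D.b r) (D.b x) (1 : R)).symm }
  h r := by
    change LinearMap.rTensor R D.ε.toLinearMap (D.b r ⊗ₜ[R] (1 : R)) = _
    obtain ⟨z, hz⟩ := D.hb r
    rw [LinearMap.rTensor_tmul, AlgHom.toLinearMap_apply, hz, map_add, map_mul, D.hε, zero_mul, add_zero,
      AlgHom.commutes, Algebra.algebraMap_eq_smul_one, TensorProduct.smul_tmul, smul_eq_mul, mul_one]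

noncomputable def TStr.equiv (s : TStr D M) (e : M ≃ₗ[R] M') : TStr D M' where
  T := TB.mapR D e.toLinearMap ∘ₗ s.T ∘ₗ e.symm.toLinearMap
  h m := by
    change TB.aug D M' (TB.map D e.toLinearMap (s.T (e.symm m))) = _
    rw [TB.aug_map, s.h, LinearMap.lTensor_tmul]
    simp

noncomputable def TStr.coker {s : TStr D M} {s' : TStr D M'} {f : M →ₗ[R] M'} (h : s.Comm s' f) :
    TStr D (M' ⧸ LinearMap.range f) where
  T := Submodule.liftQ _ (TB.mapR D (LinearMap.range f).mkQ ∘ₗ s'.T) (by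
    rintro _ ⟨m, rfl⟩
    change TB.map D (LinearMap.range f).mkQ (s'.T (f m)) = 0
    rw [h, ← TB.map_comp, LinearMap.range_mkQ_comp]
    have := TB.map_smul_fun D (0 : R) (TB.map D f (s.T m))
    change LinearMap.baseChange D.B' 0 _ = 0
    rw [LinearMap.baseChange_zero]; rfl)
  h m := by
    obtain ⟨m, rfl⟩ := Submodule.mkQ_surjective _ m
    change TB.aug D _ (TB.map D (LinearMap.range f).mkQ (s'.T m)) = _
    rw [TB.aug_map, s'.h, LinearMap.lTensor_tmul]

lemma TB.map_inj (f : M →ₗ[R] M') (hf : Function.Injective f) : Function.Injective (TB.map D f) :=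
  Module.Flat.lTensor_preserves_injective_linearMap (M := D.B') f hf

lemma TB.map_ker (f : M →ₗ[R] M') (z : TB D M) (hz : TB.map D f z = 0) :
    ∃ z', TB.map D (LinearMap.ker f).subtype z' = z := by
  have := Module.Flat.lTensor_exact D.B' (LinearMap.exact_subtype_ker_map f)
  exact (this z).1 hz

noncomputable def TStr.ker {s : TStr D M} {s' : TStr D M'} {f : M →ₗ[R] M'} (h : s.Comm s' f) :
    TStr D (LinearMap.ker f) := by
  have h1 : ∀ m : LinearMap.ker f, ∃ z, TB.mapR D (LinearMap.ker f).subtype z = s.T m := fun m =>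
    TB.map_ker f _ (by rw [← h, LinearMap.map_coe_ker, map_zero])
  have hinj : Function.Injective (TB.mapR D (LinearMap.ker f).subtype) :=
    TB.map_inj (D := D) _ (LinearMap.ker f).injective_subtype
  choose F hF using h1
  exact
  { T := { toFun := F
           map_add' := fun x y => hinj (by rw [map_add, hF, hF, hF]; simp)
           map_smul' := fun x y => hinj (by rw [map_smul, hF, hF]; simp) }
    h := fun m => by
      have hi : Function.Injective (LinearMap.lTensor D.B (LinearMap.ker f).subtype) :=
        Module.Flat.lTensor_preserves_injective_linearMap _ (LinearMap.ker f).injective_subtype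
      apply hi
      rw [← TB.aug_map, LinearMap.lTensor_tmul]
      exact (congrArg (TB.aug D M) (hF m)).trans (s.h m) }

noncomputable def TStr.pi {k : ℕ} {L : Fin k → Type} [∀ j, AddCommGroup (L j)] [∀ j, Module R (L j)]
    (s : ∀ j, TStr D (L j)) : TStr D (∀ j, L j) where
  T := ∑ j, TB.mapR D (LinearMap.single R L j) ∘ₗ (s j).T ∘ₗ LinearMap.proj j
  h m := by
    rw [LinearMap.sum_apply, map_sum]
    have : ∀ j, TB.aug D (∀ j, L j) ((TB.mapR D (LinearMap.single R L j) ∘ₗ (s j).T ∘ₗ LinearMap.proj j) m)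
        = 1 ⊗ₜ[R] Pi.single j (m j) := by
      intro j
      change TB.aug D _ (TB.map D (LinearMap.single R L j) ((s j).T (m j))) = _
      rw [TB.aug_map, (s j).h, LinearMap.lTensor_tmul]; rfl
    rw [Finset.sum_congr rfl fun j _ => this j, ← TensorProduct.tmul_sum, Finset.univ_sum_single]

lemma TB.unit_of_loc (W : Submonoid R) (L : Type) [AddCommGroup L] [Module R L]
    (hL : ∀ w : W, IsUnit (algebraMap R (Module.End R L) w)) (w : W) :
    IsUnit (algebraMap R (Module.End R (TB D L)) w) := by
  -- over B'
  have h1 : IsUnit (algebraMap D.B' (Module.End D.B' (TB D L)) (algebraMap R D.B' w)) := by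
    obtain ⟨u, hu⟩ := hL w
    have hu' : (u : Module.End R L) = (w : R) • LinearMap.id := by
      rw [hu]; ext x; simp
    refine isUnit_iff_exists.2 ⟨TB.map D (↑u⁻¹ : Module.End R L), ?_, ?_⟩
    · apply LinearMap.ext; intro z
      change algebraMap R D.B' w • TB.map D (↑u⁻¹ : Module.End R L) z = z
      rw [← TB.map_smul_fun, ← TB.map_comp, ← hu']
      have : (u : Module.End R L) ∘ₗ (↑u⁻¹ : Module.End R L) = LinearMap.id := u.mul_inv
      rw [this, TB.map_id]
    · apply LinearMap.ext; intro z
      change TB.map D (↑u⁻¹ : Module.End R L) (algebraMap R D.B' w • z) = z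
      rw [← TB.map_smul_fun, ← TB.map_comp, ← hu']
      have : (↑u⁻¹ : Module.End R L) ∘ₗ (u : Module.End R L) = LinearMap.id := u.inv_mul
      rw [this, TB.map_id]
  obtain ⟨z, hz⟩ := D.hb w
  have h2 : IsUnit (algebraMap D.B' (Module.End D.B' (TB D L)) (D.b w)) := by
    rw [hz, map_add]
    have hn : IsNilpotent (algebraMap D.B' (Module.End D.B' (TB D L)) (D.t * z)) := by
      refine IsNilpotent.map ?_ _
      exact ⟨D.N + 1, by rw [mul_pow, D.ht, zero_mul]⟩
    exact hn.isUnit_add_left_of_commute h1 (Algebra.commutes _ _).symm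
  rw [Module.End.isUnit_iff] at h2 ⊢
  exact h2

noncomputable def TStr.loc (s : TStr D M) (W : Submonoid R) : TStr D (LocalizedModule W M) where
  T := IsLocalizedModule.lift W (LocalizedModule.mkLinearMap W M)
    (TB.mapR D (LocalizedModule.mkLinearMap W M) ∘ₗ s.T)
    (TB.unit_of_loc W _ (IsLocalizedModule.map_units (LocalizedModule.mkLinearMap W M)))
  h z := by
    set ℓ := LocalizedModule.mkLinearMap W M
    have hu := TB.unit_of_loc (D := D) W _ (IsLocalizedModule.map_units ℓ)
    set T := IsLocalizedModule.lift W ℓ (TB.mapR D ℓ ∘ₗ s.T) hu with hT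
    have hTm : ∀ m, T (ℓ m) = TB.map D ℓ (s.T m) := fun m => IsLocalizedModule.lift_apply W _ _ _ m
    obtain ⟨⟨m, w⟩, hw⟩ := IsLocalizedModule.surj W ℓ z
    change (w : R) • z = ℓ m at hw
    have haug : ∀ (r : R) (x : TB D (LocalizedModule W M)), TB.aug D _ (r • x) = r • TB.aug D _ x := by
      intro r x
      suffices key : ∀ x : D.B' ⊗[R] LocalizedModule W M,
        LinearMap.rTensor _ D.ε.toLinearMap (D.b r • x) =
        r • LinearMap.rTensor _ D.ε.toLinearMap x from key x
      intro x
      induction x using TensorProduct.induction_on with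
      | zero => simp
      | tmul x y =>
        obtain ⟨z, hz⟩ := D.hb r
        rw [TensorProduct.smul_tmul', smul_eq_mul, LinearMap.rTensor_tmul, LinearMap.rTensor_tmul,
          AlgHom.toLinearMap_apply, map_mul, hz, map_add, map_mul, D.hε, zero_mul, add_zero,
          AlgHom.commutes, ← Algebra.smul_def, TensorProduct.smul_tmul']; rfl
      | add x y hx hy => rw [smul_add, map_add, map_add, hx, hy, smul_add]
    have hwu : Function.Injective (fun x : D.B ⊗[R] LocalizedModule W M => (w : R) • x) := by
      have : IsUnit (algebraMap R (Module.End R (LocalizedModule W M)) w) :=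
        IsLocalizedModule.map_units ℓ w
      obtain ⟨u, hu⟩ := this
      intro x y hxy
      have hl : ∀ x : D.B ⊗[R] LocalizedModule W M,
          LinearMap.lTensor D.B (↑u⁻¹ : Module.End R (LocalizedModule W M)) ((w : R) • x) = x := by
        intro x
        have : (w : R) • x = LinearMap.lTensor D.B (u : Module.End R (LocalizedModule W M)) x := by
          rw [hu]
          have : algebraMap R (Module.End R (LocalizedModule W M)) w = (w : R) • LinearMap.id := by
            ext x; simp
          rw [this, LinearMap.lTensor_smul, LinearMap.lTensor_id]; rfl
        rw [this, ← LinearMap.lTensor_comp_apply]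
        have : (↑u⁻¹ : Module.End R (LocalizedModule W M)) ∘ₗ (u : Module.End R (LocalizedModule W M)) =
          LinearMap.id := u.inv_mul
        rw [this, LinearMap.lTensor_id]; rfl
      rw [← hl x, ← hl y]
      exact congrArg _ hxy
    apply hwu
    change (w : R) • TB.aug D _ (T z) = (w : R) • (1 ⊗ₜ z)
    rw [← haug, ← map_smul, hw, hTm, TB.aug_map, s.h, LinearMap.lTensor_tmul, ← TensorProduct.tmul_smul, hw]

lemma TStr.loc_comm (s : TStr D M) (W : Submonoid R) :
    s.Comm (s.loc W) (LocalizedModule.mkLinearMap W M) := fun m =>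
  IsLocalizedModule.lift_apply W _ _ _ m

lemma TStr.pi_comm {k : ℕ} {L : Fin k → Type} [∀ j, AddCommGroup (L j)] [∀ j, Module R (L j)]
    (s : ∀ j, TStr D (L j)) (s0 : TStr D M) (f : ∀ j, M →ₗ[R] L j) (h : ∀ j, s0.Comm (s j) (f j)) :
    s0.Comm (TStr.pi s) (LinearMap.pi f) := by
  intro m
  have h1 : LinearMap.pi f = ∑ j, LinearMap.single R L j ∘ₗ f j := by
    apply LinearMap.ext; intro x
    rw [LinearMap.sum_apply]
    exact (Finset.univ_sum_single (LinearMap.pi f x)).symm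
  have h2 : TB.map D (LinearMap.pi f) (s0.T m) = ∑ j, TB.map D (LinearMap.single R L j ∘ₗ f j) (s0.T m) := by
    rw [h1, TB.map_sum]
  rw [h2]
  change (∑ j, TB.mapR D (LinearMap.single R L j) ∘ₗ (s j).T ∘ₗ LinearMap.proj j) _ = _
  rw [LinearMap.sum_apply]
  refine Finset.sum_congr rfl fun j _ => ?_
  rw [TB.map_comp, ← h j m]
  rfl

theorem hasT_lc [IsNoetherianRing R] (D : TDat R) (I : Ideal R) (i : ℕ) :
    HasT D ((localCohomology I i).obj (ModuleCat.of R R)) := by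
  refine lc_induct I (fun M _ _ => HasT D M) ?_ ?_ ?_ i R ⟨TStr.self D⟩
  · rintro M M' _ _ _ _ e ⟨s⟩
    exact ⟨s.equiv e⟩
  · rintro M _ _ k f ⟨s⟩
    exact ⟨TStr.ker (TStr.pi_comm _ s _ (fun j => s.loc_comm _))⟩
  · rintro M _ _ k f ⟨s⟩
    exact ⟨TStr.coker (TStr.pi_comm _ s _ (fun j => s.loc_comm _))⟩

end Taylor

open scoped TensorProduct

section TaylorB
variable {R : Type} [CommRing R] {S : Type} [CommRing S] [Algebra R S]

/-- restriction of a Taylor datum -/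
noncomputable def TDat.restr (R : Type) [CommRing R] [Algebra R S] [Module.Flat R S] (D : TDat S) : TDat R :=
  letI i1 : Algebra R D.B' := ((algebraMap S D.B').comp (algebraMap R S)).toAlgebra
  letI i2 : Algebra R D.B := ((algebraMap S D.B).comp (algebraMap R S)).toAlgebra
  haveI t1 : IsScalarTower R S D.B' := IsScalarTower.of_algebraMap_eq fun _ => rfl
  haveI t2 : IsScalarTower R S D.B := IsScalarTower.of_algebraMap_eq fun _ => rfl
  { B' := D.B'
    B := D.B
    flB' := Module.Flat.trans R S D.B'
    flB := Module.Flat.trans R S D.B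
    ε := D.ε.restrictScalars R
    c := D.c.restrictScalars R
    t := D.t
    N := D.N
    b := D.b.comp (algebraMap R S)
    ht := D.ht
    hε := D.hε
    hb := fun r => D.hb (algebraMap R S r)
    hc := D.hc }

theorem HasT.extend (W : Submonoid R) [IsLocalization W S] [Module.Flat R S] (D : TDat S)
    (M : Type) [AddCommGroup M] [Module R M] [Module S M] [IsScalarTower R S M]
    (h : HasT (D.restr R) M) : HasT D M := by
  obtain ⟨s⟩ := h
  letI i1 : Algebra R D.B' := ((algebraMap S D.B').comp (algebraMap R S)).toAlgebra
  letI i2 : Algebra R D.B := ((algebraMap S D.B).comp (algebraMap R S)).toAlgebra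
  haveI t1 : IsScalarTower R S D.B' := IsScalarTower.of_algebraMap_eq fun _ => rfl
  haveI t2 : IsScalarTower R S D.B := IsScalarTower.of_algebraMap_eq fun _ => rfl
  let π : D.B' ⊗[R] M →ₗ[D.B'] D.B' ⊗[S] M := TensorProduct.mapOfCompatibleSMul S R D.B' D.B' M
  let π2 : D.B ⊗[R] M →ₗ[D.B] D.B ⊗[S] M := TensorProduct.mapOfCompatibleSMul S R D.B D.B M
  let π' : TB (D.restr R) M →+ TB D M := π.toAddMonoidHom
  have hπ : ∀ (r : R) (z : TB (D.restr R) M), π' (r • z) = algebraMap R S r • π' z :=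
    fun r z => π.map_smul (D.b (algebraMap R S r)) z
  let T : M →+ TB D M := π'.comp s.T.toAddMonoidHom
  have hT : ∀ (r : R) m, T (algebraMap R S r • m) = algebraMap R S r • T m := by
    intro r m
    rw [algebraMap_smul]
    change π' (s.T (r • m)) = _
    rw [map_smul, hπ]; rfl
  refine ⟨{ T := { toFun := T, map_add' := map_add T, map_smul' := ?_ }, h := ?_ }⟩
  · intro x m
    rw [RingHom.id_apply]
    obtain ⟨⟨r, w⟩, hw⟩ := IsLocalization.surj W x
    obtain ⟨u, hu⟩ := (IsLocalization.map_units S w)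
    have hw' : (u : S) * x = algebraMap R S r := by rw [hu, mul_comm]; exact hw
    have h1 : (u : S) • T (x • m) = (u : S) • (x • T m) := by
      rw [hu, ← hT, ← hu, smul_smul, smul_smul, hw', hT]
    have h2 := congrArg (fun z => (↑u⁻¹ : S) • z) h1
    simpa [smul_smul] using h2
  · intro m
    have h1 := s.h m
    have h2 : ∀ z : D.B' ⊗[R] M, LinearMap.rTensor M D.ε.toLinearMap (π z) =
        π2 (LinearMap.rTensor M (D.ε.restrictScalars R).toLinearMap z) := by
      intro z
      induction z using TensorProduct.induction_on with
      | zero => simp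
      | tmul x y => rfl
      | add x y hx hy => simp only [map_add, hx, hy]
    refine (h2 (s.T m)).trans ?_
    exact congrArg π2 h1

lemma TStr.smul_comm' {D : TDat S} {M : Type} [AddCommGroup M] [Module S M] (s : TStr D M) (x : S)
    (hx : D.b x = algebraMap S D.B' x) : s.Comm s (LinearMap.lsmul S M x) := by
  intro m
  have h1 : LinearMap.lsmul S M x = x • LinearMap.id := by ext; simp
  rw [h1, TB.map_smul_fun, ← hx]
  change s.T (x • m) = _
  rw [map_smul]; rfl

/-- the good data for a coordinate -/
def TDat.Good (D : TDat S) (x : S) (l : List S) (n : ℕ) : Prop :=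
  D.N = n ∧ Module.FaithfullyFlat S D.B ∧ D.b x = algebraMap S D.B' x + D.t ∧
    ∀ y ∈ l, y ≠ x → D.b y = algebraMap S D.B' y

lemma good_div {D : TDat S} {x : S} {l : List S} {n : ℕ} (hD : D.Good x l n)
    {M : Type} [AddCommGroup M] [Module S M] (s : TStr D M) (y : M) (hy : x ^ n • y = 0) :
    ∃ u : M, x • u = y := by
  obtain ⟨hN, hff, hbx, -⟩ := hD
  let Q := M ⧸ LinearMap.range (LinearMap.lsmul S M x)
  let q : M →ₗ[S] Q := (LinearMap.range (LinearMap.lsmul S M x)).mkQ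
  have hq0 : ∀ z : TB D M, algebraMap S D.B' x • TB.map D q z = 0 := by
    intro z
    rw [← TB.map_smul_fun, ← TB.map_comp]
    have : (x • LinearMap.id) ∘ₗ q = 0 := by
      apply LinearMap.ext; intro m
      change x • q m = 0
      rw [← map_smul]
      exact (Submodule.Quotient.mk_eq_zero _).2 ⟨m, rfl⟩
    rw [this]
    change LinearMap.baseChange D.B' 0 _ = 0
    rw [LinearMap.baseChange_zero]; rfl
  have hk : ∀ k : ℕ, D.b x ^ k • TB.map D q (s.T y) = D.t ^ k • TB.map D q (s.T y) := by
    intro k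
    induction k with
    | zero => simp
    | succ k ih =>
      have h5 : algebraMap S D.B' x • D.t ^ k • TB.map D q (s.T y) = 0 := by
        rw [← map_smul, hq0]
      rw [pow_succ', mul_smul, ih, hbx, add_smul, h5, zero_add, pow_succ', mul_smul]
  have h1 : D.t ^ D.N • TB.map D q (s.T y) = 0 := by
    rw [hN, ← hk, ← map_smul, ← map_pow]
    have : D.b (x ^ n) • s.T y = s.T (x ^ n • y) := by rw [map_smul]; rfl
    rw [this, hy, map_zero, map_zero]
  have h2 := TB.cc_map D (TB.map D q (s.T y))
  rw [h1, map_zero, TB.aug_map, s.h, LinearMap.lTensor_tmul] at h2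
  have h3 : q y = 0 := by
    exact (Module.FaithfullyFlat.one_tmul_eq_zero_iff (A := D.B) (R := S) Q (q y)).1 h2.symm
  obtain ⟨u, hu⟩ := (Submodule.Quotient.mk_eq_zero _).1 h3
  exact ⟨u, hu⟩

theorem ppcond_of_good : ∀ (l : List S) (_ : l.Nodup) (M : Type) [AddCommGroup M] [Module S M]
    (_ : ∀ x ∈ l, ∀ n, ∃ D : TDat S, D.Good x l n ∧ HasT D M), PPcond S l M
  | [], _, _, _, _, _ => trivial
  | x :: l, hl, M, _, _, h => by
    rw [List.nodup_cons] at hl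
    refine ⟨?_, ?_, ?_⟩
    · intro y n hy
      obtain ⟨D, hD, ⟨s⟩⟩ := h x (by simp) n
      exact good_div hD s y hy
    · refine ppcond_of_good l hl.2 _ ?_
      intro z hz n
      obtain ⟨D, hD, ⟨s⟩⟩ := h z (by simp [hz]) n
      have hne : x ≠ z := fun e => hl.1 (e ▸ hz)
      exact ⟨D, ⟨hD.1, hD.2.1, hD.2.2.1, fun y hy => hD.2.2.2 y (by simp [hy])⟩,
        ⟨TStr.ker (s.smul_comm' x (hD.2.2.2 x (by simp) hne))⟩⟩
    · refine ppcond_of_good l hl.2 _ ?_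
      intro z hz n
      obtain ⟨D, hD, ⟨s⟩⟩ := h z (by simp [hz]) n
      have hne : x ≠ z := fun e => hl.1 (e ▸ hz)
      exact ⟨D, ⟨hD.1, hD.2.1, hD.2.2.1, fun y hy => hD.2.2.2 y (by simp [hy])⟩,
        ⟨TStr.coker (s.smul_comm' x (hD.2.2.2 x (by simp) hne))⟩⟩

end TaylorB

open scoped TensorProduct

section CohenA

lemma ofList_reverse {S : Type*} [CommRing S] (l : List S) : Ideal.ofList l.reverse = Ideal.ofList l := by
  unfold Ideal.ofList
  congr 1; ext; simp

lemma regRev_iff {S : Type} [CommRing S] (l : List S) :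
    RegRev S l ↔ RingTheory.Sequence.IsWeaklyRegular S l.reverse := by
  induction l with
  | nil => simp [RegRev]
  | cons x l ih =>
    rw [List.reverse_cons, RingTheory.Sequence.isWeaklyRegular_append_iff, ← ih,
      RingTheory.Sequence.isWeaklyRegular_singleton_iff]
    have h : (Ideal.ofList l.reverse • (⊤ : Submodule S S)) = Ideal.ofList l := by
      rw [ofList_reverse, smul_eq_mul, Ideal.mul_top]
    rw [h]
    exact and_comm

lemma regRev_flat {S B : Type} [CommRing S] [CommRing B] [Algebra S B] [Module.Flat S B] (l : List S)
    (h : RegRev S l) : RegRev B (l.map (algebraMap S B)) := by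
  rw [regRev_iff] at h ⊢
  rw [← List.map_reverse]
  exact h.of_flat

lemma ker_eq_bot_of_regRev {A : Type*} {B : Type} [CommRing A] [CommRing B] [IsNoetherianRing A] [IsLocalRing A]
    (ψ : A →+* B) (hψ : Function.Surjective ψ) (l : List A)
    (hl : ∀ a ∈ l, a ∈ IsLocalRing.maximalIdeal A) (hreg : RegRev B (l.map ψ))
    (hker : RingHom.ker ψ ≤ Ideal.ofList l) : RingHom.ker ψ = ⊥ := by
  induction l with
  | nil => simpa using hker
  | cons a l ih =>
    obtain ⟨h1, h2⟩ := hreg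
    refine ih (fun b hb => hl b (by simp [hb])) h2 ?_
    refine Submodule.le_of_le_smul_of_le_jacobson_bot (I := IsLocalRing.maximalIdeal A) (IsNoetherian.noetherian _)
      (IsLocalRing.maximalIdeal_le_jacobson _) ?_
    intro f hf
    have h3 := hker hf
    rw [Ideal.ofList_cons, Submodule.mem_sup] at h3
    obtain ⟨y, hy, z, hz, rfl⟩ := h3
    obtain ⟨g, rfl⟩ := Ideal.mem_span_singleton'.1 hy
    have h4 : ψ a * ψ g + ψ z = 0 := by
      rw [RingHom.mem_ker] at hf; rw [← hf]; simp [mul_comm]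
    have hz' : ψ z ∈ Ideal.ofList (l.map ψ) := by
      rw [← Ideal.map_ofList]; exact Ideal.mem_map_of_mem _ hz
    have h5 : ψ g ∈ Ideal.ofList (l.map ψ) := by
      rw [← Ideal.Quotient.eq_zero_iff_mem]
      apply h1
      simp only [smul_zero]
      change Ideal.Quotient.mk _ (ψ a * ψ g) = 0
      rw [Ideal.Quotient.eq_zero_iff_mem, eq_neg_of_add_eq_zero_left h4]
      exact neg_mem hz'
    rw [← Ideal.map_ofList, Ideal.mem_map_iff_of_surjective _ hψ] at h5
    obtain ⟨u, hu, hug⟩ := h5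
    have h6 : a * (g - u) ∈ IsLocalRing.maximalIdeal A • RingHom.ker ψ :=
      Submodule.smul_mem_smul (hl a (by simp)) (by rw [RingHom.mem_ker, map_sub, hug, sub_self])
    have : g * a + z = (u * a + z) + a * (g - u) := by ring
    rw [this]
    exact Submodule.add_mem_sup (Ideal.add_mem _ (Ideal.mul_mem_right _ _ hu) hz) h6

end CohenA

open scoped TensorProduct

section SmoothField
open Algebra MvPolynomial

theorem formallySmooth_of_perfect (F k : Type) [Field F] [PerfectField F] [Field k] [Algebra F k] :
    Algebra.FormallySmooth F k := by
  refine ⟨inferInstance, ?_⟩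
  rw [Extension.subsingleton_h1Cotangent, injective_iff_map_eq_zero]
  intro z hz
  obtain ⟨⟨f, hf⟩, rfl⟩ := Extension.Cotangent.mk_surjective z
  let K := IntermediateField.adjoin F ((MvPolynomial.vars (show MvPolynomial k F from f) : Finset k) : Set k)
  have hK : Algebra.EssFiniteType F K := IntermediateField.essFiniteType_iff.2 ⟨_, rfl⟩
  have hs : Algebra.FormallySmooth F K := Algebra.FormallySmooth.of_perfectField
  obtain ⟨f0, hf0⟩ := MvPolynomial.exists_rename_eq_of_vars_subset_range (show MvPolynomial k F from f)
    (algebraMap K k) (algebraMap K k).injective (by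
      intro a ha
      exact ⟨⟨a, IntermediateField.subset_adjoin F _ ha⟩, rfl⟩)
  let P0 := Generators.self F K
  let P := Generators.self F k
  let h : P0.Hom P := Generators.defaultHom P0 P
  have hval : ∀ i, h.val i = X (algebraMap K k i) := fun i => rfl
  have hto : ∀ q, h.toAlgHom q = rename (algebraMap K k) q := by
    intro q
    have : h.toAlgHom = (rename (algebraMap K k) : MvPolynomial K F →ₐ[F] MvPolynomial k F) := by
      apply MvPolynomial.algHom_ext
      intro i
      rw [rename_X, ← hval]
      exact aeval_X _ _
    exact DFunLike.congr_fun this q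
  have hf0k : f0 ∈ P0.toExtension.ker := by
    have h1 : aeval P.val (show MvPolynomial k F from f) = 0 := by
      have : f ∈ P.ker := hf
      rw [Generators.ker_eq_ker_aeval_val] at this
      exact this
    change f0 ∈ P0.ker
    rw [Generators.ker_eq_ker_aeval_val, RingHom.mem_ker]
    apply (algebraMap K k).injective
    rw [map_zero, ← h1, ← hf0, aeval_rename]
    rw [← MvPolynomial.aeval_algebraMap_apply]
    rfl
  have hmap : Extension.Cotangent.map h.toExtensionHom (Extension.Cotangent.mk ⟨f0, hf0k⟩) =
      Extension.Cotangent.mk ⟨f, hf⟩ := by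
    rw [Extension.Cotangent.map_mk]
    congr 1
    exact Subtype.ext ((hto f0).trans hf0)
  have hinj : ∀ w, Extension.CotangentSpace.map h.toExtensionHom w = 0 → w = 0 := by
    intro w hw
    apply P0.cotangentSpaceBasis.repr.injective
    rw [map_zero]
    refine Finsupp.ext fun i => ?_
    have h2 : ∀ w i, P.cotangentSpaceBasis.repr (Extension.CotangentSpace.map h.toExtensionHom w) (algebraMap K k i)
        = algebraMap K k (P0.cotangentSpaceBasis.repr w i) := by
      intro w i
      have hmem : w ∈ Submodule.span K (Set.range P0.cotangentSpaceBasis) := by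
        rw [P0.cotangentSpaceBasis.span_eq]; trivial
      induction hmem using Submodule.span_induction with
      | zero => simp
      | add x y _ _ hx hy => simp only [map_add, Finsupp.add_apply, hx, hy]
      | smul a x _ hx =>
        have e1 : Extension.CotangentSpace.map h.toExtensionHom (a • x) =
            algebraMap K k a • Extension.CotangentSpace.map h.toExtensionHom x := by
          rw [map_smul, algebraMap_smul]
        have e2 : P0.cotangentSpaceBasis.repr (a • x) = a • P0.cotangentSpaceBasis.repr x :=
          P0.cotangentSpaceBasis.repr.map_smul a x
        have e3 := P.cotangentSpaceBasis.repr.map_smul (algebraMap K k a)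
          (Extension.CotangentSpace.map h.toExtensionHom x)
        rw [e1, e2, e3, Finsupp.smul_apply, Finsupp.smul_apply, smul_eq_mul, smul_eq_mul, map_mul, hx]
      | mem x hx =>
        classical
        obtain ⟨j, rfl⟩ := hx
        rw [Generators.repr_CotangentSpaceMap, hval, pderiv_X, Module.Basis.repr_self]
        by_cases hij : j = i
        · subst hij; simp
        · rw [Finsupp.single_eq_of_ne (Ne.symm hij), Pi.single_eq_of_ne]
          · simp
          · exact fun e => hij ((algebraMap K k).injective e)
    apply (algebraMap K k).injective
    rw [← h2, hw]; simp
  have h3 : P0.toExtension.cotangentComplex (Extension.Cotangent.mk ⟨f0, hf0k⟩) = 0 := by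
    apply hinj
    rw [Extension.CotangentSpace.map_cotangentComplex, hmap]
    exact hz
  have h4 := (Extension.subsingleton_h1Cotangent P0.toExtension).1 hs.subsingleton_h1Cotangent
  have h5 := (injective_iff_map_eq_zero _).1 h4 _ h3
  rw [← hmap, h5, map_zero]

end SmoothField

open scoped TensorProduct

section CohenB

lemma exists_lift_pow {σ : Type} [Finite σ] {k B : Type} [CommRing k] [CommRing B] (I : Ideal B) [IsAdicComplete I B]
    (g : MvPolynomial σ k →+* B) (hg : ∀ j, g (MvPolynomial.X j) ∈ I) :
    ∃ ψ : MvPowerSeries σ k →+* B, ∀ p : MvPolynomial σ k, ψ p = g p := by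
  have h1 : ∀ n, (MvPolynomial.idealOfVars σ k)^n ≤ (I^n).comap g := by
    intro n
    refine le_trans ?_ (Ideal.le_comap_pow g n)
    apply Ideal.pow_right_mono
    unfold MvPolynomial.idealOfVars
    rw [Ideal.span_le]
    rintro _ ⟨j, rfl⟩
    exact hg j
  let f : ∀ n, MvPowerSeries σ k →+* B ⧸ I^n := fun n =>
    (Ideal.quotientMap (I^n) g (h1 n)).comp
      ((AdicCompletion.evalₐ (MvPolynomial.idealOfVars σ k) n).toRingHom.comp
        (MvPowerSeries.toAdicCompletion σ k).toRingHom)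
  have hf : ∀ {m n : ℕ} (hle : m ≤ n), (Ideal.Quotient.factorPow I hle).comp (f n) = f m := by
    intro m n hle
    ext x
    obtain ⟨y, hy⟩ := Ideal.Quotient.mk_surjective (AdicCompletion.evalₐ (MvPolynomial.idealOfVars σ k) n
      (MvPowerSeries.toAdicCompletion σ k x))
    have h2 : AdicCompletion.evalₐ (MvPolynomial.idealOfVars σ k) m
      (MvPowerSeries.toAdicCompletion σ k x) = Ideal.Quotient.mk _ y := by
      obtain ⟨z, hz⟩ := AdicCompletion.mk_surjective _ _ (MvPowerSeries.toAdicCompletion σ k x)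
      rw [← hz, AdicCompletion.evalₐ_mk] at hy ⊢
      have h5 := z.2 hle
      rw [SModEq.sub_mem] at h5
      rw [Ideal.Quotient.eq] at hy ⊢
      have h6 : z.1 m - z.1 n ∈ (MvPolynomial.idealOfVars σ k)^m := by simpa using h5
      have h7 := sub_mem h6 (Ideal.pow_le_pow_right hle hy)
      have h8 : z.1 m - z.1 n - (y - z.1 n) = z.1 m - y := by ring
      rw [h8] at h7
      exact h7
    change Ideal.Quotient.factorPow I hle (Ideal.quotientMap (I^n) g (h1 n) (AdicCompletion.evalₐ (MvPolynomial.idealOfVars σ k) n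
      (MvPowerSeries.toAdicCompletion σ k x))) = Ideal.quotientMap (I^m) g (h1 m) (AdicCompletion.evalₐ (MvPolynomial.idealOfVars σ k) m
      (MvPowerSeries.toAdicCompletion σ k x))
    rw [h2, ← hy]
    rfl
  refine ⟨IsAdicComplete.liftRingHom I f hf, fun p => ?_⟩
  rw [IsHausdorff.eq_iff_smodEq (I := I)]
  intro n
  have h3 := IsAdicComplete.mk_liftRingHom I f hf n p
  have h4 : f n p = Ideal.Quotient.mk (I^n) (g p) := by
    change Ideal.quotientMap (I^n) g (h1 n) (AdicCompletion.evalₐ (MvPolynomial.idealOfVars σ k) n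
      (MvPowerSeries.toAdicCompletion σ k p)) = _
    rw [MvPowerSeries.toAdicCompletion_coe]
    rw [AdicCompletion.evalₐ_of]
    simp
  rw [h4] at h3
  rw [SModEq.sub_mem]
  rw [Ideal.Quotient.eq] at h3
  simpa using h3

lemma mem_span_X {σ k : Type} [DecidableEq σ] [CommRing k] (s : Finset σ) : ∀ (f : MvPowerSeries σ k)
    (_ : ∀ m : σ →₀ ℕ, (∀ j ∈ s, m j = 0) → MvPowerSeries.coeff m f = 0),
    f ∈ Ideal.span (MvPowerSeries.X '' (s : Set σ)) := by
  induction s using Finset.induction_on with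
  | empty =>
    intro f hf
    have : f = 0 := by ext m; simpa using hf m (by simp)
    rw [this]; exact zero_mem _
  | insert a s ha ih =>
    intro f hf
    let f1 : MvPowerSeries σ k := fun m => if m a = 0 then 0 else MvPowerSeries.coeff m f
    let f2 : MvPowerSeries σ k := fun m => if m a = 0 then MvPowerSeries.coeff m f else 0
    have e : f = f1 + f2 := by
      ext m
      rw [map_add]
      change _ = (if m a = 0 then 0 else MvPowerSeries.coeff m f) +
        (if m a = 0 then MvPowerSeries.coeff m f else 0)
      split_ifs <;> simp
    rw [e]
    refine add_mem ?_ ?_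
    · have : MvPowerSeries.X a ∣ f1 := by
        rw [MvPowerSeries.X_dvd_iff]
        intro m hm
        exact if_pos hm
      obtain ⟨g, hg⟩ := this
      rw [hg]
      exact Ideal.mul_mem_right _ _ (Ideal.subset_span ⟨a, by simp, rfl⟩)
    · refine Ideal.span_mono (Set.image_mono (by simp)) (ih f2 ?_)
      intro m hm
      change (if m a = 0 then MvPowerSeries.coeff m f else 0) = 0
      split_ifs with h
      · refine hf m ?_
        intro j hj
        rcases Finset.mem_insert.1 hj with rfl | hj
        · exact h
        · exact hm j hj
      · rfl

theorem cohen_iso (F : Type) [Field F] [PerfectField F] {S : Type} [CommRing S] [Algebra F S] [IsNoetherianRing S]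
    [IsLocalRing S] (l : List S) (hl : RegRev S l) (hm : Ideal.ofList l = IsLocalRing.maximalIdeal S) :
    ∃ Ψ : MvPowerSeries (Fin l.length) (IsLocalRing.ResidueField S) ≃+*
      AdicCompletion (IsLocalRing.maximalIdeal S) S,
      ∀ j : Fin l.length, Ψ (MvPowerSeries.X j) = algebraMap S _ (l.get j) := by
  let k := IsLocalRing.ResidueField S
  let n := IsLocalRing.maximalIdeal S
  let B := AdicCompletion n S
  have : Algebra.FormallySmooth F k := formallySmooth_of_perfect F k
  obtain ⟨g, hg⟩ := Algebra.FormallySmooth.exists_adicCompletionEvalOneₐ_comp_eq (R := F) (A := k) (S := S) (I := n)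
    (AlgHom.id F k : k →ₐ[F] S ⧸ n)
  let G : MvPolynomial (Fin l.length) k →+* B := MvPolynomial.eval₂Hom (g : k →+* B) (fun j => algebraMap S B (l.get j))
  have hx : ∀ j : Fin l.length, algebraMap S B (l.get j) ∈ IsLocalRing.maximalIdeal B := by
    intro j
    rw [AdicCompletion.maximalIdeal_eq_map]
    apply Ideal.mem_map_of_mem
    rw [← hm]
    exact Ideal.subset_span (List.get_mem _ _)
  obtain ⟨ψ, hψ⟩ := exists_lift_pow (IsLocalRing.maximalIdeal B) G (fun j => by simpa [G] using hx j)
  have hψX : ∀ j : Fin l.length, ψ (MvPowerSeries.X j) = algebraMap S B (l.get j) := by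
    intro j
    have := hψ (MvPolynomial.X j)
    simpa [G] using this
  have hψC : ∀ a : k, ψ (MvPowerSeries.C a) = g a := by
    intro a
    have := hψ (MvPolynomial.C a)
    simpa [G] using this
  have hmap : Ideal.map ψ (Ideal.span (Set.range MvPowerSeries.X)) = IsLocalRing.maximalIdeal B := by
    have e0 : Ideal.map (algebraMap S B) n = Ideal.map (algebraMap S B) (Ideal.ofList l) :=
      congrArg _ hm.symm
    rw [AdicCompletion.maximalIdeal_eq_map]
    refine Eq.trans ?_ e0.symm
    rw [Ideal.map_ofList, Ideal.map_span, ← Set.range_comp]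
    unfold Ideal.ofList
    congr 1
    ext y
    constructor
    · rintro ⟨j, rfl⟩
      exact List.mem_map.2 ⟨l.get j, List.get_mem _ _, (hψX j).symm⟩
    · intro hy
      obtain ⟨a, ha, rfl⟩ := List.mem_map.1 hy
      obtain ⟨j, rfl⟩ := List.mem_iff_get.1 ha
      exact ⟨j, hψX j⟩
  have hsurj : Function.Surjective ψ := by
    have : IsHausdorff (Ideal.map ψ (Ideal.span (Set.range MvPowerSeries.X))) B := by
      rw [hmap]; infer_instance
    apply surjective_of_mk_map_comp_surjective (I := Ideal.span (Set.range MvPowerSeries.X)) ψ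
    intro y
    obtain ⟨y, rfl⟩ := Ideal.Quotient.mk_surjective y
    have ⟨a, ha⟩ : ∃ a : k, a = AdicCompletion.evalOneₐ n y := ⟨_, rfl⟩
    refine ⟨MvPowerSeries.C a, ?_⟩
    rw [RingHom.comp_apply, hψC, Ideal.Quotient.eq, hmap]
    have h5 : AdicCompletion.evalOneₐ n (g a) = AdicCompletion.evalOneₐ n y :=
      Eq.trans (b := (a : S ⧸ n)) (DFunLike.congr_fun hg a) ha
    have h6 : AdicCompletion.evalOneₐ n (g a - y) = 0 := by
      rw [map_sub, h5, sub_self]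
    rw [IsLocalRing.mem_maximalIdeal, mem_nonunits_iff]
    intro hu
    have h7 := hu.map (AdicCompletion.evalOneₐ n)
    rw [h6] at h7
    have : Nontrivial (S ⧸ n) := inferInstanceAs (Nontrivial k)
    exact not_isUnit_zero h7
  have hinj : RingHom.ker ψ = ⊥ := by
    refine ker_eq_bot_of_regRev ψ hsurj (List.ofFn MvPowerSeries.X) ?_ ?_ ?_
    · intro a ha
      obtain ⟨j, rfl⟩ := (List.mem_ofFn' _ _).1 ha
      rw [IsLocalRing.mem_maximalIdeal, mem_nonunits_iff, MvPowerSeries.isUnit_iff_constantCoeff]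
      simp
    · have h7 : (List.ofFn MvPowerSeries.X).map ψ = l.map (algebraMap S B) := by
        rw [List.map_ofFn]
        have : (ψ ∘ MvPowerSeries.X) = (fun j => algebraMap S B (l.get j)) := funext hψX
        rw [this]
        have h8 : (fun j => algebraMap S B (l.get j)) = algebraMap S B ∘ l.get := rfl
        rw [h8, ← List.map_ofFn, List.ofFn_get]
      rw [h7]
      exact regRev_flat l hl
    · intro f hf
      have h9 : f ∈ IsLocalRing.maximalIdeal (MvPowerSeries (Fin l.length) k) := by
        rw [IsLocalRing.mem_maximalIdeal, mem_nonunits_iff]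
        intro h
        have := h.map ψ
        rw [RingHom.mem_ker.1 hf] at this
        simp at this
      have h10 : MvPowerSeries.constantCoeff f = 0 := by
        by_contra h
        rw [IsLocalRing.mem_maximalIdeal, mem_nonunits_iff, MvPowerSeries.isUnit_iff_constantCoeff] at h9
        exact h9 (isUnit_iff_ne_zero.2 h)
      have h11 := mem_span_X Finset.univ f (fun m hm => by
        have : m = 0 := Finsupp.ext fun j => hm j (Finset.mem_univ j)
        rw [this]; exact h10)
      refine Ideal.span_mono ?_ h11
      rintro _ ⟨j, _, rfl⟩
      exact (List.mem_ofFn' _ _).2 ⟨j, rfl⟩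
  exact ⟨RingEquiv.ofBijective ψ ⟨(RingHom.injective_iff_ker_eq_bot ψ).2 hinj, hsurj⟩, hψX⟩

end CohenB

open scoped TensorProduct

section TruncK

theorem exists_trunc (k : Type) [Field k] (N : ℕ) : ∃ (K : Type) (_ : CommRing K) (_ : Algebra k K)
    (τ : K) (ε : K →ₐ[k] k) (c : K →ₗ[k] k) (_ : K ≃ₗ[k] (Fin (N+1) → k)),
    τ^(N+1) = 0 ∧ ε τ = 0 ∧ (∀ z, ε z = 0 → ∃ w, z = τ * w) ∧ (∀ z, c (τ^N * z) = ε z) := by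
  let f : Polynomial k := Polynomial.X^(N+1)
  have hf : f.Monic := Polynomial.monic_X_pow _
  have hdeg : f.natDegree = N+1 := Polynomial.natDegree_X_pow _
  let pb := AdjoinRoot.powerBasis' hf
  have hdim : pb.dim = N+1 := by rw [AdjoinRoot.powerBasis'_dim, hdeg]
  let b := pb.basis.reindex (finCongr hdim)
  have hb : ∀ i, b i = (AdjoinRoot.root f)^(i:ℕ) := by
    intro i
    rw [Module.Basis.reindex_apply, PowerBasis.coe_basis, AdjoinRoot.powerBasis'_gen]
    rfl
  have hroot : (AdjoinRoot.root f)^(N+1) = 0 := by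
    have := AdjoinRoot.mk_self (f := f)
    rw [← AdjoinRoot.mk_X, ← map_pow]
    exact this
  let ε : AdjoinRoot f →ₐ[k] k := AdjoinRoot.liftAlgHom f (Algebra.ofId k k) 0 (by simp [f])
  have hε : ∀ g, ε (AdjoinRoot.mk f g) = g.eval 0 := by
    intro g
    simp only [ε, AdjoinRoot.liftAlgHom_mk]
    rfl
  refine ⟨AdjoinRoot f, inferInstance, inferInstance, AdjoinRoot.root f, ε,
    b.coord (Fin.last N), b.equivFun, hroot, ?_, ?_, ?_⟩
  · rw [← AdjoinRoot.mk_X, hε]; simp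
  · intro z hz
    obtain ⟨g, rfl⟩ := AdjoinRoot.mk_surjective z
    rw [hε] at hz
    have hdvd : Polynomial.X ∣ g := by
      rwa [Polynomial.X_dvd_iff, Polynomial.coeff_zero_eq_eval_zero]
    obtain ⟨h, rfl⟩ := hdvd
    exact ⟨AdjoinRoot.mk f h, by rw [map_mul, AdjoinRoot.mk_X]⟩
  · intro z
    obtain ⟨g, rfl⟩ := AdjoinRoot.mk_surjective z
    rw [hε]
    have e : AdjoinRoot.root f ^ N * AdjoinRoot.mk f g = g.eval 0 • b (Fin.last N) := by
      conv_lhs => rw [← Polynomial.divX_mul_X_add g]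
      rw [map_add, map_mul, AdjoinRoot.mk_X, mul_add, mul_left_comm, ← pow_succ, hroot, mul_zero, zero_add,
        hb, Polynomial.coeff_zero_eq_eval_zero, Algebra.smul_def, mul_comm]
      rfl
    rw [e]
    simp

variable {σ k K : Type} [CommRing k] [CommRing K] [Algebra k K]

noncomputable def cmap (c : K →ₗ[k] k) : MvPowerSeries σ K →ₗ[MvPowerSeries σ k] MvPowerSeries σ k where
  toFun z := fun m => c (MvPowerSeries.coeff m z)
  map_add' x y := by
    funext m
    exact (congrArg c (map_add _ x y)).trans (map_add c _ _)
  map_smul' f z := by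
    classical
    refine MvPowerSeries.ext fun m => ?_
    suffices key : ∀ y : MvPowerSeries σ k, (∀ m, MvPowerSeries.coeff m y = c (MvPowerSeries.coeff m z)) →
      c (MvPowerSeries.coeff m (f • z)) = MvPowerSeries.coeff m (f * y) from key _ (fun _ => rfl)
    intro y hy
    rw [MvPowerSeries.coeff_mul]
    rw [Algebra.smul_def, MvPowerSeries.coeff_mul, map_sum]
    refine Finset.sum_congr rfl fun x _ => ?_
    have : MvPowerSeries.coeff x.1 (algebraMap (MvPowerSeries σ k) (MvPowerSeries σ K) f) =
      algebraMap k K (MvPowerSeries.coeff x.1 f) := by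
      rw [MvPowerSeries.algebraMap_apply'', MvPowerSeries.coeff_map]
    rw [this, ← Algebra.smul_def, map_smul, hy]
    rfl

lemma coeff_cmap (c : K →ₗ[k] k) (z : MvPowerSeries σ K) (m) :
    MvPowerSeries.coeff m (cmap c z) = c (MvPowerSeries.coeff m z) := rfl

lemma flat_pow {n : ℕ} (e : K ≃ₗ[k] (Fin n → k)) :
    Module.Flat (MvPowerSeries σ k) (MvPowerSeries σ K) := by
  let L : MvPowerSeries σ K →ₗ[MvPowerSeries σ k] (Fin n → MvPowerSeries σ k) :=
    LinearMap.pi fun i => cmap ((LinearMap.proj i).comp e.toLinearMap)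
  have hL : Function.Bijective L := by
    constructor
    · rw [injective_iff_map_eq_zero]
      intro z hz
      refine MvPowerSeries.ext fun m => ?_
      apply e.injective
      rw [map_zero, map_zero]
      funext i
      have := congrArg (MvPowerSeries.coeff m) (congrFun hz i)
      exact this
    · intro y
      refine ⟨fun m => e.symm (fun i => MvPowerSeries.coeff m (y i)), ?_⟩
      funext i
      refine MvPowerSeries.ext fun m => ?_
      change e (e.symm (fun i => MvPowerSeries.coeff m (y i))) i = _
      rw [e.apply_symm_apply]
  exact Module.Flat.of_linearEquiv (LinearEquiv.ofBijective L hL)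

theorem exists_good {S k : Type} [CommRing S] [Field k] {d : ℕ} (φ : S →+* MvPowerSeries (Fin d) k)
    (hφ : φ.FaithfullyFlat) (x : Fin d → S) (hx : ∀ i, φ (x i) = MvPowerSeries.X i)
    (j : Fin d) (N : ℕ) : ∃ D : TDat S, D.N = N ∧ Module.FaithfullyFlat S D.B ∧
      D.b (x j) = algebraMap S D.B' (x j) + D.t ∧
      ∀ i, i ≠ j → D.b (x i) = algebraMap S D.B' (x i) := by
  obtain ⟨K, _, _, τ, ε, c, e, h1, h2, h3, h4⟩ := exists_trunc k N
  let A := MvPowerSeries (Fin d) k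
  let B' := MvPowerSeries (Fin d) K
  let iA : Algebra S A := φ.toAlgebra
  let iB : Algebra S B' := ((algebraMap A B').comp φ).toAlgebra
  have : IsScalarTower S A B' := IsScalarTower.of_algebraMap_eq' rfl
  have hff : Module.FaithfullyFlat S A := hφ
  have : Module.Flat A B' := flat_pow e
  have : Module.Flat S B' := Module.Flat.trans S A B'
  let a : Fin d → B' := fun i => MvPowerSeries.X i + (if i = j then MvPowerSeries.C τ else 0)
  have ha : MvPowerSeries.HasSubst a := MvPowerSeries.hasSubst_of_constantCoeff_nilpotent fun i => by
    simp only [a, map_add, MvPowerSeries.constantCoeff_X, zero_add]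
    split_ifs
    · exact ⟨N+1, by simpa using h1⟩
    · simp
  let sub : A →ₐ[k] B' := MvPowerSeries.substAlgHom ha
  have hεcoe : ∀ r, (ε : K →+* k) (algebraMap k K r) = r := fun r => by simp
  have hεmap : ∀ f : A, MvPowerSeries.map (ε : K →+* k) (algebraMap A B' f) = f := by
    intro f
    ext m
    rw [MvPowerSeries.coeff_map, MvPowerSeries.algebraMap_apply'', MvPowerSeries.coeff_map, hεcoe]
  have hsub : ∀ f : A, MvPowerSeries.map (ε : K →+* k) (sub f) = f := by
    intro f
    have e1 : sub f = MvPowerSeries.subst a f := congrFun (MvPowerSeries.coe_substAlgHom ha) f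
    have e2 : (fun i => MvPowerSeries.map (ε : K →+* k) (a i)) = MvPowerSeries.X := by
      funext i
      simp only [a, map_add, MvPowerSeries.map_X]
      split_ifs
      · rw [MvPowerSeries.map_C]
        change _ + MvPowerSeries.C (ε τ) = _
        rw [h2, map_zero, add_zero]
      · rw [map_zero, add_zero]
    rw [e1]
    refine Eq.trans ?_ (congrFun MvPowerSeries.subst_self f)
    rw [← e2]
    refine MvPowerSeries.ext fun m => ?_
    rw [MvPowerSeries.coeff_subst (ha.map _), MvPowerSeries.coeff_map, MvPowerSeries.coeff_subst ha]
    have e3 : ∀ r, (ε : K →+* k) r = (ε : K →+* k).toAddMonoidHom r := fun _ => rfl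
    rw [e3, AddMonoidHom.map_finsum _ (MvPowerSeries.coeff_subst_finite ha _ _)]
    refine finsum_congr fun q => ?_
    change ε _ = _
    rw [map_smul]
    congr 1
    change (ε : K →+* k) _ = _
    rw [← MvPowerSeries.coeff_map]
    simp [Finsupp.prod]
  have hker : ∀ z : B', MvPowerSeries.map (ε : K →+* k) z = 0 → ∃ w : B', z = MvPowerSeries.C τ * w := by
    intro z hz
    have : ∀ m, ∃ w, MvPowerSeries.coeff m z = τ * w := fun m => h3 _ (by
      have := congrArg (MvPowerSeries.coeff m) hz
      simpa using this)
    choose w hw using this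
    have ⟨w', hw'⟩ : ∃ w' : B', ∀ m, MvPowerSeries.coeff m w' = w m := ⟨w, fun _ => rfl⟩
    refine ⟨w', MvPowerSeries.ext fun m => ?_⟩
    rw [MvPowerSeries.coeff_C_mul, hw, hw']
  let D : TDat S :=
    { B' := B'
      B := A
      ε := { MvPowerSeries.map (ε : K →+* k) with commutes' := fun r => hεmap (φ r) }
      c := (cmap c).restrictScalars S
      t := MvPowerSeries.C τ
      N := N
      b := sub.toRingHom.comp φ
      ht := by rw [← map_pow, h1, map_zero]
      hε := by
        change MvPowerSeries.map (ε : K →+* k) (MvPowerSeries.C τ) = 0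
        rw [MvPowerSeries.map_C]
        change MvPowerSeries.C (ε τ) = 0
        rw [h2, map_zero]
      hb := fun r => by
        obtain ⟨w, hw⟩ := hker (sub (φ r) - algebraMap A B' (φ r)) (by
          rw [map_sub, hsub, hεmap, sub_self])
        exact ⟨w, by rw [← hw]; exact (add_sub_cancel _ _).symm⟩
      hc := fun z => by
        refine MvPowerSeries.ext fun m => ?_
        change c (MvPowerSeries.coeff m (MvPowerSeries.C τ ^ N * z)) = ε (MvPowerSeries.coeff m z)
        rw [← map_pow, MvPowerSeries.coeff_C_mul, h4] }
  refine ⟨D, rfl, hff, ?_, ?_⟩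
  · change sub (φ (x j)) = algebraMap A B' (φ (x j)) + MvPowerSeries.C τ
    rw [hx]
    simp only [sub]
    rw [MvPowerSeries.substAlgHom_X, MvPowerSeries.algebraMap_apply'', MvPowerSeries.map_X]
    simp [a]
  · intro i hi
    change sub (φ (x i)) = algebraMap A B' (φ (x i))
    rw [hx]
    simp only [sub]
    rw [MvPowerSeries.substAlgHom_X, MvPowerSeries.algebraMap_apply'', MvPowerSeries.map_X]
    simp [a, hi]

theorem good_of_regular (F : Type) [Field F] [PerfectField F] {S : Type} [CommRing S] [Algebra F S] [IsNoetherianRing S]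
    [IsLocalRing S] (l : List S) (hl : RegRev S l) (hm : Ideal.ofList l = IsLocalRing.maximalIdeal S)
    (x : S) (hx : x ∈ l) (n : ℕ) : ∃ D : TDat S, D.Good x l n := by
  obtain ⟨Ψ, hΨ⟩ := cohen_iso F l hl hm
  have h0 : Module.Flat S (AdicCompletion (IsLocalRing.maximalIdeal S) S) :=
    AdicCompletion.flat_of_isNoetherian _
  have h1 : Module.FaithfullyFlat S (AdicCompletion (IsLocalRing.maximalIdeal S) S) :=
    Module.FaithfullyFlat.of_flat_of_isLocalHom
  let φ : S →+* MvPowerSeries (Fin l.length) (IsLocalRing.ResidueField S) :=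
    Ψ.symm.toRingHom.comp (algebraMap S (AdicCompletion (IsLocalRing.maximalIdeal S) S))
  have hφ : φ.FaithfullyFlat := by
    refine RingHom.FaithfullyFlat.stableUnderComposition _ _ ?_ ?_
    · exact (RingHom.faithfullyFlat_algebraMap_iff).2 h1
    · exact RingHom.FaithfullyFlat.of_bijective Ψ.symm.bijective
  obtain ⟨j, rfl⟩ := List.mem_iff_get.1 hx
  obtain ⟨D, d1, d2, d3, d4⟩ := exists_good φ hφ l.get (fun i => by
    change Ψ.symm (algebraMap S _ (l.get i)) = _
    rw [← hΨ, Ψ.symm_apply_apply]) j n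
  refine ⟨D, d1, d2, d3, ?_⟩
  intro y hy hne
  obtain ⟨i, rfl⟩ := List.mem_iff_get.1 hy
  exact d4 i (fun e => hne (by rw [e]))

end TruncK

open scoped TensorProduct

section RegDom
open IsLocalRing
open scoped Pointwise

theorem lift_list {S : Type} [CommRing S] [IsLocalRing S] (x : S) (hx : IsSMulRegular S x)
    (hxm : x ∈ maximalIdeal S) [IsLocalRing (S ⧸ Ideal.span {x})] (l' : List (S ⧸ Ideal.span {x}))
    (hl : RingTheory.Sequence.IsWeaklyRegular (S ⧸ Ideal.span {x}) l')
    (hm : Ideal.ofList l' = maximalIdeal (S ⧸ Ideal.span {x})) :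
    ∃ l : List S, RingTheory.Sequence.IsWeaklyRegular S l ∧ Ideal.ofList l = maximalIdeal S := by
  obtain ⟨l, rfl⟩ := List.map_surjective_iff.2 (Ideal.Quotient.mk_surjective (I := Ideal.span {x})) l'
  refine ⟨x :: l, ?_, ?_⟩
  · rw [RingTheory.Sequence.isWeaklyRegular_cons_iff]
    refine ⟨hx, ?_⟩
    have h1 := (RingTheory.Sequence.isWeaklyRegular_map_algebraMap_iff (S ⧸ Ideal.span {x}) (S ⧸ Ideal.span {x}) l).1 hl
    have e : x • (⊤ : Submodule S S) = Ideal.span {x} := by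
      rw [← Submodule.ideal_span_singleton_smul]; simp
    exact ((Submodule.quotEquivOfEq _ _ e).isWeaklyRegular_congr l).2 h1
  · rw [Ideal.ofList_cons]
    have h2 : Ideal.map (Ideal.Quotient.mk (Ideal.span {x})) (Ideal.ofList l) =
      maximalIdeal (S ⧸ Ideal.span {x}) := by rw [Ideal.map_ofList]; exact hm
    have h3 := congrArg (Ideal.comap (Ideal.Quotient.mk (Ideal.span {x}))) h2
    rw [Ideal.comap_map_of_surjective _ Ideal.Quotient.mk_surjective] at h3
    have h4 : Ideal.comap (Ideal.Quotient.mk (Ideal.span {x})) ⊥ = Ideal.span {x} := by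
      rw [← RingHom.ker_eq_comap_bot, Ideal.mk_ker]
    have h5 : Ideal.comap (Ideal.Quotient.mk (Ideal.span {x})) (maximalIdeal _) = maximalIdeal S := by
      have := Ideal.comap_isMaximal_of_surjective (Ideal.Quotient.mk (Ideal.span {x})) Ideal.Quotient.mk_surjective
        (K := maximalIdeal _)
      exact IsLocalRing.eq_maximalIdeal this
    rw [h4, h5] at h3
    rw [sup_comm]; exact h3

lemma exists_avoid {S : Type} [CommRing S] [IsLocalRing S] [IsNoetherianRing S] (T : Set (Ideal S)) (hT : T.Finite)
    (hTp : ∀ P ∈ T, P.IsPrime) (hTm : ∀ P ∈ T, ¬ maximalIdeal S ≤ P) (h0 : maximalIdeal S ≠ ⊥) :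
    ∃ x ∈ maximalIdeal S, x ∉ (maximalIdeal S)^2 ∧ ∀ P ∈ T, x ∉ P := by
  by_contra hcon
  push Not at hcon
  classical
  have h1 : ((maximalIdeal S : Ideal S) : Set S) ⊆ ⋃ i ∈ (↑(insert ((maximalIdeal S)^2) hT.toFinset) : Set (Ideal S)), (id i : Ideal S) := by
    intro x hx
    simp only [Set.mem_iUnion]
    by_cases h : x ∈ (maximalIdeal S)^2
    · exact ⟨(maximalIdeal S)^2, by simp, h⟩
    · obtain ⟨P, hP, hxP⟩ := hcon x hx h
      exact ⟨P, by simp [hP], hxP⟩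
  rw [Ideal.subset_union_prime ((maximalIdeal S)^2) ((maximalIdeal S)^2)] at h1
  · obtain ⟨P, hP, hle⟩ := h1
    rcases Finset.mem_insert.1 hP with rfl | hP
    · apply h0
      refine Submodule.eq_bot_of_le_smul_of_le_jacobson_bot (maximalIdeal S) (maximalIdeal S)
        (IsNoetherian.noetherian _) ?_ (IsLocalRing.maximalIdeal_le_jacobson _)
      rw [smul_eq_mul, ← pow_two]; exact hle
    · exact hTm P (by simpa using hP) hle
  · intro i hi hne _
    rcases Finset.mem_insert.1 hi with rfl | hP
    · exact absurd rfl hne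
    · exact hTp i (by simpa using hP)

theorem regseq_of_regular : ∀ (n : ℕ) (R : Type) [CommRing R] [IsLocalRing R] [IsNoetherianRing R]
    (s : Fin n → R) (_ : Ideal.span (Set.range s) = maximalIdeal R) (_ : (n : WithBot ℕ∞) ≤ ringKrullDim R),
    IsDomain R ∧ ∃ l : List R, RingTheory.Sequence.IsWeaklyRegular R l ∧ Ideal.ofList l = maximalIdeal R := by
  intro n
  induction n with
  | zero =>
    intro R _ _ _ s hs hd
    have h0 : maximalIdeal R = ⊥ := by rw [← hs]; simp
    have hf : IsField R := IsLocalRing.isField_iff_maximalIdeal_eq.2 h0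
    exact ⟨hf.isDomain, [], RingTheory.Sequence.IsWeaklyRegular.nil _ _, by rw [h0]; simp⟩
  | succ n ih =>
    intro R _ _ _ s hs hd
    have h0 : maximalIdeal R ≠ ⊥ := by
      intro h0
      have hf : IsField R := IsLocalRing.isField_iff_maximalIdeal_eq.2 h0
      rw [ringKrullDim_eq_zero_of_isField hf] at hd
      norm_cast at hd
    obtain ⟨x, hxm, hx2, hxP⟩ := exists_avoid (minimalPrimes R) (minimalPrimes.finite_of_isNoetherianRing R)
      (fun P hP => hP.1.1) (fun P hP hle => by
        have hPm : P = maximalIdeal R := le_antisymm (IsLocalRing.le_maximalIdeal hP.1.1.ne_top) hle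
        have : ringKrullDim R = 0 := by
          have hh : (maximalIdeal R).height = 0 := by
            rw [← hPm]; have := hP.1.1; exact Ideal.height_eq_zero_iff.2 hP
          rw [← IsLocalRing.maximalIdeal_height_eq_ringKrullDim, hh]; rfl
        rw [this] at hd
        norm_cast at hd) h0
    have hx : x ∈ Ideal.span (Set.range s) := by rw [hs]; exact hxm
    obtain ⟨a, ha⟩ := (Ideal.mem_span_range_iff_exists_fun).1 hx
    have hex : ∃ i, IsUnit (a i) := by
      by_contra hcon
      push Not at hcon
      apply hx2
      rw [← ha, pow_two]
      refine Ideal.sum_mem _ fun i _ => Ideal.mul_mem_mul ((IsLocalRing.mem_maximalIdeal _).2 (hcon i)) ?_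
      rw [← hs]; exact Ideal.subset_span ⟨i, rfl⟩
    obtain ⟨i, hi⟩ := hex
    have hne : Ideal.span {x} ≠ ⊤ := fun h => (IsLocalRing.maximalIdeal.isMaximal R).ne_top
      (top_le_iff.1 (h ▸ (Ideal.span_singleton_le_iff_mem _).2 hxm))
    have : Nontrivial (R ⧸ Ideal.span {x}) := Ideal.Quotient.nontrivial_iff.2 hne
    have : IsLocalRing (R ⧸ Ideal.span {x}) :=
      IsLocalRing.of_surjective' (Ideal.Quotient.mk _) Ideal.Quotient.mk_surjective
    obtain ⟨hdom, l', hl', hm'⟩ := ih (R ⧸ Ideal.span {x}) (fun j => Ideal.Quotient.mk _ (s (i.succAbove j))) (by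
        have e1 : maximalIdeal (R ⧸ Ideal.span {x}) = Ideal.map (Ideal.Quotient.mk _) (maximalIdeal R) := by
          have := Ideal.comap_isMaximal_of_surjective (Ideal.Quotient.mk (Ideal.span {x})) Ideal.Quotient.mk_surjective
            (K := maximalIdeal _)
          rw [← IsLocalRing.eq_maximalIdeal this, Ideal.map_comap_of_surjective _ Ideal.Quotient.mk_surjective]
        rw [e1, ← hs, Ideal.map_span]
        refine le_antisymm (Ideal.span_mono ?_) (Ideal.span_le.2 ?_)
        · rintro _ ⟨j, rfl⟩
          exact ⟨_, ⟨_, rfl⟩, rfl⟩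
        · rintro _ ⟨_, ⟨j, rfl⟩, rfl⟩
          by_cases hj : j = i
          · subst hj
            have e2 : Ideal.Quotient.mk (Ideal.span {x}) (a j * s j) = - ∑ q, Ideal.Quotient.mk (Ideal.span {x}) (a (j.succAbove q) * s (j.succAbove q)) := by
              rw [eq_neg_iff_add_eq_zero, ← map_sum, ← map_add, ← Fin.sum_univ_succAbove (fun q => a q * s q), ha,
                Ideal.Quotient.eq_zero_iff_mem]
              exact Ideal.mem_span_singleton_self x
            obtain ⟨u, hu⟩ := hi
            have e3 : Ideal.Quotient.mk (Ideal.span {x}) (s j) = Ideal.Quotient.mk (Ideal.span {x}) (↑u⁻¹ : R) *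
                Ideal.Quotient.mk (Ideal.span {x}) (a j * s j) := by
              rw [← map_mul, ← hu]; simp
            rw [e3, e2]
            refine Ideal.mul_mem_left _ _ (neg_mem (Ideal.sum_mem _ fun q _ => ?_))
            rw [map_mul]
            exact Ideal.mul_mem_left _ _ (Ideal.subset_span ⟨q, rfl⟩)
          · obtain ⟨q, rfl⟩ := Fin.exists_succAbove_eq hj
            exact Ideal.subset_span ⟨q, rfl⟩) (by
        have h3 := ringKrullDim_le_ringKrullDim_quotient_add_card {x} (by
          intro y hy
          rw [Finset.coe_singleton, Set.mem_singleton_iff] at hy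
          rw [hy]
          rw [IsLocalRing.ringJacobson_eq_maximalIdeal]
          exact hxm)
        rw [Finset.card_singleton, Finset.coe_singleton] at h3
        have h4 := hd.trans h3
        by_contra hlt
        have h5 := h4.trans (ENat.WithBot.add_one_le_natCast_iff.2 (not_le.1 hlt))
        norm_cast at h5
        omega)
    have hprime : (Ideal.span {x}).IsPrime := (Ideal.Quotient.isDomain_iff_prime _).1 hdom
    obtain ⟨P, hP, hPx⟩ := Ideal.exists_minimalPrimes_le (J := Ideal.span {x}) (I := (⊥ : Ideal R)) bot_le
    have hP0 : P = ⊥ := by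
      refine Submodule.eq_bot_of_le_smul_of_le_jacobson_bot (maximalIdeal R) P (IsNoetherian.noetherian _) ?_
        (IsLocalRing.maximalIdeal_le_jacobson _)
      intro y hy
      obtain ⟨z, rfl⟩ := Ideal.mem_span_singleton'.1 (hPx hy)
      have hz : z ∈ P := (hP.1.1.mem_or_mem hy).resolve_right (hxP P hP)
      rw [mul_comm]
      exact Ideal.mul_mem_mul hxm hz
    have hRdom : IsDomain R := by
      have hb := hP.1.1
      rw [hP0] at hb
      exact IsDomain.of_bot_isPrime R
    refine ⟨hRdom, lift_list x ?_ hxm l' hl' hm'⟩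
    have hx0 : x ≠ 0 := fun h => hx2 (h ▸ zero_mem _)
    exact IsSMulRegular.of_ne_zero hx0

end RegDom

open scoped TensorProduct

section PDim
open IsLocalRing
open scoped Pointwise

abbrev PDL (R : Type) [CommRing R] (M : Type) [AddCommGroup M] [Module R M] (n : ℕ) : Prop :=
  HasProjectiveDimensionLT (ModuleCat.of R M) n

variable {R : Type} [CommRing R] {M N P : Type} [AddCommGroup M] [Module R M] [AddCommGroup N] [Module R N]
  [AddCommGroup P] [Module R P]

theorem PDL.equiv (e : M ≃ₗ[R] N) {n : ℕ} (h : PDL R M n) : PDL R N n :=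
  hasProjectiveDimensionLT_of_iso e.toModuleIso n

theorem PDL.mono {n k : ℕ} (h : PDL R M n) (hk : n ≤ k) : PDL R M k :=
  hasProjectiveDimensionLT_of_ge _ n k hk

theorem pdl_one_iff : PDL R M 1 ↔ Module.Projective R M := by
  rw [IsProjective.iff_projective]
  exact (projective_iff_hasProjectiveDimensionLT_one (X := ModuleCat.of R M)).symm

theorem PDL.of_subsingleton [Subsingleton M] (n : ℕ) : PDL R M n := by
  have : PDL R M 0 := (hasProjectiveDimensionLT_zero_iff_isZero _).2
    ((ModuleCat.isZero_iff_subsingleton (M := ModuleCat.of R M)).2 ‹_›)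
  exact this.mono (Nat.zero_le _)

theorem se_of (f : M →ₗ[R] N) (g : N →ₗ[R] P) (hf : Function.Injective f) (hg : Function.Surjective g)
    (hfg : Function.Exact f g) :
    (ModuleCat.shortComplexOfCompEqZero f g hfg.linearMap_comp_eq_zero).ShortExact :=
  ModuleCat.shortComplex_shortExact _ hfg hf hg

theorem PDL.mid (f : M →ₗ[R] N) (g : N →ₗ[R] P) (hf : Function.Injective f) (hg : Function.Surjective g)
    (hfg : Function.Exact f g) {n : ℕ} (h1 : PDL R M n) (h3 : PDL R P n) : PDL R N n :=
  (se_of f g hf hg hfg).hasProjectiveDimensionLT_X₂ n h1 h3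

theorem PDL.left (f : M →ₗ[R] N) (g : N →ₗ[R] P) (hf : Function.Injective f) (hg : Function.Surjective g)
    (hfg : Function.Exact f g) {n : ℕ} (h2 : PDL R N n) (h3 : PDL R P (n+1)) : PDL R M n :=
  (se_of f g hf hg hfg).hasProjectiveDimensionLT_X₁ n h2 h3

theorem PDL.right (f : M →ₗ[R] N) (g : N →ₗ[R] P) (hf : Function.Injective f) (hg : Function.Surjective g)
    (hfg : Function.Exact f g) {n : ℕ} (h1 : PDL R M n) (h2 : PDL R N (n+1)) : PDL R P (n+1) :=
  (se_of f g hf hg hfg).hasProjectiveDimensionLT_X₃ n h1 h2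

theorem PDL.retract (f : M →ₗ[R] N) (g : N →ₗ[R] M) (h : g ∘ₗ f = LinearMap.id) {n : ℕ} (hN : PDL R N n) :
    PDL R M n :=
  (Retract.mk (X := ModuleCat.of R M) (Y := ModuleCat.of R N) (ModuleCat.ofHom f) (ModuleCat.ofHom g)
    (by rw [← ModuleCat.ofHom_comp, h]; rfl)).hasProjectiveDimensionLT n

theorem pdl_of_surj (g : R →ₗ[R] M) (hg : Function.Surjective g) {n : ℕ}
    (h : PDL R (R ⧸ (LinearMap.ker g)) n) : PDL R M n :=
  h.equiv (g.quotKerEquivOfSurjective hg)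

theorem pdl_quot_max [IsLocalRing R] [IsNoetherianRing R] (l : List R)
    (hl : RingTheory.Sequence.IsWeaklyRegular R l) (hm : Ideal.ofList l = maximalIdeal R) :
    PDL R (R ⧸ maximalIdeal R) (l.length + 1) := by
  have h := ModuleCat.projectiveDimension_quotient_eq_add_length_of_isWeaklyRegular (ModuleCat.of R R) l hl
    (fun r hr => by rw [← hm]; exact Ideal.subset_span hr)
  have hp : Projective (ModuleCat.of R R) := IsProjective.iff_projective _ |>.1 inferInstance
  have h0 : projectiveDimension (ModuleCat.of R R) = 0 := ModuleCat.projectiveDimension_eq_zero_of_projective _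
  rw [h0, zero_add] at h
  have h2 := (projectiveDimension_le_iff _ _).1 h.le
  refine PDL.equiv (M := R ⧸ (Ideal.ofList l • (⊤ : Submodule R R))) ?_ h2
  exact Submodule.quotEquivOfEq _ _ (by rw [hm]; simp)

theorem pdl_regular [IsLocalRing R] [IsNoetherianRing R] (M : Type) [AddCommGroup M] [Module R M]
    [Module.Finite R M] (x : R)
    (hx : x ∈ maximalIdeal R) (hr : IsSMulRegular M x) {n : ℕ} (h : PDL R (QuotSMulTop x M) n) :
    PDL R M n := by
  have h1 := ModuleCat.projectiveDimension_quotSMulTop_eq_succ_of_isSMulRegular (ModuleCat.of R M) x hr hx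
  have h2 := projectiveDimension_lt_iff.2 h
  refine projectiveDimension_lt_iff.1 (lt_of_le_of_lt ?_ h2)
  refine le_trans ?_ h1.ge
  exact le_add_of_nonneg_right zero_le_one

theorem pdl_all [IsLocalRing R] [IsNoetherianRing R] (n : ℕ)
    (h : PDL R (R ⧸ maximalIdeal R) n) (J : Ideal R) : PDL R (R ⧸ J) n := by
  induction J using IsNoetherian.induction with
  | hgt J' ih =>
  obtain ⟨J, rfl⟩ : ∃ J : Ideal R, J = J' := ⟨J', rfl⟩
  by_cases hJ : J = ⊤
  · subst hJ
    have : Subsingleton (R ⧸ (⊤ : Ideal R)) := inferInstance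
    exact PDL.of_subsingleton n
  by_cases hp : J.IsPrime
  · by_cases hJm : J = maximalIdeal R
    · rw [hJm]; exact h
    obtain ⟨x, hxm, hxJ⟩ := SetLike.exists_of_lt (lt_of_le_of_ne (IsLocalRing.le_maximalIdeal hJ) hJm)
    refine pdl_regular (R ⧸ J) x hxm ?_ ?_
    · refine (isSMulRegular_iff_right_eq_zero_of_smul).2 fun z hz => ?_
      obtain ⟨z, rfl⟩ := Ideal.Quotient.mk_surjective z
      have hz' : Ideal.Quotient.mk J (x * z) = 0 := hz
      rw [Ideal.Quotient.eq_zero_iff_mem] at hz' ⊢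
      exact (hp.mem_or_mem hz').resolve_left hxJ
    · refine pdl_of_surj ((Submodule.mkQ _) ∘ₗ (Submodule.mkQ J)) ?_ (ih _ ?_)
      · rw [LinearMap.coe_comp]
        exact (Submodule.mkQ_surjective _).comp (Submodule.mkQ_surjective _)
      · refine lt_of_le_of_ne (fun y hy => ?_) (fun heq => hxJ ?_)
        · have : Submodule.mkQ J y = 0 := (Submodule.Quotient.mk_eq_zero J).2 hy
          rw [LinearMap.mem_ker, LinearMap.comp_apply, this, map_zero]
        · rw [heq, LinearMap.mem_ker, LinearMap.comp_apply]
          refine (Submodule.Quotient.mk_eq_zero _).2 ?_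
          exact ⟨Submodule.mkQ J 1, trivial, by
            change x • (Submodule.mkQ J 1) = _
            rw [← map_smul]; simp⟩
  · obtain ⟨a, ha, b, hb, hab⟩ := (Ideal.not_isPrime_iff.1 hp).resolve_left hJ
    let t : R →ₗ[R] (R ⧸ J) := LinearMap.toSpanSingleton R (R ⧸ J) (Submodule.mkQ J a)
    have ht : ∀ r, t r = Submodule.mkQ J (r * a) := fun r => by
      rw [← smul_eq_mul, map_smul]; rfl
    have ht0 : ∀ r, t r = 0 ↔ r * a ∈ J := fun r => by
      rw [ht]; exact Submodule.Quotient.mk_eq_zero J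
    have h1 : PDL R (LinearMap.range t) n := by
      refine pdl_of_surj t.rangeRestrict t.surjective_rangeRestrict (ih _ ?_)
      rw [LinearMap.ker_rangeRestrict]
      refine lt_of_le_of_ne (fun y hy => ?_) (fun heq => hb ?_)
      · rw [LinearMap.mem_ker, ht0]; exact J.mul_mem_right _ hy
      · rw [heq, LinearMap.mem_ker, ht0, mul_comm]; exact hab
    have h3 : PDL R ((R ⧸ J) ⧸ (LinearMap.range t)) n := by
      refine pdl_of_surj ((Submodule.mkQ _) ∘ₗ (Submodule.mkQ J)) ?_ (ih _ ?_)
      · rw [LinearMap.coe_comp]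
        exact (Submodule.mkQ_surjective _).comp (Submodule.mkQ_surjective _)
      · refine lt_of_le_of_ne (fun y hy => ?_) (fun heq => ha ?_)
        · have : Submodule.mkQ J y = 0 := (Submodule.Quotient.mk_eq_zero J).2 hy
          rw [LinearMap.mem_ker, LinearMap.comp_apply, this, map_zero]
        · rw [heq, LinearMap.mem_ker, LinearMap.comp_apply]
          refine (Submodule.Quotient.mk_eq_zero _).2 ⟨1, ?_⟩
          rw [ht, one_mul]
    exact PDL.mid (LinearMap.range t).subtype (Submodule.mkQ _) Subtype.val_injective
      (Submodule.mkQ_surjective _) (LinearMap.exact_subtype_mkQ _) h1 h3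

theorem pdl_loc {R : Type} [CommRing R] (M : Type) [AddCommGroup M] [Module R M] (W : Submonoid R) (n : ℕ)
    (h : PDL R M (n+1)) : PDL (Localization W) (LocalizedModule W M) (n+1) := by
  have h' : HasProjectiveDimensionLE (ModuleCat.of R M) n := h
  have := ModuleCat.localizedModule_hasProjectiveDimensionLE n W (ModuleCat.of R M)
  refine PDL.equiv ?_ this
  exact Shrink.linearEquiv (Localization W) (LocalizedModule W M)

end PDim

open scoped TensorProduct

section SerreSec
open IsLocalRing
open scoped Pointwise

theorem min_pres {S : Type} [CommRing S] [IsLocalRing S] (M : Type) [AddCommGroup M]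
    [Module S M] [Module.Finite S M] : ∃ (r : ℕ) (g : (Fin r → S) →ₗ[S] M), Function.Surjective g ∧
      ∀ v, g v = 0 → ∀ i, v i ∈ maximalIdeal S := by
  classical
  have hex : ∃ r : ℕ, ∃ g : Fin r → M, Submodule.span S (Set.range g) = ⊤ := by
    obtain ⟨r, g, hg⟩ := Module.Finite.exists_fin (R := S) (M := M)
    exact ⟨r, g, hg⟩
  obtain ⟨g, hg⟩ := Nat.find_spec hex
  have hmin : ∀ q < Nat.find hex, ¬ ∃ g : Fin q → M, Submodule.span S (Set.range g) = ⊤ :=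
    fun q hq => Nat.find_min hex hq
  revert g
  generalize Nat.find hex = r at hmin
  intro g hg
  refine ⟨r, Fintype.linearCombination S g, ?_, ?_⟩
  · rw [← LinearMap.range_eq_top, Fintype.range_linearCombination, hg]
  · intro v hv i
    by_contra hi
    have hu : IsUnit (v i) := by
      by_contra h; exact hi ((IsLocalRing.mem_maximalIdeal _).2 h)
    obtain ⟨u, hu⟩ := hu
    cases r with
    | zero => exact i.elim0
    | succ r =>
      refine hmin r (Nat.lt_succ_self r) ⟨fun q => g (i.succAbove q), ?_⟩
      rw [eq_top_iff, ← hg, Submodule.span_le]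
      rintro _ ⟨j, rfl⟩
      by_cases hj : j = i
      · subst hj
        rw [Fintype.linearCombination_apply, Fin.sum_univ_succAbove _ j, ← hu] at hv
        have h2 : g j = - ∑ q, (↑u⁻¹ * v (j.succAbove q) : S) • g (j.succAbove q) := by
          have h3 := congrArg (fun z => (↑u⁻¹ : S) • z) hv
          simp only [smul_add, smul_smul, Units.inv_mul, one_smul, smul_zero, Finset.smul_sum] at h3
          exact eq_neg_of_add_eq_zero_left h3
        rw [h2]
        exact neg_mem (Submodule.sum_mem _ fun q _ => Submodule.smul_mem _ _ (Submodule.subset_span ⟨q, rfl⟩))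
      · obtain ⟨q, rfl⟩ := Fin.exists_succAbove_eq hj
        exact Submodule.subset_span ⟨q, rfl⟩

theorem pdl_ker {S : Type} [CommRing S] {F M : Type} [AddCommGroup M] [Module S M] [AddCommGroup F] [Module S F]
    [Module.Free S F] (g : F →ₗ[S] M) (hg : Function.Surjective g) (n : ℕ) (h : PDL S M (n+2)) :
    PDL S (LinearMap.ker g) (n+1) := by
  refine PDL.left (LinearMap.ker g).subtype g Subtype.val_injective hg (LinearMap.exact_subtype_ker_map g) ?_ h
  exact (pdl_one_iff.2 inferInstance).mono (by omega)

theorem free_of_socle {S : Type} [CommRing S] [IsLocalRing S] [IsNoetherianRing S] (s : S) (hs : s ≠ 0)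
    (hsm : ∀ y ∈ maximalIdeal S, s * y = 0) (n : ℕ) : ∀ (M : Type) [AddCommGroup M] [Module S M]
    [Module.Finite S M], PDL S M (n+1) → Module.Free S M := by
  induction n with
  | zero =>
    intro M _ _ _ h
    have := pdl_one_iff.1 h
    exact Module.free_of_flat_of_isLocalRing
  | succ n ih =>
    intro M _ _ _ h
    obtain ⟨r, g, hg, hm⟩ := min_pres (S := S) M
    have hfree := ih (LinearMap.ker g) (pdl_ker g hg n h)
    have hk : Subsingleton (LinearMap.ker g) := by
      by_contra hcon
      have := not_subsingleton_iff_nontrivial.1 hcon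
      have hann : s ∈ Module.annihilator S (LinearMap.ker g) := by
        rw [Module.mem_annihilator]
        rintro ⟨v, hv⟩
        ext i
        exact hsm _ (hm v hv i)
      rw [Module.annihilator_eq_bot.2 inferInstance] at hann
      exact hs hann
    have hinj : Function.Injective g := LinearMap.ker_eq_bot.1 ((Submodule.subsingleton_iff_eq_bot).1 hk)
    exact Module.Free.of_equiv (LinearEquiv.ofBijective g ⟨hinj, hg⟩)

theorem pdl_quot {S : Type} [CommRing S] [IsLocalRing S] [IsNoetherianRing S] (x : S) (hx : IsSMulRegular S x)
    (n : ℕ) : ∀ (M : Type) [AddCommGroup M] [Module S M]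
    [Module.Finite S M], IsSMulRegular M x → PDL S M (n+1) → PDL (S ⧸ Ideal.span {x}) (QuotSMulTop x M) (n+1) := by
  induction n with
  | zero =>
    intro M _ _ _ hr h
    have := pdl_one_iff.1 h
    have : Module.Free S M := Module.free_of_flat_of_isLocalRing
    exact pdl_one_iff.2 inferInstance
  | succ n ih =>
    intro M _ _ _ hr h
    obtain ⟨r, g, hg, -⟩ := min_pres (S := S) M
    have hF : IsSMulRegular (Fin r → S) x := fun a b hab => funext fun i => hx (congrFun hab i)
    have hK : IsSMulRegular (LinearMap.ker g) x := fun a b hab => Subtype.ext (hF (congrArg Subtype.val hab))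
    have h1 := ih (LinearMap.ker g) hK (pdl_ker g hg n h)
    have hsur : Function.Surjective (algebraMap S (S ⧸ Ideal.span {x})) := Ideal.Quotient.mk_surjective
    refine PDL.right
      ((QuotSMulTop.map x (LinearMap.ker g).subtype).extendScalarsOfSurjective hsur)
      ((QuotSMulTop.map x g).extendScalarsOfSurjective hsur) ?_ (QuotSMulTop.map_surjective x hg)
      (QuotSMulTop.map_exact x (LinearMap.exact_subtype_ker_map g) hg) h1 ?_
    · change Function.Injective (QuotSMulTop.map x (LinearMap.ker g).subtype)
      rw [injective_iff_map_eq_zero]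
      intro a ha
      obtain ⟨⟨v, hv⟩, rfl⟩ := Submodule.Quotient.mk_surjective _ a
      rw [QuotSMulTop.map_apply_mk, Submodule.Quotient.mk_eq_zero] at ha
      obtain ⟨w, -, hw⟩ := ha
      have hw' : x • w = v := hw
      have hwk : g w = 0 := by
        refine hr ?_
        change x • g w = x • 0
        rw [← map_smul, hw', smul_zero]; exact hv
      refine (Submodule.Quotient.mk_eq_zero _).2 ⟨⟨w, hwk⟩, trivial, ?_⟩
      exact Subtype.ext hw
    · exact (pdl_one_iff.2 inferInstance).mono (by omega)

theorem exists_phi {S : Type} [CommRing S] [IsLocalRing S] (x : S) (hx : x ∈ maximalIdeal S)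
    (hx2 : x ∉ maximalIdeal S ^ 2) : ∃ φ : maximalIdeal S →ₗ[S] (S ⧸ maximalIdeal S), φ ⟨x, hx⟩ = 1 := by
  have hne : ((maximalIdeal S).toCotangent ⟨x, hx⟩ : CotangentSpace S) ≠ 0 := by
    rw [Ne, Ideal.toCotangent_eq_zero]; exact hx2
  obtain ⟨f, hf⟩ := Module.Projective.exists_dual_eq_one (ResidueField S) hne
  exact ⟨(f.restrictScalars S) ∘ₗ (maximalIdeal S).toCotangent, hf⟩

theorem pdl_residue_quot {S : Type} [CommRing S] [IsLocalRing S] [IsNoetherianRing S] (x : S)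
    (hx : IsSMulRegular S x) (hxm : x ∈ maximalIdeal S) (hx2 : x ∉ maximalIdeal S ^ 2)
    [IsLocalRing (S ⧸ Ideal.span {x})] (n : ℕ) (h : PDL S (S ⧸ maximalIdeal S) (n+2)) :
    PDL (S ⧸ Ideal.span {x}) ((S ⧸ Ideal.span {x}) ⧸ maximalIdeal (S ⧸ Ideal.span {x})) (n+1) := by
  have h1 : PDL S (maximalIdeal S) (n+1) := by
    refine PDL.left (Submodule.subtype (maximalIdeal S)) (Submodule.mkQ _) Subtype.val_injective
      (Submodule.mkQ_surjective _) (LinearMap.exact_subtype_mkQ _) ?_ h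
    exact (pdl_one_iff.2 inferInstance).mono (by omega)
  have hr : IsSMulRegular (maximalIdeal S) x := fun a b hab => Subtype.ext (hx (congrArg Subtype.val hab))
  have h2 := pdl_quot x hx n (maximalIdeal S) hr h1
  obtain ⟨φ, hφ⟩ := exists_phi x hxm hx2
  have hsur : Function.Surjective (algebraMap S (S ⧸ Ideal.span {x})) := Ideal.Quotient.mk_surjective
  have hmax : ∀ y, Ideal.Quotient.mk (Ideal.span {x}) y ∈ maximalIdeal (S ⧸ Ideal.span {x}) ↔ y ∈ maximalIdeal S := by
    intro y
    have := Ideal.comap_isMaximal_of_surjective (Ideal.Quotient.mk (Ideal.span {x})) Ideal.Quotient.mk_surjective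
            (K := maximalIdeal _)
    rw [← Ideal.mem_comap, IsLocalRing.eq_maximalIdeal this]
  let ψ0 : S →ₗ[S] ((S ⧸ Ideal.span {x}) ⧸ maximalIdeal (S ⧸ Ideal.span {x})) :=
    LinearMap.toSpanSingleton S _ 1
  have hψ0 : ∀ y, ψ0 y = Ideal.Quotient.mk _ (Ideal.Quotient.mk (Ideal.span {x}) y) := fun y => by
    refine Eq.trans (Algebra.smul_def y (1 : ((S ⧸ Ideal.span {x}) ⧸ maximalIdeal (S ⧸ Ideal.span {x})))) ?_
    rw [mul_one]; rfl
  let ψ : (S ⧸ maximalIdeal S) →ₗ[S] ((S ⧸ Ideal.span {x}) ⧸ maximalIdeal (S ⧸ Ideal.span {x})) :=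
    Submodule.liftQ (maximalIdeal S) ψ0 (fun y hy => by
      rw [LinearMap.mem_ker, hψ0, Ideal.Quotient.eq_zero_iff_mem, hmax]; exact hy)
  have hψ1 : ψ 1 = 1 := by
    change ψ0 1 = 1
    rw [hψ0, map_one, map_one]
  let g : QuotSMulTop x (maximalIdeal S) →ₗ[S] ((S ⧸ Ideal.span {x}) ⧸ maximalIdeal (S ⧸ Ideal.span {x})) :=
    Submodule.liftQ _ (ψ ∘ₗ φ) (by
      rintro _ ⟨y, -, rfl⟩
      change ψ (φ (x • y)) = 0
      rw [map_smul, map_smul]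
      obtain ⟨z, hz⟩ := Ideal.Quotient.mk_surjective (ψ (φ y))
      rw [← hz]
      obtain ⟨z, rfl⟩ := Ideal.Quotient.mk_surjective z
      have : x • Ideal.Quotient.mk (maximalIdeal (S ⧸ Ideal.span {x})) (Ideal.Quotient.mk (Ideal.span {x}) z) =
        Ideal.Quotient.mk (maximalIdeal (S ⧸ Ideal.span {x})) (Ideal.Quotient.mk (Ideal.span {x}) (x * z)) := rfl
      rw [this, Ideal.Quotient.eq_zero_iff_mem, hmax]
      exact Ideal.mul_mem_right _ _ hxm)
  let f : ((S ⧸ Ideal.span {x}) ⧸ maximalIdeal (S ⧸ Ideal.span {x})) →ₗ[S ⧸ Ideal.span {x}]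
      QuotSMulTop x (maximalIdeal S) :=
    Submodule.liftQ (maximalIdeal (S ⧸ Ideal.span {x})) (LinearMap.toSpanSingleton (S ⧸ Ideal.span {x}) _
      (Submodule.Quotient.mk ⟨x, hxm⟩)) (by
      intro y hy
      obtain ⟨y, rfl⟩ := Ideal.Quotient.mk_surjective y
      rw [hmax] at hy
      refine (Submodule.Quotient.mk_eq_zero _).2 (?_ : y • (⟨x, hxm⟩ : maximalIdeal S) ∈ _)
      exact ⟨⟨y, hy⟩, trivial, Subtype.ext (mul_comm x y)⟩)
  refine PDL.retract f (g.extendScalarsOfSurjective hsur) ?_ h2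
  refine Submodule.linearMap_qext _ (LinearMap.ext_ring ?_)
  have hf1 : f 1 = Submodule.Quotient.mk ⟨x, hxm⟩ := by
    change (1 : S ⧸ Ideal.span {x}) • (Submodule.Quotient.mk ⟨x, hxm⟩ : QuotSMulTop x (maximalIdeal S)) = _
    rw [one_smul]
  change g (f 1) = 1
  rw [hf1]
  change ψ (φ ⟨x, hxm⟩) = 1
  rw [hφ, hψ1]

theorem serre_list (d : ℕ) : ∀ (S : Type) [CommRing S] [IsLocalRing S] [IsNoetherianRing S] (n : ℕ)
    (_ : ringKrullDim S < d) (_ : PDL S (S ⧸ maximalIdeal S) n),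
    ∃ l : List S, RingTheory.Sequence.IsWeaklyRegular S l ∧ Ideal.ofList l = maximalIdeal S := by
  induction d with
  | zero =>
    intro S _ _ _ n hd h
    exact absurd hd (not_lt.2 (by simpa using ringKrullDim_nonneg_of_nontrivial (R := S)))
  | succ d ih =>
    intro S _ _ _ n hd h
    by_cases h0 : maximalIdeal S = ⊥
    · exact ⟨[], RingTheory.Sequence.IsWeaklyRegular.nil _ _, by rw [h0]; simp⟩
    by_cases hsoc : ∃ s : S, s ≠ 0 ∧ ∀ y ∈ maximalIdeal S, s * y = 0
    · exfalso
      obtain ⟨s, hs, hsm⟩ := hsoc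
      have hfree := free_of_socle s hs hsm n (S ⧸ maximalIdeal S) (h.mono (Nat.le_succ n))
      apply h0
      rw [eq_bot_iff]
      have hann : maximalIdeal S ≤ Module.annihilator S (S ⧸ maximalIdeal S) := by
        rw [Ideal.annihilator_quotient]
      rwa [Module.annihilator_eq_bot.2 inferInstance] at hann
    · have hfin : (associatedPrimes S S).Finite := associatedPrimes.finite S S
      obtain ⟨x, hxm, hx2, hxP⟩ := exists_avoid (associatedPrimes S S) hfin (fun P hP => hP.isPrime)
        (fun P hP hle => hsoc (by
          rw [AssociatedPrimes.mem_iff, isAssociatedPrime_iff] at hP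
          obtain ⟨prime, s, rfl⟩ := hP
          refine ⟨s, fun h => prime.ne_top (by simp [h]), fun y hy => ?_⟩
          have := hle hy
          rw [Submodule.mem_colon_singleton] at this
          rw [mul_comm]; simpa using this)) h0
      have hreg : IsSMulRegular S x := by
        by_contra hcon
        have : x ∈ ⋃ p ∈ associatedPrimes S S, (p : Set S) := by
          rw [biUnion_associatedPrimes_eq_compl_regular]; exact hcon
        simp only [Set.mem_iUnion] at this
        obtain ⟨P, hP, hx⟩ := this
        exact hxP P hP hx
      have hne : Ideal.span {x} ≠ ⊤ := fun h => (IsLocalRing.maximalIdeal.isMaximal S).ne_top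
        (top_le_iff.1 (h ▸ (Ideal.span_singleton_le_iff_mem _).2 hxm))
      have : Nontrivial (S ⧸ Ideal.span {x}) := Ideal.Quotient.nontrivial_iff.2 hne
      have : IsLocalRing (S ⧸ Ideal.span {x}) :=
        IsLocalRing.of_surjective' (Ideal.Quotient.mk _) Ideal.Quotient.mk_surjective
      have hpd := pdl_residue_quot x hreg hxm hx2 n (h.mono (by omega))
      obtain ⟨l', hl', hm'⟩ := ih (S ⧸ Ideal.span {x}) _ (by
        have hnz : x ∈ nonZeroDivisors S := by
          rw [mem_nonZeroDivisors_iff_right]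
          intro z hz
          exact (isSMulRegular_iff_right_eq_zero_of_smul.1 hreg) z (by rw [smul_eq_mul, mul_comm]; exact hz)
        have h1 := (ringKrullDim_quotient_succ_le_of_nonZeroDivisor hnz).trans_lt hd
        by_contra hcon
        have h2 : ((d + 1 : ℕ) : WithBot ℕ∞) ≤ ringKrullDim (S ⧸ Ideal.span {x}) + 1 := by
          push_cast
          gcongr
          exact not_lt.1 hcon
        exact absurd h1 (not_lt.2 h2)) hpd
      exact lift_list x hreg hxm l' hl' hm'

end SerreSec

open scoped TensorProduct

section FinalSec
open IsLocalRing

theorem regRev_nodup {S : Type} [CommRing S] : ∀ (l : List S), RegRev S l → Ideal.ofList l ≠ ⊤ → l.Nodup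
  | [], _, _ => List.nodup_nil
  | x :: l, h, hne => by
    have hle : Ideal.ofList l ≠ ⊤ := fun h' => hne (by rw [Ideal.ofList_cons, h', sup_top_eq])
    refine List.nodup_cons.2 ⟨fun hx => hle ?_, regRev_nodup l h.2 hle⟩
    rw [Ideal.eq_top_iff_one, ← Ideal.Quotient.eq_zero_iff_mem]
    refine (isSMulRegular_iff_right_eq_zero_of_smul.1 h.1) _ ?_
    change Ideal.Quotient.mk _ (x * 1) = 0
    rw [mul_one, Ideal.Quotient.eq_zero_iff_mem]
    exact Ideal.subset_span hx

theorem perfect_alg (R : Type) [CommRing R] (k : Subring R) (hk : IsField k) :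
    ∃ (F : Type) (_ : Field F) (_ : PerfectField F), Nonempty (F →+* R) := by
  let _ : Field k := hk.toField
  obtain ⟨q, hq⟩ := CharP.exists k
  rcases CharP.char_is_prime_or_zero k q with hp | h0
  · have : Fact q.Prime := ⟨hp⟩
    exact ⟨ZMod q, inferInstance, inferInstance, ⟨k.subtype.comp (ZMod.castHom (dvd_refl q) k)⟩⟩
  · subst h0
    have : CharZero k := CharP.charP_to_charZero k
    exact ⟨ℚ, inferInstance, inferInstance, ⟨k.subtype.comp (algebraMap ℚ k)⟩⟩

theorem supp_dim_lt {R : Type} [CommRing R] [IsLocalRing R] (M : Type) [AddCommGroup M] [Module R M]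
    (p : Ideal R) [p.IsPrime] (hp : p ≠ maximalIdeal R) (c : ℕ)
    (h : Order.krullDim (Module.support R M) ≤ (c : WithBot ℕ∞)) :
    Order.krullDim (Module.support (Localization.AtPrime p) (LocalizedModule p.primeCompl M)) <
      (c : WithBot ℕ∞) := by
  by_contra hcon
  rw [not_lt, Order.le_krullDim_iff] at hcon
  obtain ⟨s, hs⟩ := hcon
  let F : Module.support (Localization.AtPrime p) (LocalizedModule p.primeCompl M) → Module.support R M :=
    fun q => ⟨PrimeSpectrum.comap (algebraMap R (Localization.AtPrime p)) q.1, by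
      obtain ⟨z, hz⟩ := Module.mem_support_iff_exists_annihilator.1 q.2
      induction z using LocalizedModule.induction_on with
      | h m w =>
      refine Module.mem_support_iff_exists_annihilator.2 ⟨m, fun r hr => hz ?_⟩
      rw [Submodule.mem_annihilator_span_singleton] at hr ⊢
      rw [algebraMap_smul, LocalizedModule.smul'_mk, hr, LocalizedModule.zero_mk]⟩
  have hF : StrictMono F := by
    intro a b hab
    have h1 : a.1.asIdeal < b.1.asIdeal := hab
    exact (IsLocalization.orderEmbedding p.primeCompl (Localization.AtPrime p)).lt_iff_lt.2 h1
  have hle : ∀ q, (F q).1.asIdeal ≤ p := by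
    intro q
    have h1 : q.1.asIdeal ≤ maximalIdeal _ := IsLocalRing.le_maximalIdeal q.1.2.ne_top
    refine (Ideal.comap_mono h1).trans ?_
    exact (Localization.AtPrime.under_maximalIdeal (I := p)).le
  have hpm : p < maximalIdeal R := lt_of_le_of_ne (IsLocalRing.le_maximalIdeal Ideal.IsPrime.ne_top') hp
  let m : Module.support R M := ⟨closedPoint R, Module.mem_support_mono
    (show (F s.last).1 ≤ closedPoint R from (hle _).trans hpm.le) (F s.last).2⟩
  have hlt : (s.map F hF).last < m := by
    change (F s.last).1.asIdeal < maximalIdeal R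
    exact lt_of_le_of_lt (hle _) hpm
  have h3 := Order.LTSeries.length_le_krullDim ((s.map F hF).snoc m hlt)
  have h4 := h3.trans h
  rw [RelSeries.snoc_length, LTSeries.map_length, hs] at h4
  norm_cast at h4
  omega

theorem localized_residue {R : Type} [CommRing R] (p : Ideal R) [p.IsPrime] :
    Nonempty (LocalizedModule p.primeCompl (R ⧸ p) ≃ₗ[Localization.AtPrime p]
      (Localization.AtPrime p ⧸ maximalIdeal (Localization.AtPrime p))) := by
  let u : LocalizedModule p.primeCompl (R ⧸ p) := LocalizedModule.mk 1 1
  let g : Localization.AtPrime p →ₗ[Localization.AtPrime p] LocalizedModule p.primeCompl (R ⧸ p) :=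
    LinearMap.toSpanSingleton _ _ u
  have hg : Function.Surjective g := by
    intro z
    induction z using LocalizedModule.induction_on with
    | h m w =>
    obtain ⟨r, rfl⟩ := Ideal.Quotient.mk_surjective m
    refine ⟨Localization.mk r w, ?_⟩
    change Localization.mk r w • LocalizedModule.mk (1 : R ⧸ p) (1 : p.primeCompl) = _
    rw [LocalizedModule.mk_smul_mk, mul_one]
    congr 1
    change Ideal.Quotient.mk p (r * 1) = _
    rw [mul_one]
  have hk : LinearMap.ker g = maximalIdeal (Localization.AtPrime p) := by
    symm
    refine (IsLocalRing.maximalIdeal.isMaximal _).eq_of_le ?_ ?_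
    · rw [Ne, LinearMap.ker_eq_top]
      intro h0
      have h1 : g 1 = 0 := by rw [h0]; rfl
      have h2 : u = 0 := by rw [← h1]; exact (one_smul _ u).symm
      have h3 : LocalizedModule.mk (1 : R ⧸ p) (1 : p.primeCompl) = LocalizedModule.mk 0 1 := by
        rw [LocalizedModule.zero_mk]; exact h2
      obtain ⟨w, hw⟩ := LocalizedModule.mk_eq.1 h3
      have h4 : Ideal.Quotient.mk p ((w : R) * (1 * 1)) = 0 := by
        refine Eq.trans hw ?_
        simp
      rw [Ideal.Quotient.eq_zero_iff_mem] at h4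
      exact w.2 (by simpa using h4)
    · rw [← Localization.AtPrime.map_eq_maximalIdeal, Ideal.map_le_iff_le_comap]
      intro r hr
      change algebraMap R (Localization.AtPrime p) r • u = 0
      rw [algebraMap_smul]
      have : r • u = LocalizedModule.mk (r • (1 : R ⧸ p)) 1 := LocalizedModule.smul'_mk _ _ _
      rw [this]
      have h5 : r • (1 : R ⧸ p) = 0 := by
        change Ideal.Quotient.mk p (r * 1) = 0
        rw [mul_one, Ideal.Quotient.eq_zero_iff_mem]; exact hr
      rw [h5, LocalizedModule.zero_mk]
  exact ⟨(g.quotKerEquivOfSurjective hg).symm ≪≫ₗ Submodule.quotEquivOfEq _ _ hk⟩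

theorem exists_list_loc {R : Type} [CommRing R] [IsLocalRing R] [IsNoetherianRing R] (s : Finset R)
    (hs : Ideal.span (s : Set R) = maximalIdeal R) (hc : (s.card : WithBot ℕ∞) = ringKrullDim R)
    (p : Ideal R) [p.IsPrime] : ∃ l : List (Localization.AtPrime p),
      RegRev (Localization.AtPrime p) l ∧ Ideal.ofList l = maximalIdeal (Localization.AtPrime p) := by
  obtain ⟨-, l, hl, hm⟩ := regseq_of_regular s.card R (fun i => (s.equivFin.symm i : R)) (by
    rw [← hs]
    congr 1
    ext y
    constructor
    · rintro ⟨i, rfl⟩; exact (s.equivFin.symm i).2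
    · intro hy; exact ⟨s.equivFin ⟨y, hy⟩, by simp⟩) hc.le
  have h1 := pdl_all _ (pdl_quot_max l hl hm) p
  have h2 := pdl_loc (R ⧸ p) p.primeCompl _ h1
  obtain ⟨e⟩ := localized_residue p
  have h3 := PDL.equiv e h2
  have hN : IsNoetherianRing (Localization.AtPrime p) :=
    IsLocalization.isNoetherianRing p.primeCompl _ inferInstance
  have hd : ringKrullDim (Localization.AtPrime p) < ((s.card + 1 : ℕ) : WithBot ℕ∞) := by
    rw [IsLocalization.AtPrime.ringKrullDim_eq_height p (Localization.AtPrime p)]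
    refine lt_of_le_of_lt Ideal.height_le_ringKrullDim_of_isPrime ?_
    rw [← hc]
    exact_mod_cast Nat.lt_succ_self _
  obtain ⟨l', hl', hm'⟩ := serre_list _ (Localization.AtPrime p) _ hd h3
  exact ⟨l'.reverse, (regRev_iff _).2 (by rwa [List.reverse_reverse]), by rwa [ofList_reverse]⟩

end FinalSec


end HelperSec

/-- Regular local `R` containing a field, `I` an ideal, with
`inj.dim H_I^i(R) = dim H_I^i(R) = c`.  If `μ^c(p, H_I^i(R)) ≠ 0` then `p` is the
maximal ideal. -/
theorem stmt2 (R : Type) [CommRing R] [IsLocalRing R]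
    (hreg : IsRegularLocal R) (hfield : ContainsField R)
    (I : Ideal R) (i : ℕ) (c : ℕ)
    (h1 : injDim R (LocalCohomologyMod R I i) = (c : ℕ∞))
    (h2 : moduleSuppDim R (LocalCohomologyMod R I i) = ((c : ℕ∞) : WithBot ℕ∞))
    (p : Ideal R) [p.IsPrime]
    (hμ : BassNumberNonzero R p (LocalCohomologyMod R I i) c) :
    p = IsLocalRing.maximalIdeal R := by
  by_contra hp
  obtain ⟨hN, s, hs, hc⟩ := hreg
  obtain ⟨k, hk⟩ := hfield
  obtain ⟨l, hl, hm⟩ := exists_list_loc s hs hc p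
  obtain ⟨F, _, _, ⟨φ⟩⟩ := perfect_alg R k hk
  let _ : Algebra F (Localization.AtPrime p) :=
    ((algebraMap R (Localization.AtPrime p)).comp φ).toAlgebra
  have hNS : IsNoetherianRing (Localization.AtPrime p) :=
    IsLocalization.isNoetherianRing p.primeCompl _ inferInstance
  have hflat : Module.Flat R (Localization.AtPrime p) :=
    IsLocalization.flat _ p.primeCompl
  have hnd : l.Nodup := regRev_nodup l hl (by rw [hm]; exact Ideal.IsPrime.ne_top')
  have hPP : PPcond (Localization.AtPrime p) l
      (LocalizedModule p.primeCompl (LocalCohomologyMod R I i)) := by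
    refine ppcond_of_good l hnd _ fun x hx n => ?_
    obtain ⟨D, hD⟩ := good_of_regular F l hl hm x hx n
    refine ⟨D, hD, HasT.extend p.primeCompl D _ ?_⟩
    obtain ⟨t⟩ := hasT_lc (D.restr R) I i
    exact ⟨t.loc p.primeCompl⟩
  have hdim := supp_dim_lt (LocalCohomologyMod R I i) p hp c h2.le
  have hv := ext_vanish l hl _ hPP c hdim
  rw [hm] at hv
  refine not_subsingleton_iff_nontrivial.2 hμ ?_
  exact (brEquiv (projectiveResolution (ModuleCat.of (Localization.AtPrime p)
      (IsLocalRing.ResidueField (Localization.AtPrime p)))) (ModuleCat.of (Localization.AtPrime p)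
      (LocalizedModule p.primeCompl (LocalCohomologyMod R I i))) c).toEquiv.subsingleton_congr.2 hv
end

section
/- Let (R, m) be a commutative Noetherian local ring and let R̂ denote the m-adic completion of R. Then for every R-module M (not necessarily finitely generated), dim_R(M) = dim_{R̂}(M ⊗_R R̂). -/
open CategoryTheory Opposite

noncomputable section

open AdicCompletion in
theorem evA {R : Type} [CommRing R] (I : Ideal R) (x : AdicCompletion I R) {n m : ℕ} (h : n ≤ m)
    (r : R) (hr : evalₐ I m x = Ideal.Quotient.mk _ r) : evalₐ I n x = Ideal.Quotient.mk _ r := by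
  have h1 := congrArg (Ideal.Quotient.factor (Ideal.pow_le_pow_right h)) hr
  rw [Ideal.Quotient.factor_mk] at h1
  rw [← h1]
  induction x using AdicCompletion.induction_on with
  | h f =>
    rw [evalₐ_mk, evalₐ_mk, Ideal.Quotient.factor_mk]
    exact (AdicCompletion.Ideal.mk_eq_mk I h f).symm

open AdicCompletion in
theorem evB {R : Type} [CommRing R] (I : Ideal R) (x : AdicCompletion I R) {n m : ℕ}
    (hx : evalₐ I n x = 0) (c : R) (hc : c ∈ I ^ m) : evalₐ I (n + m) (c • x) = 0 := by
  obtain ⟨r, hr⟩ := Ideal.Quotient.mk_surjective (evalₐ I (n + m) x)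
  have h1 := evA I x (Nat.le_add_right n m) r hr.symm
  rw [hx, eq_comm, Ideal.Quotient.eq_zero_iff_mem] at h1
  rw [map_smul, ← hr, ← Ideal.Quotient.mk_eq_mk, ← Submodule.Quotient.mk_smul,
    Ideal.Quotient.mk_eq_mk, Ideal.Quotient.eq_zero_iff_mem, smul_eq_mul, mul_comm, pow_add]
  exact Ideal.mul_mem_mul h1 hc

open AdicCompletion in
/-- Filtration of leading forms. -/
def leadFil {R : Type} [CommRing R] (I : Ideal R) (J : Ideal (AdicCompletion I R)) :
    I.Filtration R where
  N n :=
    { carrier := {r | r ∈ I ^ n ∧ ∃ y ∈ J, evalₐ I (n + 1) y = Ideal.Quotient.mk _ r}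
      add_mem' := by
        rintro a b ⟨ha, y, hy, hya⟩ ⟨hb, z, hz, hzb⟩
        exact ⟨add_mem ha hb, y + z, add_mem hy hz, by rw [map_add, map_add, hya, hzb]⟩
      zero_mem' := ⟨zero_mem _, 0, zero_mem _, by simp⟩
      smul_mem' := by
        rintro c a ⟨ha, y, hy, hya⟩
        refine ⟨Submodule.smul_mem _ _ ha, c • y, Submodule.smul_of_tower_mem _ _ hy, ?_⟩
        rw [map_smul, hya]; rfl }
  mono n := by
    rintro r ⟨hr, y, hy, hyr⟩
    refine ⟨Ideal.pow_le_pow_right (Nat.le_succ n) hr, 0, zero_mem _, ?_⟩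
    rw [_root_.map_zero, eq_comm, Ideal.Quotient.eq_zero_iff_mem]
    exact hr
  smul_le n := by
    rw [Submodule.smul_le]
    rintro c hc r ⟨hr, y, hy, hyr⟩
    refine ⟨?_, c • y, Submodule.smul_of_tower_mem _ _ hy, ?_⟩
    · rw [pow_succ, mul_comm, smul_eq_mul]; exact Ideal.mul_mem_mul hc hr
    · have : evalₐ I (n + 1) (y - algebraMap R _ r) = 0 := by
        rw [map_sub, hyr, AlgHom.commutes]; exact sub_self _
      have h2 := evB I _ (m := 1) this c (by simpa using hc)
      rw [smul_sub, map_sub, sub_eq_zero] at h2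
      rw [h2, map_smul, AlgHom.commutes]; rfl

open AdicCompletion in
theorem completion_noeth {R : Type} [CommRing R] [IsNoetherianRing R] (I : Ideal R) :
    IsNoetherianRing (AdicCompletion I R) := by
  refine ⟨fun J => ?_⟩
  have hle : leadFil I J ≤ I.stableFiltration ⊤ := by
    intro n r hr
    change r ∈ (I ^ n • ⊤ : Ideal R)
    rw [smul_eq_mul, Ideal.mul_top]
    exact hr.1
  obtain ⟨n₀, hn⟩ := ((I.stableFiltration_stable ⊤).of_le hle).exists_pow_smul_eq
  obtain ⟨t, ht⟩ := IsNoetherian.noetherian ((leadFil I J).N n₀)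
  have hy : ∀ r : t, ∃ y ∈ J, evalₐ I (n₀ + 1) y = Ideal.Quotient.mk _ r.1 := fun r =>
    (show r.1 ∈ (leadFil I J).N n₀ from ht ▸ Submodule.subset_span r.2).2
  have htI : ∀ r : t, r.1 ∈ I ^ n₀ := fun r =>
    (show r.1 ∈ (leadFil I J).N n₀ from ht ▸ Submodule.subset_span r.2).1
  choose y hyJ hye using hy
  have step : ∀ k, ∀ w ∈ J, evalₐ I (n₀ + k) w = 0 → ∃ c : t → R, (∀ i, c i ∈ I ^ k) ∧
      evalₐ I (n₀ + (k + 1)) (w - ∑ i, c i • y i) = 0 := by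
    intro k w hw hwe
    obtain ⟨r, hr⟩ := Ideal.Quotient.mk_surjective (evalₐ I (n₀ + k + 1) w)
    have h1 := evA I w (Nat.le_succ _) r hr.symm
    rw [hwe, eq_comm, Ideal.Quotient.eq_zero_iff_mem] at h1
    have h2 : r ∈ (leadFil I J).N (n₀ + k) := ⟨h1, w, hw, hr.symm⟩
    rw [hn, ← ht] at h2
    have h2' : r ∈ I ^ k • Submodule.span R (Set.range (fun i : t => i.1)) := by
      simpa using h2
    rw [Submodule.mem_ideal_smul_span_iff_exists_sum] at h2'
    obtain ⟨a, ha, har⟩ := h2'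
    refine ⟨a, ha, ?_⟩
    have h3 : ∀ i, evalₐ I (n₀ + 1 + k) (a i • (y i - algebraMap R _ i.1)) = 0 := fun i =>
      evB I _ (by rw [map_sub, hye, AlgHom.commutes]; exact sub_self _) _ (ha i)
    have h4 : w - ∑ i, a i • y i =
        (w - algebraMap R _ r) - ∑ i, a i • (y i - algebraMap R _ i.1) := by
      rw [← har, Finsupp.sum_fintype _ _ (by simp)]
      simp only [map_sum, smul_eq_mul, map_mul, Algebra.smul_def, mul_sub]
      rw [Finset.sum_sub_distrib]
      ring
    rw [h4, map_sub, map_sum, show n₀ + (k + 1) = n₀ + 1 + k by ring, Finset.sum_eq_zero (fun i _ => h3 i),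
      sub_zero, show n₀ + 1 + k = n₀ + k + 1 by ring, map_sub, ← hr, AlgHom.commutes]
    exact sub_self _
  have key : J ⊓ RingHom.ker (evalₐ I n₀) = Ideal.span (Set.range fun i => y i) := by
    apply le_antisymm
    · rintro w ⟨hw, hwe⟩
      replace hwe : evalₐ I n₀ w = 0 := hwe
      choose! c hcI hce using step
      let W : ℕ → AdicCompletion I R := fun k => Nat.rec w (fun k v => v - ∑ i, c k v i • y i) k
      have hW : ∀ k, W k ∈ J ∧ evalₐ I (n₀ + k) (W k) = 0 := by
        intro k
        induction k with
        | zero => exact ⟨hw, hwe⟩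
        | succ k ih =>
          exact ⟨sub_mem ih.1 (sum_mem fun i _ => Submodule.smul_of_tower_mem _ _ (hyJ i)),
            hce k _ ih.1 ih.2⟩
      let s : t → ℕ → R := fun i n => ∑ k ∈ Finset.range n, c k (W k) i
      have hWs : ∀ k, w = W k + ∑ i, s i k • y i := by
        intro k
        induction k with
        | zero => simp [s, W]
        | succ k ih =>
          conv_lhs => rw [ih]
          simp only [s, Finset.sum_range_succ, add_smul, Finset.sum_add_distrib]
          simp only [W]
          ring
      let S : t → AdicCompletion I R := fun i => AdicCompletion.mk I R
        (AdicCauchySequence.mk I R (s i) (by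
          intro n
          rw [SModEq.comm, SModEq.sub_mem, smul_eq_mul, Ideal.mul_top]
          simp only [s, Finset.sum_range_succ, add_sub_cancel_left]
          exact hcI n _ (hW n).1 (hW n).2 i))
      have hS : ∀ i n, evalₐ I n (S i) = Ideal.Quotient.mk _ (s i n) := fun i n => evalₐ_mk _ _ _
      have : w = ∑ i, S i * y i := by
        apply ext_evalₐ
        intro n
        obtain ⟨r, hr⟩ := Ideal.Quotient.mk_surjective (evalₐ I (n₀ + n) (W n))
        have h0 : evalₐ I n (W n) = 0 := by
          simpa using evA I (W n) (Nat.le_add_left n n₀) 0 (by simpa using (hW n).2)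
        conv_lhs => rw [hWs n]
        rw [map_add, h0, zero_add, map_sum, map_sum]
        refine Finset.sum_congr rfl fun i _ => ?_
        rw [map_mul, hS, map_smul, Algebra.smul_def]
        rfl
      rw [this]
      exact sum_mem fun i _ => Ideal.mul_mem_left _ _ (Ideal.subset_span ⟨i, rfl⟩)
    · rw [Ideal.span_le]
      rintro _ ⟨i, rfl⟩
      refine ⟨hyJ i, ?_⟩
      show evalₐ I n₀ (y i) = 0
      rw [evA I (y i) (Nat.le_succ _) _ (hye i), Ideal.Quotient.eq_zero_iff_mem]
      exact htI i
  apply Submodule.fg_of_fg_map_of_fg_inf_ker (RingHom.ker (evalₐ I n₀)).mkQ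
  · have e := (Ideal.quotientKerAlgEquivOfSurjective (surjective_evalₐ I n₀)).toLinearEquiv
    have h1 : IsNoetherian R (AdicCompletion I R ⧸ RingHom.ker (evalₐ I n₀)) :=
      isNoetherian_of_linearEquiv e.symm
    have h2 : IsNoetherian (AdicCompletion I R) (AdicCompletion I R ⧸ RingHom.ker (evalₐ I n₀)) :=
      isNoetherian_of_tower R h1
    exact h2.noetherian _
  · rw [Submodule.ker_mkQ, key]
    exact ⟨(Set.finite_range y).toFinset, by simp [Ideal.span]⟩

open TensorProduct in
theorem mem_supp_bc {R S : Type} [CommRing R] [CommRing S] [Algebra R S] [Module.Flat R S]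
    (M : Type) [AddCommGroup M] [Module R M] (Q : PrimeSpectrum S) :
    Q ∈ Module.support S (S ⊗[R] M) ↔
      PrimeSpectrum.comap (algebraMap R S) Q ∈ Module.support R M := by
  constructor
  · intro h
    by_contra hn
    rw [Module.notMem_support_iff'] at hn
    refine (Module.notMem_support_iff'.mpr ?_) h
    intro z
    induction z with
    | zero => exact ⟨1, fun h => Q.2.ne_top ((Ideal.eq_top_iff_one _).2 h), by simp⟩
    | tmul s m =>
      obtain ⟨r, hr, hrm⟩ := hn m
      refine ⟨algebraMap R S r, hr, ?_⟩
      rw [algebraMap_smul, ← TensorProduct.tmul_smul, hrm, TensorProduct.tmul_zero]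
    | add x y hx hy =>
      obtain ⟨a, ha, hax⟩ := hx
      obtain ⟨b, hb, hby⟩ := hy
      refine ⟨a * b, fun h => (Q.2.mem_or_mem h).elim ha hb, ?_⟩
      rw [smul_add, mul_comm, mul_smul, hax, mul_comm, mul_smul, hby, smul_zero, smul_zero,
        add_zero]
  · intro h
    obtain ⟨m, hm⟩ := Module.mem_support_iff_exists_annihilator.mp h
    let I : Ideal R := LinearMap.ker (LinearMap.toSpanSingleton R M m)
    have hI : I.map (algebraMap R S) ≤ Q.asIdeal := by
      rw [Ideal.map_le_iff_le_comap]
      intro r hr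
      exact hm (by rw [Submodule.mem_annihilator_span_singleton]; simpa [I] using hr)
    let f : (R ⧸ I) →ₗ[R] M := I.liftQ (LinearMap.toSpanSingleton R M m) le_rfl
    have hf : Function.Injective f := by
      rw [← LinearMap.ker_eq_bot]
      exact Submodule.ker_liftQ_eq_bot' _ _ rfl
    have hF : Function.Injective (f.baseChange S) :=
      Module.Flat.lTensor_preserves_injective_linearMap f hf
    apply Module.support_subset_of_injective _ hF
    rw [← (Algebra.TensorProduct.quotIdealMapEquivTensorQuot S I).toLinearEquiv.support_eq,
      Module.support_of_algebra, PrimeSpectrum.mem_zeroLocus]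
    simpa using hI

open IsLocalRing in
theorem dim_fiber {A B : Type} [CommRing A] [CommRing B] [Algebra A B] [IsLocalRing A]
    [IsLocalRing B] [IsNoetherianRing A] [IsNoetherianRing B] 
    (h : (maximalIdeal A).map (algebraMap A B) = maximalIdeal B) :
    ringKrullDim B ≤ ringKrullDim A := by
  have : (maximalIdeal B).LiesOver (maximalIdeal A) := by
    constructor
    refine (maximalIdeal.isMaximal A).eq_of_le (Ideal.IsPrime.under A _).ne_top ?_
    rw [Ideal.under_def, ← Ideal.map_le_iff_le_comap, h]
  have h1 := Ideal.height_le_height_add_of_liesOver (maximalIdeal A) (maximalIdeal B)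
  have h2 : ((maximalIdeal B).map (Ideal.Quotient.mk
      ((maximalIdeal A).map (algebraMap A B)))).height = 0 := by
    have : (maximalIdeal B).map (Ideal.Quotient.mk
      ((maximalIdeal A).map (algebraMap A B))) = ⊥ := by
      rw [← h]; exact Ideal.map_quotient_self _
    rw [this]
    have : ((maximalIdeal A).map (algebraMap A B)).IsPrime := by rw [h]; infer_instance
    exact Ideal.height_bot
  rw [h2, add_zero] at h1
  rw [← maximalIdeal_height_eq_ringKrullDim, ← maximalIdeal_height_eq_ringKrullDim]
  exact_mod_cast h1

open IsLocalRing in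
theorem dim_quot {A B : Type} [CommRing A] [CommRing B] [Algebra A B] [IsLocalRing A]
    [IsLocalRing B] [IsNoetherianRing A] [IsNoetherianRing B] 
    (h : (maximalIdeal A).map (algebraMap A B) = maximalIdeal B) (p : Ideal A) (hp : p ≠ ⊤) :
    ringKrullDim (B ⧸ p.map (algebraMap A B)) ≤ ringKrullDim (A ⧸ p) := by
  have hp' : p.map (algebraMap A B) ≠ ⊤ := fun ht => by
    have := (Ideal.map_mono (f := algebraMap A B) (le_maximalIdeal hp)).trans h.le
    rw [ht] at this
    exact (maximalIdeal.isMaximal B).ne_top (top_le_iff.1 this)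
  have := Ideal.Quotient.nontrivial_iff.2 hp
  have := Ideal.Quotient.nontrivial_iff.2 hp'
  have : IsLocalRing (A ⧸ p) := .of_surjective' _ Ideal.Quotient.mk_surjective
  have : IsLocalRing (B ⧸ p.map (algebraMap A B)) := .of_surjective' _ Ideal.Quotient.mk_surjective
  apply dim_fiber
  have e : ∀ {C : Type} [CommRing C] [IsLocalRing C] (I : Ideal C) [IsLocalRing (C ⧸ I)],
      maximalIdeal (C ⧸ I) = (maximalIdeal C).map (Ideal.Quotient.mk I) := by
    intro C _ _ I _
    rw [← IsLocalRing.map_maximalIdeal_of_surjective _ Ideal.Quotient.mk_surjective]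
  rw [e, e, ← h, Ideal.map_map, Ideal.map_map]
  rfl

open IsLocalRing TensorProduct in
theorem main_dim {A B : Type} [CommRing A] [CommRing B] [Algebra A B] [IsLocalRing A]
    [IsLocalRing B] [IsNoetherianRing A] [IsNoetherianRing B] [Module.Flat A B]
    (h : (maximalIdeal A).map (algebraMap A B) = maximalIdeal B)
    (M : Type) [AddCommGroup M] [Module A M] :
    Order.krullDim (Module.support A M) = Order.krullDim (Module.support B (B ⊗[A] M)) := by
  have hlo : (maximalIdeal B).LiesOver (maximalIdeal A) := by
    constructor
    refine (maximalIdeal.isMaximal A).eq_of_le (Ideal.IsPrime.under A _).ne_top ?_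
    rw [Ideal.under_def, ← Ideal.map_le_iff_le_comap, h]
  apply le_antisymm
  · refine iSup_le fun l => ?_
    let l' : LTSeries (PrimeSpectrum A) := l.map Subtype.val (fun _ _ h => h)
    obtain ⟨P, -, hP, hPl⟩ := Ideal.exists_ideal_le_liesOver_of_le (p := l'.last.asIdeal)
      (maximalIdeal B) (le_maximalIdeal l'.last.2.ne_top)
    obtain ⟨L, hlen, hlast, hL⟩ := Ideal.exists_ltSeries_of_hasGoingDown l' P
    have hhead : PrimeSpectrum.comap (algebraMap A B) L.head = l'.head := by
      rw [← L.toList_getElem_zero_eq_head, ← l'.toList_getElem_zero_eq_head,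
          List.getElem_map_rev (PrimeSpectrum.comap (algebraMap A B)),
          List.getElem_of_eq hL _]
    have hmem : ∀ i, L i ∈ Module.support B (B ⊗[A] M) := fun i => by
      refine Module.mem_support_mono (L.head_le i) ?_
      rw [mem_supp_bc, hhead]
      exact l.head.2
    have : (l.length : WithBot ℕ∞) = L.length := by rw [hlen]; rfl
    rw [this]
    exact Order.LTSeries.length_le_krullDim (⟨L.length, fun i => ⟨L i, hmem i⟩, fun i => L.step i⟩ :
      LTSeries (Module.support B (B ⊗[A] M)))
  · refine iSup_le fun l => ?_
    have h0 := (mem_supp_bc M _).1 l.head.2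
    set p := PrimeSpectrum.comap (algebraMap A B) l.head.1 with hp
    have h1 : ringKrullDim (A ⧸ p.asIdeal) ≤ Order.krullDim (Module.support A M) := by
      rw [← Module.supportDim_quotient_eq_ringKrullDim]
      refine Order.krullDim_le_of_strictMono (fun x => ⟨x.1, ?_⟩) (fun _ _ h => h)
      have := Module.annihilator_le_of_mem_support x.2
      rw [Ideal.annihilator_quotient] at this
      exact Module.mem_support_mono this h0
    refine le_trans ?_ ((dim_quot h p.asIdeal p.2.ne_top).trans h1)
    rw [← Module.supportDim_quotient_eq_ringKrullDim]
    refine Order.LTSeries.length_le_krullDim (⟨l.length, fun i => ⟨(l i).1, ?_⟩, fun i => l.step i⟩ :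
      LTSeries (Module.support B (B ⧸ p.asIdeal.map (algebraMap A B))))
    rw [Module.mem_support_iff_of_finite, Ideal.annihilator_quotient]
    exact (Ideal.map_comap_le (K := l.head.1.asIdeal)).trans (l.head_le i)

/-- For a commutative Noetherian local ring `(R, m)` with `m`-adic
completion `R̂`, and any `R`-module `M`, we have `dim_R M = dim_{R̂} (M ⊗_R R̂)`. -/
theorem stmt3 (R : Type) [CommRing R] [IsLocalRing R] [IsNoetherianRing R]
    (M : Type) [AddCommGroup M] [Module R M] :
    moduleSuppDim R M =
      moduleSuppDim (AdicCompletion (IsLocalRing.maximalIdeal R) R)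
        (TensorProduct R (AdicCompletion (IsLocalRing.maximalIdeal R) R) M) := by
  have := completion_noeth (IsLocalRing.maximalIdeal R)
  exact main_dim AdicCompletion.maximalIdeal_eq_map.symm M

end
end
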